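/- Let p, q ≥ 2 be integers with 4 ≤ p + q ≤ 7, and λ_s = √((q−1)/(p−1)). There exist an integer K and a strictly decreasing sequence (a_k)_{k ≥ K} of positive reals with a_k → 0 as k → ∞, such that for each k ≥ K there is a function u_k : [0, ∞) → (0, ∞), continuous on [0, ∞) and C² on (0, ∞), with u_k(0) = a_k, u_k′ extending continuously to 0 with u_k′(0) = 0, solving the self-shrinker ODE u″/(1+u′²) + ((p−1)/r − r/2)·u′ + u/2 − (q−1)/u = 0 on (0, ∞), such that u_k(r)/r converges to some limit tan(α_k) with α_k ∈ (0, π/2) as r → ∞, and the set {r > 0 : u_k(r) = λ_s·r} has exactly k elements. -/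

import Mathlib

open Real Filter

section Volterra

theorem volterra_kernel_integral (K ρ : ℝ) :
    ∫ x in (0:ℝ)..1, K * (|ρ| + ρ ^ 2 * x) * Real.exp (K * (|ρ * x| + (ρ * x) ^ 2 / 2))
      = Real.exp (K * (|ρ| + ρ ^ 2 / 2)) - 1 := by
  have h : ∀ x ∈ Set.uIcc (0:ℝ) 1, HasDerivAt
      (fun x : ℝ => Real.exp (K * (|ρ| * x + ρ ^ 2 * x ^ 2 / 2)))
      (K * (|ρ| + ρ ^ 2 * x) * Real.exp (K * (|ρ| * x + ρ ^ 2 * x ^ 2 / 2))) x := by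
    intro x _
    have h1 : HasDerivAt (fun x : ℝ => K * (|ρ| * x + ρ ^ 2 * x ^ 2 / 2))
        (K * (|ρ| * 1 + ρ ^ 2 * ((2:ℕ) * x ^ (2 - 1) * 1) / 2)) x :=
      ((((hasDerivAt_id x).const_mul |ρ|).add
        ((((hasDerivAt_id x).pow 2).const_mul (ρ ^ 2)).div_const 2)).const_mul K)
    have h2 := h1.exp
    convert h2 using 1
    push_cast
    ring
  have h3 := intervalIntegral.integral_eq_sub_of_hasDerivAt h
    (Continuous.intervalIntegrable (by fun_prop) _ _)
  have h4 : ∫ x in (0:ℝ)..1, K * (|ρ| + ρ ^ 2 * x) * Real.exp (K * (|ρ * x| + (ρ * x) ^ 2 / 2))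
      = ∫ x in (0:ℝ)..1, K * (|ρ| + ρ ^ 2 * x) *
        Real.exp (K * (|ρ| * x + ρ ^ 2 * x ^ 2 / 2)) := by
    apply intervalIntegral.integral_congr
    intro x hx
    rw [Set.uIcc_of_le zero_le_one] at hx
    simp only
    rw [abs_mul, abs_of_nonneg hx.1, mul_pow]
  rw [h4, h3]
  simp

theorem volterra {E : Type*} [NormedAddCommGroup E] [NormedSpace ℝ E] [CompleteSpace E]
    (F : ℝ → ℝ → ℝ → E → E)
    (hF : Continuous fun p : ℝ × ℝ × ℝ × E => F p.1 p.2.1 p.2.2.1 p.2.2.2)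
    (e : ℝ → ℝ) (he : Continuous e) (L M : ℝ) (hL : 0 < L) (hM : 0 ≤ M)
    (h1 : ∀ a x t v v', x ∈ Set.Icc (0:ℝ) 1 →
      ‖F a x t v - F a x t v'‖ ≤ L * (1 + |t|) * ‖v - v'‖)
    (h2 : ∀ a x t v, x ∈ Set.Icc (0:ℝ) 1 → ‖F a x t v‖ ≤ M * (1 + |t|))
    (h3 : ∀ a b x t v, x ∈ Set.Icc (0:ℝ) 1 →
      ‖F a x t v - F b x t v‖ ≤ |e a - e b| * (M * (1 + |t|)))
    (f0 : E) :
    ∃ f : ℝ → ℝ → E, Continuous (Function.uncurry f) ∧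
      ∀ a ρ, f a ρ = f0 + ρ • ∫ x in (0:ℝ)..1, F a x (ρ * x) (f a (ρ * x)) := by
  set K : ℝ := 2 * L with hK
  have hKpos : 0 < K := by positivity
  set κ : ℝ → ℝ := fun ρ => K * (|ρ| + ρ ^ 2 / 2) with hκ
  have hκc : Continuous κ := by simp only [hκ]; fun_prop
  have hκ0 : ∀ ρ, 0 ≤ κ ρ := fun ρ => by simp only [hκ]; positivity
  -- weight estimate
  have hw : ∀ ρ, Real.exp (-κ ρ) * (|ρ| * (M * (1 + |ρ|))) ≤ 2 * M / K := by
    intro ρ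
    have hx : κ ρ + 1 ≤ Real.exp (κ ρ) := Real.add_one_le_exp _
    rw [Real.exp_neg, inv_mul_le_iff₀ (Real.exp_pos _)]
    have h5 : |ρ| * (M * (1 + |ρ|)) ≤ (2 * M / K) * κ ρ := by
      simp only [hκ]
      have : 2 * M / K * (K * (|ρ| + ρ ^ 2 / 2)) = M * (2 * |ρ| + |ρ| ^ 2) := by
        rw [sq_abs]; field_simp
      rw [this]
      nlinarith [abs_nonneg ρ, mul_nonneg hM (abs_nonneg ρ)]
    have h6 : 0 ≤ 2 * M / K := by positivity
    nlinarith
  -- the integral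
  set I : ℝ → (ℝ → E) → ℝ → E := fun a g ρ => ∫ x in (0:ℝ)..1, F a x (ρ * x) (g (ρ * x)) with hI
  have hIc : ∀ a (g : ℝ → E), Continuous g → Continuous (I a g) := by
    intro a g hg
    apply intervalIntegral.continuous_parametric_intervalIntegral_of_continuous'
    have : (Function.uncurry fun (ρ x : ℝ) => F a x (ρ * x) (g (ρ * x))) =
      (fun p : ℝ × ℝ × ℝ × E => F p.1 p.2.1 p.2.2.1 p.2.2.2) ∘
        (fun q : ℝ × ℝ => (a, q.2, q.1 * q.2, g (q.1 * q.2))) := rfl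
    rw [this]
    exact hF.comp (by fun_prop)
  have hintg : ∀ a (g : ℝ → E), Continuous g → ∀ ρ,
      IntervalIntegrable (fun x => F a x (ρ * x) (g (ρ * x))) MeasureTheory.volume 0 1 := by
    intro a g hg ρ
    apply Continuous.intervalIntegrable
    have : (fun x => F a x (ρ * x) (g (ρ * x))) =
      (fun p : ℝ × ℝ × ℝ × E => F p.1 p.2.1 p.2.2.1 p.2.2.2) ∘
        (fun x : ℝ => (a, x, ρ * x, g (ρ * x))) := rfl
    rw [this]
    exact hF.comp (by fun_prop)
  have htx : ∀ ρ x : ℝ, x ∈ Set.Icc (0:ℝ) 1 → |ρ * x| ≤ |ρ| := by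
    intro ρ x hx
    rw [abs_mul, abs_of_nonneg hx.1]
    exact mul_le_of_le_one_right (abs_nonneg _) hx.2
  have hIb : ∀ a (g : ℝ → E), ∀ ρ, ‖I a g ρ‖ ≤ M * (1 + |ρ|) := by
    intro a g ρ
    have := intervalIntegral.norm_integral_le_of_norm_le_const (a := (0:ℝ)) (b := 1)
      (C := M * (1 + |ρ|)) (f := fun x => F a x (ρ * x) (g (ρ * x))) (by
        intro x hx
        rw [Set.uIoc_of_le zero_le_one] at hx
        have hx' : x ∈ Set.Icc (0:ℝ) 1 := ⟨hx.1.le, hx.2⟩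
        refine (h2 _ _ _ _ hx').trans ?_
        have := htx ρ x hx'
        exact mul_le_mul_of_nonneg_left (by linarith) hM)
    simpa using this
  have hIab : ∀ a b (g : ℝ → E), Continuous g → ∀ ρ,
      ‖I a g ρ - I b g ρ‖ ≤ |e a - e b| * (M * (1 + |ρ|)) := by
    intro a b g hg ρ
    simp only [hI]
    rw [← intervalIntegral.integral_sub (hintg a g hg ρ) (hintg b g hg ρ)]
    have := intervalIntegral.norm_integral_le_of_norm_le_const (a := (0:ℝ)) (b := 1)
      (C := |e a - e b| * (M * (1 + |ρ|)))
      (f := fun x => F a x (ρ * x) (g (ρ * x)) - F b x (ρ * x) (g (ρ * x))) (by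
        intro x hx
        rw [Set.uIoc_of_le zero_le_one] at hx
        have hx' : x ∈ Set.Icc (0:ℝ) 1 := ⟨hx.1.le, hx.2⟩
        refine (h3 _ _ _ _ _ hx').trans ?_
        have := htx ρ x hx'
        exact mul_le_mul_of_nonneg_left (mul_le_mul_of_nonneg_left (by linarith) hM)
          (abs_nonneg _))
    simpa using this
  have hIL : ∀ a (g g' : ℝ → E), Continuous g → Continuous g' → ∀ D : ℝ, 0 ≤ D →
      (∀ t, ‖g t - g' t‖ ≤ Real.exp (κ t) * D) → ∀ ρ,
      |ρ| * ‖I a g ρ - I a g' ρ‖ ≤ Real.exp (κ ρ) * (D / 2) := by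
    intro a g g' hg hg' D hD hgg ρ
    simp only [hI]
    rw [← intervalIntegral.integral_sub (hintg a g hg ρ) (hintg a g' hg' ρ)]
    have hb := intervalIntegral.norm_integral_le_of_norm_le (a := (0:ℝ)) (b := 1)
      (μ := MeasureTheory.volume) zero_le_one
      (g := fun x => L * (1 + |ρ| * x) * (Real.exp (κ (ρ * x)) * D))
      (f := fun x => F a x (ρ * x) (g (ρ * x)) - F a x (ρ * x) (g' (ρ * x)))
      (Filter.Eventually.of_forall (by
        intro x hx
        have hx' : x ∈ Set.Icc (0:ℝ) 1 := ⟨hx.1.le, hx.2⟩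
        refine (h1 _ _ _ _ _ hx').trans ?_
        rw [abs_mul, abs_of_nonneg hx'.1]
        have : 0 ≤ L * (1 + |ρ| * x) := by have := hx'.1; positivity
        exact mul_le_mul_of_nonneg_left (hgg _) this))
      (Continuous.intervalIntegrable (by fun_prop) _ _)
    have hk := volterra_kernel_integral K ρ
    have heq : |ρ| * ∫ x in (0:ℝ)..1, L * (1 + |ρ| * x) * (Real.exp (κ (ρ * x)) * D)
        = (D / 2) * ∫ x in (0:ℝ)..1, K * (|ρ| + ρ ^ 2 * x) *
            Real.exp (K * (|ρ * x| + (ρ * x) ^ 2 / 2)) := by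
      rw [← intervalIntegral.integral_const_mul, ← intervalIntegral.integral_const_mul]
      congr 1
      funext x
      simp only [hκ, hK]
      rw [← sq_abs ρ]
      ring
    calc _ ≤ |ρ| * ∫ x in (0:ℝ)..1, L * (1 + |ρ| * x) * (Real.exp (κ (ρ * x)) * D) :=
          mul_le_mul_of_nonneg_left hb (abs_nonneg _)
      _ = (D / 2) * (Real.exp (κ ρ) - 1) := by rw [heq, hk]
      _ ≤ _ := by nlinarith
  -- the operator
  have hexp : ∀ g : BoundedContinuousFunction ℝ E,
      Continuous (fun ρ => Real.exp (κ ρ) • g ρ) := fun g => by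
    have := g.continuous
    fun_prop
  let T : ℝ → BoundedContinuousFunction ℝ E → BoundedContinuousFunction ℝ E := fun a g =>
    BoundedContinuousFunction.ofNormedAddCommGroup
      (fun ρ => Real.exp (-κ ρ) • (f0 + ρ • I a (fun ρ => Real.exp (κ ρ) • g ρ) ρ))
      (by
        have := hIc a _ (hexp g)
        fun_prop)
      (‖f0‖ + 2 * M / K)
      (by
        intro ρ
        rw [norm_smul, Real.norm_eq_abs, abs_of_pos (Real.exp_pos _)]
        have ha : ‖f0 + ρ • I a (fun ρ => Real.exp (κ ρ) • g ρ) ρ‖ ≤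
            ‖f0‖ + |ρ| * (M * (1 + |ρ|)) := by
          refine (norm_add_le _ _).trans ?_
          rw [norm_smul, Real.norm_eq_abs]
          gcongr
          exact hIb a (fun ρ => Real.exp (κ ρ) • g ρ) ρ
        have hb : Real.exp (-κ ρ) ≤ 1 := by
          rw [Real.exp_le_one_iff]; linarith [hκ0 ρ]
        calc _ ≤ Real.exp (-κ ρ) * (‖f0‖ + |ρ| * (M * (1 + |ρ|))) := by gcongr
          _ = Real.exp (-κ ρ) * ‖f0‖ + Real.exp (-κ ρ) * (|ρ| * (M * (1 + |ρ|))) := by ring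
          _ ≤ 1 * ‖f0‖ + 2 * M / K := by
            gcongr
            exact hw ρ
          _ = _ := by ring)
  have hT : ∀ a g ρ, T a g ρ =
      Real.exp (-κ ρ) • (f0 + ρ • I a (fun ρ => Real.exp (κ ρ) • g ρ) ρ) := fun _ _ _ => rfl
  have hcontr : ∀ a, ContractingWith (1 / 2) (T a) := by
    intro a
    refine ⟨by norm_num, LipschitzWith.of_dist_le_mul ?_⟩
    intro g g'
    rw [BoundedContinuousFunction.dist_le (by positivity)]
    intro ρ
    rw [dist_eq_norm, hT, hT, ← smul_sub, add_sub_add_left_eq_sub, ← smul_sub, norm_smul,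
      norm_smul, Real.norm_eq_abs, Real.norm_eq_abs, abs_of_pos (Real.exp_pos _)]
    have := hIL a _ _ (hexp g) (hexp g') (dist g g') dist_nonneg (by
      intro t
      rw [← smul_sub, norm_smul, Real.norm_eq_abs, abs_of_pos (Real.exp_pos _), ← dist_eq_norm]
      gcongr
      exact BoundedContinuousFunction.dist_coe_le_dist t) ρ
    rw [Real.exp_neg, inv_mul_le_iff₀ (Real.exp_pos _)]
    refine this.trans (le_of_eq ?_)
    push_cast
    ring
  let G : ℝ → BoundedContinuousFunction ℝ E := fun a => (hcontr a).fixedPoint (T a)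
  have hfix : ∀ a, T a (G a) = G a := fun a => (hcontr a).fixedPoint_isFixedPt
  have hGd : ∀ a b, dist (G a) (G b) ≤ |e a - e b| * (2 * M / K) * 2 := by
    intro a b
    have := (hcontr a).fixedPoint_lipschitz_in_map (hcontr b) (C := |e a - e b| * (2 * M / K)) (by
      intro g
      rw [BoundedContinuousFunction.dist_le (by positivity)]
      intro ρ
      rw [dist_eq_norm, hT, hT, ← smul_sub, add_sub_add_left_eq_sub, ← smul_sub, norm_smul,
        norm_smul, Real.norm_eq_abs, Real.norm_eq_abs, abs_of_pos (Real.exp_pos _)]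
      calc _ ≤ Real.exp (-κ ρ) * (|ρ| * (|e a - e b| * (M * (1 + |ρ|)))) := by
            gcongr
            exact hIab _ _ _ (hexp g) _
        _ = |e a - e b| * (Real.exp (-κ ρ) * (|ρ| * (M * (1 + |ρ|)))) := by ring
        _ ≤ _ := by
          gcongr
          exact hw ρ)
    refine this.trans (le_of_eq ?_)
    push_cast
    ring
  have hGc : Continuous G := by
    rw [continuous_iff_continuousAt]
    intro b
    rw [ContinuousAt, tendsto_iff_dist_tendsto_zero]
    refine squeeze_zero (fun _ => dist_nonneg) (fun a => hGd a b) ?_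
    have : Continuous fun a => |e a - e b| * (2 * M / K) * 2 := by fun_prop
    have h0 := this.tendsto b
    simpa using h0
  refine ⟨fun a ρ => Real.exp (κ ρ) • G a ρ, ?_, ?_⟩
  · have : Continuous fun q : ℝ × ℝ => G q.1 q.2 := by fun_prop
    simp only [Function.uncurry_def]
    fun_prop
  · intro a ρ
    have h := congrArg (fun g => g ρ) (hfix a)
    simp only [hT] at h
    simp only
    rw [← h, smul_smul, ← Real.exp_add]
    simp [hI]

end Volterra


section Family

theorem exists_trunc (W0 : ℝ) (hW : 0 < W0) :
    ∃ (S L : ℝ) (g1 g2 cl : ℝ → ℝ), S < 1 ∧ 0 < L ∧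
      (∀ σ, |g1 σ| ≤ W0) ∧ (∀ σ, |g2 σ| ≤ 1) ∧ (∀ σ, |cl σ| ≤ 1) ∧
      (∀ σ τ, |g1 σ - g1 τ| ≤ L * |σ - τ|) ∧ (∀ σ τ, |g2 σ - g2 τ| ≤ L * |σ - τ|) ∧
      (∀ σ τ, |cl σ - cl τ| ≤ L * |σ - τ|) ∧
      (∀ σ, |g1 σ| < W0 → |σ| < S) ∧
      (∀ σ, |σ| < S → g1 σ = σ / √(1 - σ ^ 2) ∧ g2 σ = √(1 - σ ^ 2) ∧ cl σ = σ) ∧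
      0 < S := by
  set S : ℝ := W0 / √(1 + W0 ^ 2) with hS
  have hs1 : 0 < √(1 + W0 ^ 2) := Real.sqrt_pos.2 (by positivity)
  have hs2 : √(1 + W0 ^ 2) ^ 2 = 1 + W0 ^ 2 := Real.sq_sqrt (by positivity)
  have hSpos : 0 < S := by positivity
  have hS2 : 1 - S ^ 2 = (1 / √(1 + W0 ^ 2)) ^ 2 := by
    rw [hS, div_pow, div_pow, hs2]; field_simp; ring
  have hS1 : S < 1 := by
    have : 0 < 1 - S ^ 2 := by rw [hS2]; positivity
    nlinarith
  have hkS : S / √(1 - S ^ 2) = W0 := by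
    rw [hS2, Real.sqrt_sq (by positivity), hS]
    field_simp
  have hpos : ∀ x ∈ Set.Icc (-S) S, 0 < 1 - x ^ 2 := by
    intro x hx
    nlinarith [hx.1, hx.2]
  have hd2 : ContDiffOn ℝ 1 (fun x : ℝ => √(1 - x ^ 2)) (Set.Icc (-S) S) := by
    apply ContDiffOn.sqrt (by fun_prop)
    intro x hx
    exact (hpos x hx).ne'
  have hd1 : ContDiffOn ℝ 1 (fun x : ℝ => x / √(1 - x ^ 2)) (Set.Icc (-S) S) := by
    apply ContDiffOn.div (by fun_prop) hd2
    intro x hx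
    exact (Real.sqrt_pos.2 (hpos x hx)).ne'
  obtain ⟨L1, hL1⟩ := hd1.exists_lipschitzOnWith one_ne_zero (convex_Icc _ _) isCompact_Icc
  obtain ⟨L2, hL2⟩ := hd2.exists_lipschitzOnWith one_ne_zero (convex_Icc _ _) isCompact_Icc
  set cl : ℝ → ℝ := fun σ => max (-S) (min σ S) with hcl
  have hclm : ∀ σ, cl σ ∈ Set.Icc (-S) S := by
    intro σ
    simp only [hcl]
    exact ⟨le_max_left _ _, max_le (by linarith) (min_le_right _ _)⟩
  have hcll : ∀ σ τ, |cl σ - cl τ| ≤ |σ - τ| := by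
    intro σ τ
    simp only [hcl]
    refine (abs_max_sub_max_le_max _ _ _ _).trans ?_
    simp only [sub_self, abs_zero]
    refine max_le (abs_nonneg _) ((abs_min_sub_min_le_max _ _ _ _).trans ?_)
    simp
  have hcid : ∀ σ, |σ| < S → cl σ = σ := by
    intro σ h
    rw [abs_lt] at h
    simp only [hcl]
    rw [min_eq_left h.2.le, max_eq_right h.1.le]
  have hmono : ∀ x ∈ Set.Icc (-S) S, |x / √(1 - x ^ 2)| ≤ W0 := by
    intro x hx
    rw [abs_div, abs_of_nonneg (Real.sqrt_nonneg _), ← hkS]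
    have hx' : |x| ≤ S := abs_le.2 hx
    have : √(1 - S ^ 2) ≤ √(1 - x ^ 2) := Real.sqrt_le_sqrt (by
      rw [← sq_abs x]; nlinarith [abs_nonneg x])
    have h0 : 0 < √(1 - S ^ 2) := Real.sqrt_pos.2 (by rw [hS2]; positivity)
    gcongr
  refine ⟨S, L1 + L2 + 1, fun σ => cl σ / √(1 - cl σ ^ 2), fun σ => √(1 - cl σ ^ 2), cl,
    hS1, by positivity, fun σ => hmono _ (hclm σ), ?_, ?_, ?_, ?_, ?_, ?_, ?_, hSpos⟩
  · intro σ
    rw [abs_of_nonneg (Real.sqrt_nonneg _), Real.sqrt_le_left (by norm_num)]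
    nlinarith [sq_nonneg (cl σ)]
  · intro σ
    exact (abs_le.2 (hclm σ)).trans hS1.le
  · intro σ τ
    have := hL1.dist_le_mul _ (hclm σ) _ (hclm τ)
    rw [Real.dist_eq, Real.dist_eq] at this
    refine this.trans ?_
    have h1 := hcll σ τ
    have : (0:ℝ) ≤ L2 := L2.2
    have : (0:ℝ) ≤ L1 := L1.2
    apply mul_le_mul _ h1 (abs_nonneg _) (by positivity)
    linarith
  · intro σ τ
    have := hL2.dist_le_mul _ (hclm σ) _ (hclm τ)
    rw [Real.dist_eq, Real.dist_eq] at this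
    refine this.trans ?_
    have h1 := hcll σ τ
    have : (0:ℝ) ≤ L2 := L2.2
    have : (0:ℝ) ≤ L1 := L1.2
    apply mul_le_mul _ h1 (abs_nonneg _) (by positivity)
    linarith
  · intro σ τ
    refine (hcll σ τ).trans ?_
    have : (0:ℝ) ≤ L2 := L2.2
    have : (0:ℝ) ≤ L1 := L1.2
    nlinarith [abs_nonneg (σ - τ), mul_nonneg this (abs_nonneg (σ - τ))]
  · intro σ h
    by_contra hc
    push Not at hc
    rcases le_abs.1 hc with h1 | h1
    · have : cl σ = S := by
        simp only [hcl]
        rw [min_eq_right h1, max_eq_right (by linarith)]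
      simp only [this, hkS, abs_of_pos hW, lt_irrefl] at h
    · have : cl σ = -S := by
        simp only [hcl]
        rw [min_eq_left (by linarith), max_eq_left (by linarith)]
      simp only [this, neg_sq, neg_div, hkS, abs_neg, abs_of_pos hW, lt_irrefl] at h
  · intro σ h
    simp only [hcid σ h, and_self]

theorem exists_family (P : ℕ) (Q W0 c0 : ℝ) (hQ : 0 ≤ Q) (hW : 0 < W0) (hc : 0 < c0) :
    ∃ U w : ℝ → ℝ → ℝ, Continuous (Function.uncurry U) ∧ Continuous (Function.uncurry w) ∧
      (∀ a, U a 0 = 1) ∧ (∀ a, w a 0 = 0) ∧ (∀ a ρ, HasDerivAt (U a) (w a ρ) ρ) ∧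
      ∀ a ρ, a ^ 2 ≤ 1 → 0 < ρ → |w a ρ| < W0 → c0 < U a ρ →
        HasDerivAt (w a) ((1 + w a ρ ^ 2) * ((a ^ 2 * ρ / 2 - P / ρ) * w a ρ
          - a ^ 2 * U a ρ / 2 + Q / U a ρ)) ρ := by
  obtain ⟨S, L, g1, g2, cl, hS1, hLpos, hb1, hb2, hb3, hl1, hl2, hl3, hin, hval, hSpos⟩ :=
    exists_trunc W0 hW
  set e : ℝ → ℝ := fun a => min (a ^ 2) 1 with he
  have hec : Continuous e := by simp only [he]; fun_prop
  have he0 : ∀ a, 0 ≤ e a := fun a => le_min (sq_nonneg a) zero_le_one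
  have he1 : ∀ a, e a ≤ 1 := fun a => min_le_right _ _
  have lipc : ∀ g : ℝ → ℝ, (∀ σ τ, |g σ - g τ| ≤ L * |σ - τ|) → Continuous g := by
    intro g hg
    apply LipschitzWith.continuous (K := ⟨L, hLpos.le⟩)
    apply LipschitzWith.of_dist_le_mul
    intro x y
    rw [Real.dist_eq, Real.dist_eq]
    exact hg x y
  have hc1 := lipc g1 hl1
  have hc2 := lipc g2 hl2
  have hc3 := lipc cl hl3
  set mU : ℝ → ℝ → ℝ := fun t u => min (max u c0) (1 + W0 * |t|) with hmU
  have hmU0 : ∀ t u, |mU t u| ≤ 1 + W0 * |t| := by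
    intro t u
    have h1 : 0 ≤ 1 + W0 * |t| := by positivity
    have h2 : 0 ≤ mU t u := le_min (hc.le.trans (le_max_right _ _)) h1
    rw [abs_of_nonneg h2]
    exact min_le_right _ _
  have hmUl : ∀ t u u', |mU t u - mU t u'| ≤ |u - u'| := by
    intro t u u'
    simp only [hmU]
    refine (abs_min_sub_min_le_max _ _ _ _).trans ?_
    simp only [sub_self, abs_zero]
    refine max_le ((abs_max_sub_max_le_max _ _ _ _).trans ?_) (abs_nonneg _)
    simp
  have hinv : ∀ u, |(max u c0)⁻¹| ≤ 1 / c0 := by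
    intro u
    have h1 : c0 ≤ max u c0 := le_max_right _ _
    have : 0 < max u c0 := lt_of_lt_of_le hc h1
    rw [abs_of_pos (by positivity), one_div]
    exact inv_anti₀ hc h1
  have hinvl : ∀ u u', |(max u c0)⁻¹ - (max u' c0)⁻¹| ≤ 1 / c0 ^ 2 * |u - u'| := by
    intro u u'
    have h1 : c0 ≤ max u c0 := le_max_right _ _
    have h2 : 0 < max u c0 := lt_of_lt_of_le hc h1
    have h1' : c0 ≤ max u' c0 := le_max_right _ _
    have h2' : 0 < max u' c0 := lt_of_lt_of_le hc h1'
    have h3 : |max u' c0 - max u c0| ≤ |u - u'| := by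
      refine (abs_max_sub_max_le_max _ _ _ _).trans ?_
      simp [abs_sub_comm]
    have : (max u c0)⁻¹ - (max u' c0)⁻¹ = (max u c0)⁻¹ * (max u' c0)⁻¹ * (max u' c0 - max u c0) := by
      field_simp
    rw [this, abs_mul, abs_mul]
    have h4 : |(max u c0)⁻¹| * |(max u' c0)⁻¹| ≤ 1 / c0 * (1 / c0) := by
      gcongr
      · exact hinv u
      · exact hinv u'
    calc _ ≤ 1 / c0 * (1 / c0) * |u - u'| := by gcongr
      _ = _ := by ring
  set h : ℝ → ℝ → ℝ × ℝ → ℝ := fun a t v =>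
    (e a / 2) * (t * cl v.2 - g2 v.2 * mU t v.1) + Q * (g2 v.2 * (max v.1 c0)⁻¹) with hh
  have hhc : Continuous fun p : ℝ × ℝ × ℝ × ℝ => h p.1 p.2.1 p.2.2 := by
    simp only [hh, hmU]
    have : ∀ p : ℝ × ℝ × ℝ × ℝ, max p.2.2.1 c0 ≠ 0 := fun p =>
      (lt_of_lt_of_le hc (le_max_right _ _)).ne'
    fun_prop (disch := assumption)
  set F : ℝ → ℝ → ℝ → ℝ × ℝ → ℝ × ℝ := fun a x t v => (g1 v.2, x ^ P * h a t v) with hF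
  have hxP : ∀ x ∈ Set.Icc (0:ℝ) 1, |x ^ P| ≤ 1 := by
    intro x hx
    rw [abs_of_nonneg (pow_nonneg hx.1 _)]
    exact pow_le_one₀ hx.1 hx.2
  obtain ⟨f, hfc, hf⟩ := volterra F (by
      simp only [hF]
      have : Continuous fun p : ℝ × ℝ × ℝ × ℝ × ℝ => h p.1 p.2.2.1 p.2.2.2 :=
        hhc.comp (f := fun p : ℝ × ℝ × ℝ × ℝ × ℝ => (p.1, p.2.2.1, p.2.2.2)) (by fun_prop)
      fun_prop) e hec
    (L + 1 + L * (1 + W0) + L + Q * (L * (1 / c0) + 1 / c0 ^ 2)) (W0 + 1 + W0 + Q * (1 / c0))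
    (by positivity) (by positivity)
    (by
      intro a x t v v' hx
      have d1 : |v.1 - v'.1| ≤ ‖v - v'‖ := norm_fst_le (v - v')
      have d2 : |v.2 - v'.2| ≤ ‖v - v'‖ := norm_snd_le (v - v')
      have dn := norm_nonneg (v - v')
      have ht := abs_nonneg t
      set d := ‖v - v'‖ with hd
      have k1 : |g1 v.2 - g1 v'.2| ≤ L * d := (hl1 _ _).trans (by gcongr)
      have k2 : |g2 v.2 - g2 v'.2| ≤ L * d := (hl2 _ _).trans (by gcongr)
      have k3 : |cl v.2 - cl v'.2| ≤ L * d := (hl3 _ _).trans (by gcongr)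
      have hdiff : h a t v - h a t v' = (e a / 2) * (t * (cl v.2 - cl v'.2)
          - ((g2 v.2 - g2 v'.2) * mU t v.1 + g2 v'.2 * (mU t v.1 - mU t v'.1)))
          + Q * ((g2 v.2 - g2 v'.2) * (max v.1 c0)⁻¹
            + g2 v'.2 * ((max v.1 c0)⁻¹ - (max v'.1 c0)⁻¹)) := by
        simp only [hh]; ring
      have e1 : |t * (cl v.2 - cl v'.2)
          - ((g2 v.2 - g2 v'.2) * mU t v.1 + g2 v'.2 * (mU t v.1 - mU t v'.1))| ≤
          |t| * (L * d) + (L * d * (1 + W0 * |t|) + 1 * d) := by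
        refine (abs_sub _ _).trans ?_
        refine add_le_add ?_ ((abs_add_le _ _).trans (add_le_add ?_ ?_))
        · rw [abs_mul]; gcongr
        · rw [abs_mul]
          exact mul_le_mul k2 (hmU0 _ _) (abs_nonneg _) (by positivity)
        · rw [abs_mul]
          exact mul_le_mul (hb2 _) ((hmUl _ _ _).trans d1) (abs_nonneg _) (by positivity)
      have e2 : |(g2 v.2 - g2 v'.2) * (max v.1 c0)⁻¹
            + g2 v'.2 * ((max v.1 c0)⁻¹ - (max v'.1 c0)⁻¹)| ≤
            L * d * (1 / c0) + 1 * (1 / c0 ^ 2 * d) := by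
        refine (abs_add_le _ _).trans (add_le_add ?_ ?_)
        · rw [abs_mul]
          exact mul_le_mul k2 (hinv _) (abs_nonneg _) (by positivity)
        · rw [abs_mul]
          refine mul_le_mul (hb2 _) ((hinvl _ _).trans ?_) (abs_nonneg _) (by positivity)
          gcongr
      have e3 : |h a t v - h a t v'| ≤ (|t| * (L * d) + (L * d * (1 + W0 * |t|) + 1 * d))
          + Q * (L * d * (1 / c0) + 1 * (1 / c0 ^ 2 * d)) := by
        rw [hdiff]
        refine (abs_add_le _ _).trans (add_le_add ?_ ?_)
        · rw [abs_mul]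
          have : |e a / 2| ≤ 1 := by
            rw [abs_of_nonneg (by have := he0 a; positivity)]; linarith [he1 a]
          calc _ ≤ 1 * _ := mul_le_mul this e1 (abs_nonneg _) zero_le_one
            _ = _ := one_mul _
        · rw [abs_mul, abs_of_nonneg hQ]
          gcongr
      have hA : 0 ≤ Q * (L * (1 / c0) + 1 / c0 ^ 2) := by positivity
      have e4 : (|t| * (L * d) + (L * d * (1 + W0 * |t|) + 1 * d))
          + Q * (L * d * (1 / c0) + 1 * (1 / c0 ^ 2 * d)) ≤
          (L + 1 + L * (1 + W0) + L + Q * (L * (1 / c0) + 1 / c0 ^ 2)) * (1 + |t|) * d := by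
        have : (L + 1 + L * (1 + W0) + L + Q * (L * (1 / c0) + 1 / c0 ^ 2)) * (1 + |t|) * d
          - ((|t| * (L * d) + (L * d * (1 + W0 * |t|) + 1 * d))
          + Q * (L * d * (1 / c0) + 1 * (1 / c0 ^ 2 * d))) =
          L * d + L * d * |t| + |t| * d + L * W0 * d + L * d + L * d * |t|
            + Q * (L * (1 / c0) + 1 / c0 ^ 2) * |t| * d := by ring
        have h5 : 0 ≤ L * d + L * d * |t| + |t| * d + L * W0 * d + L * d + L * d * |t|
            + Q * (L * (1 / c0) + 1 / c0 ^ 2) * |t| * d := by positivity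
        linarith
      simp only [hF, Prod.mk_sub_mk, Prod.norm_mk, Real.norm_eq_abs]
      refine max_le (k1.trans ?_) ?_
      · have : (L + 1 + L * (1 + W0) + L + Q * (L * (1 / c0) + 1 / c0 ^ 2)) * (1 + |t|) * d
          - L * d = ((1 + L * (1 + W0) + L + Q * (L * (1 / c0) + 1 / c0 ^ 2)) * (1 + |t|)
            + L * |t|) * d := by ring
        have h5 : 0 ≤ ((1 + L * (1 + W0) + L + Q * (L * (1 / c0) + 1 / c0 ^ 2)) * (1 + |t|)
            + L * |t|) * d := by positivity
        linarith
      · rw [← mul_sub, abs_mul]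
        calc _ ≤ 1 * |h a t v - h a t v'| := by gcongr; exact hxP x hx
          _ ≤ _ := by rw [one_mul]; exact e3.trans e4)
    (by
      intro a x t v hx
      have ht := abs_nonneg t
      have hA : 0 ≤ Q * (1 / c0) := by positivity
      simp only [hF, Prod.norm_mk, Real.norm_eq_abs]
      refine max_le ((hb1 _).trans ?_) ?_
      · nlinarith [mul_nonneg hA ht, mul_nonneg hW.le ht]
      · rw [abs_mul]
        have e1 : |t * cl v.2 - g2 v.2 * mU t v.1| ≤ |t| * 1 + 1 * (1 + W0 * |t|) := by
          refine (abs_sub _ _).trans (add_le_add ?_ ?_)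
          · rw [abs_mul]; gcongr; exact hb3 _
          · rw [abs_mul]; exact mul_le_mul (hb2 _) (hmU0 _ _) (abs_nonneg _) zero_le_one
        have e2 : |g2 v.2 * (max v.1 c0)⁻¹| ≤ 1 * (1 / c0) := by
          rw [abs_mul]; exact mul_le_mul (hb2 _) (hinv _) (abs_nonneg _) zero_le_one
        have e3 : |h a t v| ≤ 1 / 2 * (|t| * 1 + 1 * (1 + W0 * |t|)) + Q * (1 * (1 / c0)) := by
          refine (abs_add_le _ _).trans (add_le_add ?_ ?_)
          · rw [abs_mul]
            have : |e a / 2| ≤ 1 / 2 := by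
              rw [abs_of_nonneg (by have := he0 a; positivity)]; linarith [he1 a]
            exact mul_le_mul this e1 (abs_nonneg _) (by norm_num)
          · rw [abs_mul, abs_of_nonneg hQ]
            gcongr
        calc _ ≤ 1 * |h a t v| := by gcongr; exact hxP x hx
          _ ≤ _ := by
            rw [one_mul]
            refine e3.trans ?_
            nlinarith [mul_nonneg hA ht, mul_nonneg hW.le ht])
    (by
      intro a b x t v hx
      have ht := abs_nonneg t
      have hA : 0 ≤ Q * (1 / c0) := by positivity
      have e1 : |t * cl v.2 - g2 v.2 * mU t v.1| ≤ |t| * 1 + 1 * (1 + W0 * |t|) := by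
        refine (abs_sub _ _).trans (add_le_add ?_ ?_)
        · rw [abs_mul]; gcongr; exact hb3 _
        · rw [abs_mul]; exact mul_le_mul (hb2 _) (hmU0 _ _) (abs_nonneg _) zero_le_one
      simp only [hF, Prod.mk_sub_mk, Prod.norm_mk, Real.norm_eq_abs, sub_self, abs_zero]
      refine max_le (by positivity) ?_
      rw [← mul_sub, abs_mul]
      have hdiff : h a t v - h b t v = (e a - e b) * ((1 / 2) * (t * cl v.2 - g2 v.2 * mU t v.1)) := by
        simp only [hh]; ring
      calc _ ≤ 1 * |h a t v - h b t v| := by gcongr; exact hxP x hx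
        _ ≤ _ := by
          rw [one_mul, hdiff, abs_mul]
          gcongr
          rw [abs_mul, abs_of_pos (by norm_num : (0:ℝ) < 1 / 2)]
          nlinarith [mul_nonneg hA ht, mul_nonneg hW.le ht])
    (1, 0)
  -- extract
  have hfca : ∀ a, Continuous (f a) := fun a => by
    have : f a = Function.uncurry f ∘ (fun ρ => (a, ρ)) := rfl
    rw [this]; exact hfc.comp (by fun_prop)
  have hha : ∀ a, Continuous fun t => h a t (f a t) := fun a => by
    have := hfca a
    exact hhc.comp (f := fun t => (a, t, f a t)) (by fun_prop)
  have hFi : ∀ a ρ, IntervalIntegrable (fun x => F a x (ρ * x) (f a (ρ * x)))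
      MeasureTheory.volume 0 1 := by
    intro a ρ
    apply Continuous.intervalIntegrable
    have h1 := hfca a
    have h2 := (hha a).comp (continuous_const_mul ρ)
    simp only [hF]
    simp only [Function.comp_def] at h2
    fun_prop
  have hf1 : ∀ a ρ, (f a ρ).1 = 1 + ∫ t in (0:ℝ)..ρ, g1 (f a t).2 := by
    intro a ρ
    have h1 := hf a ρ
    have h2 := congrArg (ContinuousLinearMap.fst ℝ ℝ ℝ) h1
    rw [map_add, map_smul, ← ContinuousLinearMap.intervalIntegral_comp_comm _ (hFi a ρ)] at h2
    simp only [hF] at h2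
    change (f a ρ).1 = (1:ℝ) + ρ • ∫ x in (0:ℝ)..1, g1 (f a (ρ * x)).2 at h2
    rw [h2]
    have := intervalIntegral.smul_integral_comp_mul_left (a := (0:ℝ)) (b := 1)
      (fun t => g1 (f a t).2) ρ
    rw [this]
    simp
  have hf2 : ∀ a ρ, 0 < ρ → (f a ρ).2 = (ρ ^ P)⁻¹ * ∫ t in (0:ℝ)..ρ, t ^ P * h a t (f a t) := by
    intro a ρ hρ
    have h1 := hf a ρ
    have h2 := congrArg (ContinuousLinearMap.snd ℝ ℝ ℝ) h1
    rw [map_add, map_smul, ← ContinuousLinearMap.intervalIntegral_comp_comm _ (hFi a ρ)] at h2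
    simp only [hF] at h2
    change (f a ρ).2 = (0:ℝ) + ρ • ∫ x in (0:ℝ)..1, x ^ P * h a (ρ * x) (f a (ρ * x)) at h2
    rw [h2]
    have := intervalIntegral.smul_integral_comp_mul_left (a := (0:ℝ)) (b := 1)
      (fun t => t ^ P * h a t (f a t)) ρ
    simp only [mul_zero, mul_one] at this
    rw [← this, smul_eq_mul, smul_eq_mul, zero_add]
    have h3 : ∀ x : ℝ, (ρ * x) ^ P * h a (ρ * x) (f a (ρ * x)) =
        ρ ^ P * (x ^ P * h a (ρ * x) (f a (ρ * x))) := fun x => by rw [mul_pow]; ring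
    simp only [h3]
    rw [intervalIntegral.integral_const_mul]
    have : ρ ^ P ≠ 0 := by positivity
    field_simp
  have hgc : ∀ a, Continuous fun t => g1 (f a t).2 := fun a => by
    have := hfca a
    fun_prop
  have hd1 : ∀ a ρ, HasDerivAt (fun ρ => (f a ρ).1) (g1 (f a ρ).2) ρ := by
    intro a ρ
    have h1 : (fun ρ => (f a ρ).1) = fun ρ => 1 + ∫ t in (0:ℝ)..ρ, g1 (f a t).2 := by
      funext ρ; exact hf1 a ρ
    rw [h1]
    exact ((hgc a).integral_hasStrictDerivAt 0 ρ).hasDerivAt.const_add 1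
  have hd2 : ∀ a ρ, 0 < ρ → HasDerivAt (fun ρ => (f a ρ).2)
      (-P / ρ * (f a ρ).2 + h a ρ (f a ρ)) ρ := by
    intro a ρ hρ
    have h1 : (fun ρ => (f a ρ).2) =ᶠ[nhds ρ] fun ρ =>
        (ρ ^ P)⁻¹ * ∫ t in (0:ℝ)..ρ, t ^ P * h a t (f a t) := by
      filter_upwards [lt_mem_nhds hρ] with x hx
      exact hf2 a x hx
    refine HasDerivAt.congr_of_eventuallyEq ?_ h1
    have hcc : Continuous fun t => t ^ P * h a t (f a t) := by
      have := hha a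
      fun_prop
    have h2 := (hcc.integral_hasStrictDerivAt 0 ρ).hasDerivAt
    have h3 := ((hasDerivAt_pow P ρ).inv (by positivity)).mul h2
    refine HasDerivAt.congr_deriv (f := fun ρ => (ρ ^ P)⁻¹ * ∫ t in (0:ℝ)..ρ, t ^ P * h a t (f a t)) h3 ?_
    rw [hf2 a ρ hρ]
    set J := ∫ t in (0:ℝ)..ρ, t ^ P * h a t (f a t)
    have hpp : (ρ ^ P) ≠ 0 := by positivity
    rcases Nat.eq_zero_or_pos P with hP | hP
    · subst hP; simp
    · obtain ⟨n, rfl⟩ : ∃ n, P = n + 1 := ⟨P - 1, by omega⟩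
      simp only [Nat.add_sub_cancel, Pi.inv_apply]
      field_simp
      ring
  refine ⟨fun a ρ => (f a ρ).1, fun a ρ => g1 (f a ρ).2, ?_, ?_, ?_, ?_, hd1, ?_⟩
  · exact continuous_fst.comp hfc
  · exact hc1.comp (continuous_snd.comp hfc)
  · intro a
    simp only [hf1 a 0, intervalIntegral.integral_same, add_zero]
  · intro a
    have h1 := hf a 0
    simp only [zero_smul, add_zero] at h1
    simp only [h1]
    rw [(hval 0 (by simpa using hSpos)).1]
    simp
  · intro a ρ ha hρ hw hU
    simp only at hw hU ⊢
    have hσ := hin _ hw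
    set σ := (f a ρ).2 with hσd
    set u := (f a ρ).1 with hud
    obtain ⟨v1, v2, v3⟩ := hval _ hσ
    have hev : (fun ρ => g1 (f a ρ).2) =ᶠ[nhds ρ]
        fun ρ => (f a ρ).2 / √(1 - (f a ρ).2 ^ 2) := by
      have hcont : ContinuousAt (fun ρ => |(f a ρ).2|) ρ := by
        have := hfca a
        fun_prop
      filter_upwards [hcont.eventually (gt_mem_nhds hσ)] with x hx
      exact (hval _ hx).1
    refine HasDerivAt.congr_of_eventuallyEq ?_ hev
    have hpos : 0 < 1 - σ ^ 2 := by
      rw [abs_lt] at hσ; nlinarith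
    have hsq := Real.sq_sqrt hpos.le
    have hsp := Real.sqrt_pos.2 hpos
    have hD := hd2 a ρ hρ
    have hu1 : u ≤ 1 + W0 * |ρ| := by
      rw [hud, hf1, abs_of_pos hρ]
      have := intervalIntegral.norm_integral_le_of_norm_le_const (a := (0:ℝ)) (b := ρ)
        (C := W0) (f := fun t => g1 (f a t).2) (fun x _ => hb1 _)
      rw [sub_zero, abs_of_pos hρ, Real.norm_eq_abs] at this
      linarith [le_abs_self (∫ t in (0:ℝ)..ρ, g1 (f a t).2)]
    have hupos : 0 < u := hc.trans hU
    have hval_h : h a ρ (f a ρ) = a ^ 2 / 2 * (ρ * σ - √(1 - σ ^ 2) * u)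
        + Q * (√(1 - σ ^ 2) * u⁻¹) := by
      simp only [hh, hmU, he]
      rw [← hud, ← hσd, v2, v3, max_eq_left hU.le, min_eq_left hu1, min_eq_left ha]
    rw [hval_h] at hD
    have hden : HasDerivAt (fun ρ => √(1 - (f a ρ).2 ^ 2)) _ ρ :=
      ((hD.pow 2).const_sub 1).sqrt hpos.ne'
    have hfin := hD.div hden hsp.ne'
    refine HasDerivAt.congr_deriv (f := fun ρ => (f a ρ).2 / √(1 - (f a ρ).2 ^ 2)) hfin ?_
    simp only [Pi.pow_apply]
    rw [← hσd, v1]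
    set k := √(1 - σ ^ 2) with hk
    have hσ2 : σ ^ 2 = 1 - k ^ 2 := by linarith
    have : 1 + (σ / k) ^ 2 = 1 / k ^ 2 := by
      rw [div_pow, hσ2]; field_simp; ring
    rw [this]
    simp only [Nat.add_one_sub_one, pow_one, Nat.cast_ofNat]
    generalize hX : (-(P:ℝ) / ρ * σ + (a ^ 2 / 2 * (ρ * σ - k * u) + Q * (k * u⁻¹))) = X
    have hX' : (a ^ 2 * ρ / 2 - P / ρ) * (σ / k) - a ^ 2 * u / 2 + Q / u = X / k := by
      rw [← hX]; field_simp; ring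
    rw [hX']
    field_simp
    linear_combination X * hσ2

end Family


section Tools

theorem first_hit {f : ℝ → ℝ} {a b c : ℝ} (hab : a ≤ b) (hf : ContinuousOn f (Set.Icc a b))
    (ha : f a < c) (hb : c ≤ f b) :
    ∃ s ∈ Set.Ioc a b, f s = c ∧ ∀ t ∈ Set.Ico a s, f t < c := by
  set S := Set.Icc a b ∩ f ⁻¹' Set.Ici c with hS
  have hcl : IsClosed S := hf.preimage_isClosed_of_isClosed isClosed_Icc isClosed_Ici
  have hne : S.Nonempty := ⟨b, ⟨hab, le_rfl⟩, hb⟩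
  have hbd : BddBelow S := ⟨a, fun x hx => hx.1.1⟩
  have hmem := hcl.csInf_mem hne hbd
  set s := sInf S
  have hlt : ∀ t ∈ Set.Ico a s, f t < c := by
    intro t ht
    by_contra hcon
    have : t ∈ S := ⟨⟨ht.1, ht.2.le.trans hmem.1.2⟩, not_lt.1 hcon⟩
    exact absurd (csInf_le hbd this) (not_le.2 ht.2)
  have has : a < s := by
    rcases hmem.1.1.lt_or_eq with h | h
    · exact h
    · exfalso
      have := hmem.2
      rw [← h] at this
      exact absurd this (not_le.2 ha)
  refine ⟨s, ⟨has, hmem.1.2⟩, le_antisymm ?_ hmem.2, hlt⟩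
  have hcs : ContinuousWithinAt f (Set.Ico a s) s :=
    (hf s hmem.1).mono (fun x hx => ⟨hx.1, hx.2.le.trans hmem.1.2⟩)
  have hcl2 : s ∈ closure (Set.Ico a s) := by
    rw [closure_Ico has.ne]
    exact ⟨has.le, le_rfl⟩
  have : (nhdsWithin s (Set.Ico a s)).NeBot := mem_closure_iff_nhdsWithin_neBot.1 hcl2
  refine le_of_tendsto hcs ?_
  filter_upwards [self_mem_nhdsWithin] with t ht
  exact (hlt t ht).le

theorem anti_of_hasDeriv {f f' : ℝ → ℝ} {a b : ℝ} (hab : a ≤ b)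
    (hc : ContinuousOn f (Set.Icc a b)) (hd : ∀ x ∈ Set.Ioo a b, HasDerivAt f (f' x) x)
    (hn : ∀ x ∈ Set.Ioo a b, f' x ≤ 0) : f b ≤ f a := by
  have h : AntitoneOn f (Set.Icc a b) := by
    refine antitoneOn_of_deriv_nonpos (convex_Icc a b) hc ?_ ?_
    · rw [interior_Icc]
      exact fun x hx => (hd x hx).differentiableAt.differentiableWithinAt
    · rw [interior_Icc]
      intro x hx
      rw [(hd x hx).deriv]
      exact hn x hx
  exact h ⟨le_rfl, hab⟩ ⟨hab, le_rfl⟩ hab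

theorem mono_of_hasDeriv {f f' : ℝ → ℝ} {a b : ℝ} (hab : a ≤ b)
    (hc : ContinuousOn f (Set.Icc a b)) (hd : ∀ x ∈ Set.Ioo a b, HasDerivAt f (f' x) x)
    (hn : ∀ x ∈ Set.Ioo a b, 0 ≤ f' x) : f a ≤ f b := by
  have := anti_of_hasDeriv (f := fun x => - f x) (f' := fun x => - f' x) hab hc.neg
    (fun x hx => (hd x hx).neg) (fun x hx => by linarith [hn x hx])
  linarith

theorem gronwall_le {f f' : ℝ → ℝ} {a b c : ℝ} (hab : a ≤ b)
    (hc : ContinuousOn f (Set.Icc a b)) (hd : ∀ x ∈ Set.Ioo a b, HasDerivAt f (f' x) x)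
    (hn : ∀ x ∈ Set.Ioo a b, f' x ≤ c * f x) : f b ≤ f a * exp (c * (b - a)) := by
  have h := anti_of_hasDeriv (f := fun x => f x * exp (-(c * (x - a))))
    (f' := fun x => (f' x - c * f x) * exp (-(c * (x - a)))) hab
    (hc.mul (by fun_prop)) ?_ ?_
  · simp only [sub_self, mul_zero, neg_zero, exp_zero, mul_one] at h
    rw [exp_neg, ← div_eq_mul_inv, div_le_iff₀ (exp_pos _)] at h
    exact h
  · intro x hx
    have h1 : HasDerivAt (fun x => -(c * (x - a))) (-(c * 1)) x :=
      (((hasDerivAt_id x).sub_const a).const_mul c).neg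
    refine ((hd x hx).mul h1.exp).congr_deriv ?_
    ring
  · intro x hx
    have := hn x hx
    exact mul_nonpos_of_nonpos_of_nonneg (by linarith) (exp_pos _).le

theorem gronwall_ge {f f' : ℝ → ℝ} {a b c : ℝ} (hab : a ≤ b)
    (hc : ContinuousOn f (Set.Icc a b)) (hd : ∀ x ∈ Set.Ioo a b, HasDerivAt f (f' x) x)
    (hn : ∀ x ∈ Set.Ioo a b, c * f x ≤ f' x) : f a * exp (c * (b - a)) ≤ f b := by
  have := gronwall_le (f := fun x => - f x) (f' := fun x => - f' x) (c := c) hab hc.neg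
    (fun x hx => (hd x hx).neg) (fun x hx => by linarith [hn x hx])
  linarith

end Tools

section Init

theorem init_bound (P : ℕ) (Q W0 c0 a : ℝ) (hQ : 0 ≤ Q) (hW : 1 ≤ W0) (hc : c0 ≤ 1 / 4)
    (ha : a ^ 2 ≤ 1) (U w : ℝ → ℝ) (hw : Continuous w) (hU0 : U 0 = 1) (hw0 : w 0 = 0)
    (hU' : ∀ ρ, HasDerivAt U (w ρ) ρ)
    (hode : ∀ ρ, 0 < ρ → |w ρ| < W0 → c0 < U ρ →
      HasDerivAt w ((1 + w ρ ^ 2) * ((a^2*ρ/2 - P/ρ) * w ρ - a^2 * U ρ / 2 + Q / U ρ)) ρ)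
    (ρ0 : ℝ) (hρ0 : ρ0 = 1 / (10 * (1 + 2 * Q))) :
    ∀ ρ ∈ Set.Icc 0 ρ0, |w ρ| ≤ 1 / 2 ∧ |U ρ - 1| ≤ 1 / 4 := by
  have hρ0' : ρ0 * (1 + 2 * Q) = 1 / 10 := by rw [hρ0]; field_simp
  have hρp : 0 < ρ0 := by rw [hρ0]; positivity
  have hρle : ρ0 ≤ 1 / 10 := by nlinarith
  have hUc : Continuous U := continuous_iff_continuousAt.2 fun ρ => (hU' ρ).continuousAt
  -- a priori bound on U
  have key1 : ∀ s ∈ Set.Icc 0 ρ0, (∀ t ∈ Set.Ico 0 s, w t ^ 2 ≤ 1 / 4) → |U s - 1| ≤ 1 / 4 := by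
    intro s hs hsw
    have hb : ∀ t ∈ Set.Ioo 0 s, |w t| ≤ 1 / 2 := fun t ht => by
      have := hsw t ⟨ht.1.le, ht.2⟩
      exact abs_le_of_sq_le_sq (by linarith) (by norm_num)
    have h1 := anti_of_hasDeriv (f := fun x => U x - x / 2) (f' := fun x => w x - 1 / 2) hs.1
      (by fun_prop) (fun x hx => (hU' x).sub ((hasDerivAt_id x).div_const 2))
      (fun x hx => by have := (abs_le.1 (hb x hx)).2; linarith)
    have h2 := mono_of_hasDeriv (f := fun x => U x + x / 2) (f' := fun x => w x + 1 / 2) hs.1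
      (by fun_prop) (fun x hx => (hU' x).add ((hasDerivAt_id x).div_const 2))
      (fun x hx => by have := (abs_le.1 (hb x hx)).1; linarith)
    simp only [hU0] at h1 h2
    have := hs.2
    rw [abs_le]; constructor <;> linarith
  have key2 : ∀ s ∈ Set.Icc 0 ρ0, w s ^ 2 < 1 / 4 := by
    intro s hs
    by_contra hcon
    obtain ⟨x, hx, hx1, hx2⟩ := first_hit (f := fun x => w x ^ 2) (c := 1 / 4) hs.1
      (by fun_prop) (by simp [hw0]) (not_lt.1 hcon)
    have hb : ∀ t ∈ Set.Ioo 0 x, HasDerivAt w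
        ((1 + w t ^ 2) * ((a^2*t/2 - P/t) * w t - a^2 * U t / 2 + Q / U t)) t ∧ |w t| ≤ 1 / 2
        ∧ |U t - 1| ≤ 1 / 4 := by
      intro t ht
      have h1 : |w t| ≤ 1 / 2 := by
        have := hx2 t ⟨ht.1.le, ht.2⟩
        exact abs_le_of_sq_le_sq (by linarith) (by norm_num)
      have h2 := key1 t ⟨ht.1.le, by linarith [ht.2, hx.2, hs.2]⟩
        (fun y hy => (hx2 y ⟨hy.1, hy.2.trans ht.2⟩).le)
      refine ⟨hode t ht.1 (by linarith) ?_, h1, h2⟩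
      have := (abs_le.1 h2).1
      linarith
    have h1 := anti_of_hasDeriv (f := fun x => w x ^ 2 - (5 / 4 * (1 + 2 * Q)) * x)
      (f' := fun t => 2 * w t * ((1 + w t ^ 2) *
        ((a^2*t/2 - P/t) * w t - a^2 * U t / 2 + Q / U t)) - (5 / 4 * (1 + 2 * Q)) * 1) hx.1.le
      (by fun_prop) (fun t ht => by
        refine (((hb t ht).1.pow 2).sub ((hasDerivAt_id t).const_mul _)).congr_deriv ?_
        simp)
      (fun t ht => by
        obtain ⟨-, hw2, hU2⟩ := hb t ht
        have ht1 : t ≤ 1 / 10 := by linarith [ht.2, hx.2, hs.2]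
        have ht0 := ht.1
        have hUl := (abs_le.1 hU2).1
        have hUr := (abs_le.1 hU2).2
        have hUp : 0 < U t := by linarith
        have hww : w t ^ 2 ≤ 1 / 4 := by
          rw [← sq_abs]; nlinarith [abs_nonneg (w t)]
        set N := a^2 * U t / 2 with hN
        have hN1 : 0 ≤ N := by positivity
        have hN2 : N ≤ 5 / 8 := by nlinarith
        set M := Q / U t with hM
        have hM1 : 0 ≤ M := by positivity
        have hM2 : M ≤ 2 * Q := by
          rw [hM, div_le_iff₀ hUp]; nlinarith
        have hPt : 0 ≤ P / t * w t ^ 2 := by positivity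
        have hat : a ^ 2 * t / 2 * w t ^ 2 ≤ 1 / 80 := by
          have : a ^ 2 * t ≤ 1 / 10 := by nlinarith
          have h0 : 0 ≤ a ^ 2 * t := by positivity
          nlinarith [sq_nonneg (w t)]
        have hX : w t * ((a^2*t/2 - P/t) * w t - N + M) ≤ 1 / 2 * (1 + 2 * Q) := by
          have e1 : w t * ((a^2*t/2 - P/t) * w t - N + M) =
            a ^ 2 * t / 2 * w t ^ 2 - P / t * w t ^ 2 + w t * (M - N) := by ring
          have e2 : w t * (M - N) ≤ 1 / 2 * (2 * Q + 5 / 8) := by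
            have e3 : |M - N| ≤ 2 * Q + 5 / 8 := by
              rw [abs_le]; constructor <;> linarith
            calc w t * (M - N) ≤ |w t * (M - N)| := le_abs_self _
              _ = |w t| * |M - N| := abs_mul _ _
              _ ≤ _ := by gcongr
          rw [e1]; linarith
        have h5 : 1 + w t ^ 2 ≤ 5 / 4 := by linarith
        have h6 : (1 + w t ^ 2) * (w t * ((a^2*t/2 - P/t) * w t - N + M)) ≤
            5 / 4 * (1 / 2 * (1 + 2 * Q)) := by
          have : 0 ≤ 1 + w t ^ 2 := by positivity
          have : 0 ≤ 1 / 2 * (1 + 2 * Q) := by positivity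
          nlinarith
        linarith)
    simp only [hw0] at h1
    have : x * (1 + 2 * Q) ≤ 1 / 10 := by
      rw [← hρ0']
      have : x ≤ ρ0 := hx.2.trans hs.2
      gcongr
    nlinarith
  intro ρ hρ
  refine ⟨abs_le_of_sq_le_sq (by linarith [key2 ρ hρ]) (by norm_num), key1 ρ hρ fun t ht => ?_⟩
  exact (key2 t ⟨ht.1, ht.2.le.trans hρ.2⟩).le

end Init


section LyapSec

/-- The two parts of the Lyapunov function. -/
noncomputable def LPhi (Q lam φ : ℝ) : ℝ := Q * (φ / lam - 1 - log (φ / lam))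

noncomputable def LPsi (lam w : ℝ) : ℝ :=
  (log (1 + w ^ 2) - log (1 + lam ^ 2)) / 2 - lam * (arctan w - arctan lam)

noncomputable def Lyap (Q lam φ w : ℝ) : ℝ := LPhi Q lam φ + LPsi lam w

theorem LPsi_hasDeriv (lam w : ℝ) : HasDerivAt (LPsi lam) ((w - lam) / (1 + w ^ 2)) w := by
  have h1 : HasDerivAt (fun w : ℝ => 1 + w ^ 2) (2 * w) w := by
    simpa using (hasDerivAt_pow 2 w).const_add 1
  have hp : 0 < 1 + w ^ 2 := by positivity
  have h2 := h1.log hp.ne'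
  have h3 := ((h2.sub_const (log (1 + lam ^ 2))).div_const 2).sub
    (((hasDerivAt_arctan w).sub_const (arctan lam)).const_mul lam)
  refine HasDerivAt.congr_deriv (f := LPsi lam) h3 ?_
  field_simp

theorem LPhi_hasDeriv (Q lam φ : ℝ) (hl : 0 < lam) (hφ : 0 < φ) :
    HasDerivAt (LPhi Q lam) (Q * (1 / lam - 1 / φ)) φ := by
  have h1 : HasDerivAt (fun φ : ℝ => φ / lam) (1 / lam) φ := (hasDerivAt_id φ).div_const lam
  have h2 := h1.log (by positivity)
  refine HasDerivAt.congr_deriv (f := LPhi Q lam) (((h1.sub_const 1).sub h2).const_mul Q) ?_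
  field_simp

theorem LPsi_self (lam : ℝ) : LPsi lam lam = 0 := by simp [LPsi]

/-- comparison of `LPsi` with a multiple of the square -/
theorem LPsi_upper (lam w : ℝ) : LPsi lam w ≤ (w - lam) ^ 2 / 2 := by
  have hd : ∀ x, HasDerivAt (fun x => LPsi lam x - (x - lam) ^ 2 / 2)
      ((x - lam) / (1 + x ^ 2) - (x - lam)) x := fun x => by
    refine ((LPsi_hasDeriv lam x).sub
      ((((hasDerivAt_id x).sub_const lam).pow 2).div_const 2)).congr_deriv ?_
    simp
  have hc : Continuous (fun x => LPsi lam x - (x - lam) ^ 2 / 2) :=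
    continuous_iff_continuousAt.2 fun x => (hd x).continuousAt
  have hx : ∀ x, (x - lam) / (1 + x ^ 2) - (x - lam) = - ((x - lam) * (x ^ 2 / (1 + x ^ 2))) := by
    intro x
    have hp : 0 < 1 + x ^ 2 := by positivity
    field_simp
    ring
  rcases le_total lam w with h | h
  · have := anti_of_hasDeriv h hc.continuousOn (fun x _ => hd x) (fun x hx' => by
      rw [hx]
      have h1 : 0 ≤ x - lam := by linarith [hx'.1]
      have : 0 ≤ (x - lam) * (x ^ 2 / (1 + x ^ 2)) := by positivity
      linarith)
    simp only [LPsi_self] at this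
    linarith
  · have := mono_of_hasDeriv h hc.continuousOn (fun x _ => hd x) (fun x hx' => by
      rw [hx]
      have h1 : 0 ≤ lam - x := by linarith [hx'.2]
      have : 0 ≤ (lam - x) * (x ^ 2 / (1 + x ^ 2)) := by positivity
      linarith)
    simp only [LPsi_self] at this
    linarith

theorem LPsi_lower (lam w W : ℝ) (hl : |lam| ≤ W) (hw : |w| ≤ W) :
    (w - lam) ^ 2 / (2 * (1 + W ^ 2)) ≤ LPsi lam w := by
  have hW : 0 < 1 + W ^ 2 := by positivity
  have hd : ∀ x, HasDerivAt (fun x => LPsi lam x - (x - lam) ^ 2 / (2 * (1 + W ^ 2)))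
      ((x - lam) / (1 + x ^ 2) - (x - lam) / (1 + W ^ 2)) x := fun x => by
    refine ((LPsi_hasDeriv lam x).sub
      ((((hasDerivAt_id x).sub_const lam).pow 2).div_const (2 * (1 + W ^ 2)))).congr_deriv ?_
    simp
    field_simp
  have hc : Continuous (fun x => LPsi lam x - (x - lam) ^ 2 / (2 * (1 + W ^ 2))) :=
    continuous_iff_continuousAt.2 fun x => (hd x).continuousAt
  have hx : ∀ x, |x| ≤ W → 0 ≤ 1 / (1 + x ^ 2) - 1 / (1 + W ^ 2) := by
    intro x hx
    have : x ^ 2 ≤ W ^ 2 := by rw [← sq_abs]; gcongr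
    have : 1 / (1 + W ^ 2) ≤ 1 / (1 + x ^ 2) := by gcongr
    linarith
  have he : ∀ x, (x - lam) / (1 + x ^ 2) - (x - lam) / (1 + W ^ 2) =
    (x - lam) * (1 / (1 + x ^ 2) - 1 / (1 + W ^ 2)) := fun x => by ring
  rw [abs_le] at hl hw
  rcases le_total lam w with h | h
  · have := mono_of_hasDeriv h hc.continuousOn (fun x _ => hd x) (fun x hx' => by
      rw [he]
      have h1 : 0 ≤ x - lam := by linarith [hx'.1]
      exact mul_nonneg h1 (hx x (abs_le.2 ⟨by linarith [hx'.1], by linarith [hx'.2]⟩)))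
    simp only [LPsi_self] at this
    simp at this
    linarith
  · have := anti_of_hasDeriv h hc.continuousOn (fun x _ => hd x) (fun x hx' => by
      rw [he]
      have h1 : x - lam ≤ 0 := by linarith [hx'.2]
      exact mul_nonpos_of_nonpos_of_nonneg h1
        (hx x (abs_le.2 ⟨by linarith [hx'.1], by linarith [hx'.2]⟩)))
    simp only [LPsi_self] at this
    simp at this
    linarith

theorem LPsi_nonneg (lam w : ℝ) : 0 ≤ LPsi lam w := by
  refine le_trans ?_ (LPsi_lower lam w (max |lam| |w|) (le_max_left _ _) (le_max_right _ _))
  positivity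

theorem LPhi_upper (Q lam φ : ℝ) (hQ : 0 ≤ Q) (hl : 0 < lam) (hφ : 0 < φ) :
    LPhi Q lam φ ≤ Q * (φ - lam) ^ 2 / (lam * φ) := by
  have hx : 0 < φ / lam := by positivity
  have h1 := Real.one_sub_inv_le_log_of_pos hx
  have h2 : φ / lam - 1 - log (φ / lam) ≤ φ / lam - 2 + (φ / lam)⁻¹ := by linarith
  calc LPhi Q lam φ ≤ Q * (φ / lam - 2 + (φ / lam)⁻¹) := by unfold LPhi; gcongr
    _ = _ := by field_simp; ring

theorem LPhi_lower (Q lam φ : ℝ) (hQ : 0 ≤ Q) (hl : 0 < lam) (hφ : 0 < φ) :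
    Q * (√(φ / lam) - 1) ^ 2 ≤ LPhi Q lam φ := by
  have hx : 0 < φ / lam := by positivity
  set s := √(φ / lam) with hs
  have hsp : 0 < s := Real.sqrt_pos.2 hx
  have hs2 : s ^ 2 = φ / lam := Real.sq_sqrt hx.le
  have h1 := Real.log_le_sub_one_of_pos hsp
  unfold LPhi
  rw [← hs2, Real.log_pow]
  push_cast
  gcongr
  nlinarith

theorem LPhi_nonneg (Q lam φ : ℝ) (hQ : 0 ≤ Q) (hl : 0 < lam) (hφ : 0 < φ) :
    0 ≤ LPhi Q lam φ := le_trans (by positivity) (LPhi_lower Q lam φ hQ hl hφ)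

theorem Lyap_nonneg (Q lam φ w : ℝ) (hQ : 0 ≤ Q) (hl : 0 < lam) (hφ : 0 < φ) :
    0 ≤ Lyap Q lam φ w := add_nonneg (LPhi_nonneg Q lam φ hQ hl hφ) (LPsi_nonneg lam w)

theorem Lyap_coercive (Q lam E : ℝ) (hQ : 1 ≤ Q) (hl : 0 < lam) :
    ∃ φ1 φ2 W M : ℝ, 0 < φ1 ∧ 0 < φ2 ∧ 0 < M ∧ ∀ φ w, 0 < φ → Lyap Q lam φ w ≤ E →
      φ1 ≤ φ ∧ φ ≤ φ2 ∧ |w| ≤ W ∧ (φ - lam) ^ 2 + (w - lam) ^ 2 ≤ M * Lyap Q lam φ w := by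
  set E' := max E 0 with hE'
  have hE0 : 0 ≤ E' := le_max_right _ _
  set W := max lam (exp (2 * E' + log (1 + lam ^ 2) + 2 * lam * π)) with hW
  have hWp : 0 < W := lt_of_lt_of_le hl (le_max_left _ _)
  set φ2 := lam * (2 * (E' + 1)) with hφ2
  have hφ2p : 0 < φ2 := by positivity
  refine ⟨lam * exp (-1 - E'), φ2, W, 2 * lam * (φ2 + lam) + 2 * (1 + W ^ 2), by positivity,
    hφ2p, by positivity, ?_⟩
  intro φ w hφ hE
  have hQ0 : 0 ≤ Q := by linarith
  have hx : 0 < φ / lam := by positivity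
  have hEE : Lyap Q lam φ w ≤ E' := hE.trans (le_max_left _ _)
  have h1 := LPhi_nonneg Q lam φ hQ0 hl hφ
  have h2 := LPsi_nonneg lam w
  have h3 : LPhi Q lam φ ≤ E' := by unfold Lyap at hEE; linarith
  have h4 : LPsi lam w ≤ E' := by unfold Lyap at hEE; linarith
  have h5 : φ / lam - 1 - log (φ / lam) ≤ E' := by
    have h0 : 0 ≤ φ / lam - 1 - log (φ / lam) := by
      have := Real.log_le_sub_one_of_pos hx
      linarith
    unfold LPhi at h3
    nlinarith
  have a1 : lam * exp (-1 - E') ≤ φ := by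
    have : exp (-1 - E') ≤ φ / lam := by
      rw [← Real.le_log_iff_exp_le hx]; linarith
    rw [le_div_iff₀ hl] at this
    linarith
  have a2 : φ ≤ φ2 := by
    have h6 := Real.log_le_sub_one_of_pos (show 0 < φ / lam / 2 by positivity)
    rw [Real.log_div hx.ne' (by norm_num)] at h6
    have h7 := Real.log_le_sub_one_of_pos (show (0:ℝ) < 2 by norm_num)
    have : φ / lam ≤ 2 * (E' + 1) := by linarith
    rw [div_le_iff₀ hl] at this
    rw [hφ2]; linarith
  have a3 : |w| ≤ W := by
    have h6 : log (1 + w ^ 2) ≤ 2 * E' + log (1 + lam ^ 2) + 2 * lam * π := by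
      have h7 := Real.arctan_lt_pi_div_two w
      have h8 := Real.neg_pi_div_two_lt_arctan lam
      have : lam * (arctan w - arctan lam) ≤ lam * π := by gcongr; linarith
      unfold LPsi at h4
      linarith
    rw [Real.log_le_iff_le_exp (by positivity)] at h6
    have h7 : 1 + w ^ 2 ≤ W := h6.trans (le_max_right _ _)
    have h8 : |w| ≤ 1 + w ^ 2 := by
      rw [← sq_abs]; nlinarith [sq_nonneg (|w| - 1), abs_nonneg w]
    exact h8.trans h7
  refine ⟨a1, a2, a3, ?_⟩
  have b1 : (w - lam) ^ 2 ≤ 2 * (1 + W ^ 2) * LPsi lam w := by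
    have := LPsi_lower lam w W (by rw [abs_of_pos hl]; exact le_max_left _ _) a3
    rw [div_le_iff₀ (by positivity)] at this
    linarith
  have b2 : (φ - lam) ^ 2 ≤ 2 * lam * (φ2 + lam) * LPhi Q lam φ := by
    have h6 := LPhi_lower Q lam φ hQ0 hl hφ
    set s := √(φ / lam) with hs
    have hsp : 0 < s := Real.sqrt_pos.2 hx
    have hs2 : s ^ 2 = φ / lam := Real.sq_sqrt hx.le
    have hφs : φ = lam * s ^ 2 := by rw [hs2]; field_simp
    have h7 : (s - 1) ^ 2 ≤ LPhi Q lam φ := by nlinarith [sq_nonneg (s - 1)]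
    have h8 : (s + 1) ^ 2 ≤ 2 * (s ^ 2 + 1) := by nlinarith [sq_nonneg (s - 1)]
    have h9 : lam * (s + 1) ^ 2 ≤ 2 * (φ2 + lam) := by nlinarith
    calc (φ - lam) ^ 2 = lam * (lam * (s + 1) ^ 2) * (s - 1) ^ 2 := by rw [hφs]; ring
      _ ≤ lam * (2 * (φ2 + lam)) * LPhi Q lam φ := by gcongr
      _ = _ := by ring
  unfold Lyap
  have c1 : 0 ≤ 2 * (1 + W ^ 2) * LPhi Q lam φ := by positivity
  have c2 : 0 ≤ 2 * lam * (φ2 + lam) * LPsi lam w := by positivity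
  nlinarith

theorem Lyap_hasDeriv (P Q lam r2 : ℝ) (hl : 0 < lam) (hQ : Q = P * lam ^ 2) (φ v : ℝ → ℝ) (τ : ℝ)
    (hφ : 0 < φ τ) (h1 : HasDerivAt φ (v τ - φ τ) τ)
    (h2 : HasDerivAt v ((1 + v τ ^ 2) * (Q / φ τ - P * v τ + r2 / 2 * (v τ - φ τ))) τ) :
    HasDerivAt (fun x => Lyap Q lam (φ x) (v x))
      (- (Q * (φ τ - lam) ^ 2 / (lam * φ τ)) - P * (v τ - lam) ^ 2
        + r2 / 2 * ((v τ - lam) * (v τ - φ τ))) τ := by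
  have a1 := (LPhi_hasDeriv Q lam (φ τ) hl hφ).comp τ h1
  have a2 := (LPsi_hasDeriv lam (v τ)).comp τ h2
  refine HasDerivAt.congr_deriv (f := fun x => Lyap Q lam (φ x) (v x)) (a1.add a2) ?_
  have : 0 < 1 + v τ ^ 2 := by positivity
  rw [hQ]
  field_simp
  ring

theorem trap {s t c m Ebar : ℝ} {φ E E' : ℝ → ℝ} (hst : s ≤ t) (hφ : Continuous φ)
    (hEc : ∀ x, 0 < φ x → ContinuousAt E x) (hm : 0 < m) (hφs : m < φ s)
    (hin : ∀ x ∈ Set.Icc s t, 0 < φ x → E x ≤ Ebar →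
      m < φ x ∧ HasDerivAt E (E' x) x ∧ E' x ≤ c * E x)
    (hlt : ∀ x ∈ Set.Icc s t, E s * exp (c * (x - s)) < Ebar) :
    ∀ x ∈ Set.Icc s t, m < φ x ∧ E x ≤ E s * exp (c * (x - s)) ∧ E x < Ebar := by
  have hs : E s < Ebar := by simpa using hlt s ⟨le_rfl, hst⟩
  have A : ∀ y ∈ Set.Icc s t, (∀ x ∈ Set.Icc s y, 0 < φ x) → E y < Ebar := by
    intro y hy hpos
    by_contra hcon
    have hcont : ContinuousOn E (Set.Icc s y) := fun x hx => (hEc x (hpos x hx)).continuousWithinAt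
    obtain ⟨x, hx, hx1, hx2⟩ := first_hit hy.1 hcont hs (not_lt.1 hcon)
    have := gronwall_le (f := E) (f' := E') (c := c) hx.1.le
      (hcont.mono (Set.Icc_subset_Icc_right hx.2))
      (fun u hu => (hin u ⟨hu.1.le, by linarith [hu.2, hx.2, hy.2]⟩
        (hpos u ⟨hu.1.le, by linarith [hu.2, hx.2]⟩) (hx2 u ⟨hu.1.le, hu.2⟩).le).2.1)
      (fun u hu => (hin u ⟨hu.1.le, by linarith [hu.2, hx.2, hy.2]⟩
        (hpos u ⟨hu.1.le, by linarith [hu.2, hx.2]⟩) (hx2 u ⟨hu.1.le, hu.2⟩).le).2.2)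
    have h2 := hlt x ⟨hx.1.le, hx.2.trans hy.2⟩
    linarith
  have B : ∀ y ∈ Set.Icc s t, m < φ y := by
    intro y hy
    by_contra hcon
    obtain ⟨x, hx, hx1, hx2⟩ := first_hit (f := fun x => - φ x) (c := -m) hy.1
      (by fun_prop) (by simpa using hφs) (by simpa using hcon)
    have hpos : ∀ u ∈ Set.Icc s x, 0 < φ u := by
      intro u hu
      rcases hu.2.lt_or_eq with h | h
      · have := hx2 u ⟨hu.1, h⟩
        linarith
      · rw [h]; linarith
    have hxt : x ∈ Set.Icc s t := ⟨hx.1.le, hx.2.trans hy.2⟩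
    have := (hin x hxt (hpos x ⟨hx.1.le, le_rfl⟩) (A x hxt hpos).le).1
    linarith
  have C : ∀ y ∈ Set.Icc s t, E y < Ebar := fun y hy =>
    A y hy fun x hx => hm.trans (B x ⟨hx.1, hx.2.trans hy.2⟩)
  intro y hy
  refine ⟨B y hy, ?_, C y hy⟩
  refine gronwall_le (f := E) (f' := E') (c := c) hy.1
    (fun x hx => (hEc x (hm.trans (B x ⟨hx.1, hx.2.trans hy.2⟩))).continuousWithinAt) ?_ ?_
  · intro u hu
    have hu' : u ∈ Set.Icc s t := ⟨hu.1.le, hu.2.le.trans hy.2⟩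
    exact (hin u hu' (hm.trans (B u hu')) (C u hu').le).2.1
  · intro u hu
    have hu' : u ∈ Set.Icc s t := ⟨hu.1.le, hu.2.le.trans hy.2⟩
    exact (hin u hu' (hm.trans (B u hu')) (C u hu').le).2.2

end LyapSec


section SetupSec

theorem rot_local (P Q lam : ℝ) (hl : 0 < lam) (hQ : Q = P * lam ^ 2)
    (h2 : 2 ≤ P + Q) (h5 : P + Q ≤ 5) (hm : (P + Q + 1) ^ 2 - 8 * (P + Q) ≤ -4) :
    ∃ ε > 0, ∀ φ v r2 : ℝ, |φ - lam| < ε → |v - lam| < ε → 0 ≤ r2 → r2 < ε →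
      ∀ z y : ℝ, -((1 + v ^ 2) * P * (1 + lam / φ)) * z ^ 2
        + ((1 + v ^ 2) * (r2 / 2 - P) - 1) * (z * y) - y ^ 2 ≤ -(1 / 52) * (z ^ 2 + y ^ 2) := by
  have c1 : ContinuousAt (fun x : ℝ × ℝ × ℝ => (1 + x.2.1 ^ 2) * P * (1 + lam / x.1))
      (lam, lam, 0) := by
    refine ContinuousAt.mul (by fun_prop) (continuousAt_const.add ?_)
    exact continuousAt_const.div continuousAt_fst hl.ne'
  have c2 : ContinuousAt (fun x : ℝ × ℝ × ℝ => (1 + x.2.1 ^ 2) * (x.2.2 / 2 - P) - 1)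
      (lam, lam, 0) := by fun_prop
  obtain ⟨e1, he1, H1⟩ := Metric.continuousAt_iff.1 c1 (1 / 10) (by norm_num)
  obtain ⟨e2, he2, H2⟩ := Metric.continuousAt_iff.1 c2 (1 / 10) (by norm_num)
  refine ⟨min e1 e2, lt_min he1 he2, fun φ v r2 hφ hv hr hr2 z y => ?_⟩
  have hdist : dist ((φ, v, r2) : ℝ × ℝ × ℝ) (lam, lam, 0) < min e1 e2 := by
    rw [Prod.dist_eq, Prod.dist_eq, Real.dist_eq, Real.dist_eq, Real.dist_eq]
    simp only [sub_zero, abs_of_nonneg hr]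
    exact max_lt hφ (max_lt hv hr2)
  have K1 := H1 (lt_of_lt_of_le hdist (min_le_left _ _))
  have K2 := H2 (lt_of_lt_of_le hdist (min_le_right _ _))
  rw [Real.dist_eq] at K1 K2
  simp only [div_self hl.ne'] at K1 K2
  set A := (1 + v ^ 2) * P * (1 + lam / φ) with hA
  set B := (1 + v ^ 2) * (r2 / 2 - P) - 1 with hB
  have hA0 : (1 + lam ^ 2) * P * (1 + 1) = 2 * (P + Q) := by rw [hQ]; ring
  have hB0 : (1 + lam ^ 2) * (0 / 2 - P) - 1 = - (P + Q + 1) := by rw [hQ]; ring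
  rw [hA0] at K1
  rw [hB0] at K2
  rw [abs_lt] at K1 K2
  generalize P + Q = n at *
  have hB2 : B ^ 2 ≤ (n + 1) ^ 2 + 13 / 10 := by nlinarith
  have hB3 : B ^ 2 ≤ 49 := by nlinarith
  have hA1 : B ^ 2 / 4 + 1 / 2 ≤ A := by nlinarith
  have e : 0 ≤ (51 / 52 * y - B / 2 * z) ^ 2 := sq_nonneg _
  nlinarith [sq_nonneg z, mul_nonneg (sub_nonneg.2 hB3) (sq_nonneg z),
    mul_nonneg (sub_nonneg.2 hA1) (sq_nonneg z)]

theorem exp_decay (A e : ℝ) (hA : 0 < A) (he : 0 < e) :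
    ∃ x : ℝ, 0 ≤ x ∧ ∀ y, x ≤ y → A * exp (-(1 / 2) * y) ≤ e := by
  refine ⟨2 * (A / e), by positivity, fun y hy => ?_⟩
  have h1 : A * exp (-(1 / 2) * y) ≤ A * exp (-(A / e)) := by
    gcongr
    linarith
  refine h1.trans ?_
  have h2 := Real.add_one_le_exp (A / e)
  rw [exp_neg]
  have h3 : A / e ≤ exp (A / e) := by linarith
  rw [div_le_iff₀ he] at h3
  rw [← div_eq_mul_inv, div_le_iff₀ (exp_pos _)]
  linarith

structure Setup (P : ℕ) (Q lam R : ℝ) where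
  U : ℝ → ℝ → ℝ
  w : ℝ → ℝ → ℝ
  φ : ℝ → ℝ → ℝ
  v : ℝ → ℝ → ℝ
  τ0 : ℝ
  τ1 : ℝ
  r0 : ℝ
  δ : ℝ
  m : ℝ
  W : ℝ
  c0 : ℝ
  hUc : Continuous (Function.uncurry U)
  hwc : Continuous (Function.uncurry w)
  hφc : Continuous (Function.uncurry φ)
  hvc : Continuous (Function.uncurry v)
  hU0 : ∀ a, U a 0 = 1
  hw0 : ∀ a, w a 0 = 0
  hU' : ∀ a ρ, HasDerivAt (U a) (w a ρ) ρ
  hode : ∀ a ρ, 0 < a → a ≤ δ → 0 < ρ → |w a ρ| < W → c0 < U a ρ →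
      HasDerivAt (w a) ((1 + w a ρ ^ 2) *
        ((a^2*ρ/2 - P/ρ) * w a ρ - a^2 * U a ρ / 2 + Q / U a ρ)) ρ
  hφ : ∀ a τ, U a (exp τ) = φ a τ * exp τ
  hv : ∀ a τ, w a (exp τ) = v a τ
  hδ : 0 < δ
  hr0 : 0 < r0
  hr0R : r0 ≤ R
  hm : 0 < m
  hml : m < lam / 2
  hW : 3 / 2 * lam + 2 ≤ W
  hc0 : 0 < c0
  hc0m : ∀ φ τ, τ0 ≤ τ → m < φ → c0 < φ * exp τ
  hτ01 : τ0 ≤ τ1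
  hδr : δ * exp τ1 ≤ r0
  dφ : ∀ a τ, HasDerivAt (φ a) (v a τ - φ a τ) τ
  dv : ∀ a τ, 0 < a → a ≤ δ → τ0 ≤ τ → |v a τ| < W → m < φ a τ →
    HasDerivAt (v a) ((1 + v a τ ^ 2) *
      (Q / φ a τ - P * v a τ + (a * exp τ) ^ 2 / 2 * (v a τ - φ a τ))) τ
  hinit : ∀ a ρ, 0 < a → a ≤ δ → 0 ≤ ρ → ρ ≤ exp τ0 →
    |w a ρ| < W ∧ c0 < U a ρ ∧ lam * ρ < U a ρ
  hvalid : ∀ a τ, 0 < a → a ≤ δ → τ0 ≤ τ → a * exp τ ≤ R → |v a τ| < W ∧ m < φ a τ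
  hend : ∀ a τ, 0 < a → a ≤ δ → a * exp τ = R → |φ a τ - lam| ≤ lam / 4 ∧ |v a τ - φ a τ| < 1 / R
  hrot : ∀ a τ, 0 < a → a ≤ δ → τ1 ≤ τ → a * exp τ ≤ r0 →
    ∀ z y : ℝ, -((1 + v a τ ^ 2) * P * (1 + lam / φ a τ)) * z ^ 2
        + ((1 + v a τ ^ 2) * ((a * exp τ) ^ 2 / 2 - P) - 1) * (z * y) - y ^ 2
          ≤ -(1 / 52) * (z ^ 2 + y ^ 2)

theorem setup_ineq1 (v l f : ℝ) : (v - l) * (v - f) ≤ 3 / 2 * (v - l) ^ 2 + (f - l) ^ 2 / 2 := by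
  nlinarith [sq_nonneg ((v - l) + (f - l))]

theorem setup_ineq2 (v l f : ℝ) : (v - l) * (v - f) ≤ 2 * ((f - l) ^ 2 + (v - l) ^ 2) := by
  nlinarith [sq_nonneg ((v - l) + (f - l)), sq_nonneg (f - l), sq_nonneg (v - l)]

theorem setup_ineq3 (S ra Y Z P F G X : ℝ) (u1 : F ≤ S) (u2 : G ≤ Y / 2) (u3 : 0 ≤ G)
    (hS0 : 0 ≤ S) (hS1 : ra * Z ≤ S) (hcr : ra / 2 * X ≤ ra / 2 * (3 / 2 * Y + Z / 2))
    (t1 : ra * Y ≤ 1 / 2 * Y) (t2 : Y ≤ P * Y) :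
    -S - P * Y + ra / 2 * X ≤ -(1 / 2) * (F + G) := by
  nlinarith

set_option maxHeartbeats 4000000 in
theorem setup_exists (P : ℕ) (hP : 1 ≤ P) (Q lam R : ℝ) (hQ1 : 1 ≤ Q) (hl : 0 < lam)
    (hl2 : lam ≤ 2) (hQ : Q = P * lam ^ 2) (hR : 1 ≤ R)
    (h2 : 2 ≤ P + Q) (h5 : P + Q ≤ 5) (hm : (P + Q + 1) ^ 2 - 8 * (P + Q) ≤ -4) :
    Nonempty (Setup P Q lam R) := by
  have hP1 : (1:ℝ) ≤ P := by exact_mod_cast hP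
  have hQ0 : 0 ≤ Q := by linarith
  obtain ⟨ρ0, hρ0⟩ : ∃ ρ0 : ℝ, ρ0 = 1 / (10 * (1 + 2 * Q)) := ⟨_, rfl⟩
  have hρp : 0 < ρ0 := by rw [hρ0]; positivity
  have hρle : ρ0 ≤ 1 / 10 := by
    have hρ0' : ρ0 * (1 + 2 * Q) = 1 / 10 := by rw [hρ0]; field_simp
    nlinarith
  obtain ⟨τ0, hτ0⟩ : ∃ τ0 : ℝ, exp τ0 = ρ0 := ⟨log ρ0, exp_log hρp⟩
  obtain ⟨E0, hE0⟩ : ∃ E0 : ℝ, E0 = Q * (2 / ρ0 + lam) ^ 2 / (lam * (1 / (2 * ρ0)))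
    + (1 / 2 + lam) ^ 2 / 2 := ⟨_, rfl⟩
  have hE0p : 0 < E0 := by rw [hE0]; positivity
  obtain ⟨φ1, φ2, W1, M, hφ1, hφ2, hM, hco⟩ := Lyap_coercive Q lam (E0 + 1) hQ1 hl
  obtain ⟨m, hm0, hm1, hm2, hm3⟩ : ∃ m : ℝ, 0 < m ∧ m < φ1 ∧ m < lam / 2 ∧ m < 1 / (2 * ρ0) := by
    refine ⟨min (φ1 / 2) (min (lam / 4) (1 / (4 * ρ0))), by positivity, ?_, ?_, ?_⟩
    · exact lt_of_le_of_lt (min_le_left _ _) (by linarith)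
    · exact lt_of_le_of_lt ((min_le_right _ _).trans (min_le_left _ _)) (by linarith)
    · refine lt_of_le_of_lt ((min_le_right _ _).trans (min_le_right _ _)) ?_
      gcongr
      norm_num
  obtain ⟨W0, hW1, hW2⟩ : ∃ W0 : ℝ, W1 < W0 ∧ 3 / 2 * lam + 2 ≤ W0 :=
    ⟨max (W1 + 1) (3 / 2 * lam + 2), lt_of_lt_of_le (by linarith) (le_max_left _ _),
      le_max_right _ _⟩
  have hW0 : 1 ≤ W0 := by linarith
  obtain ⟨c0, hc0, hc1, hc2⟩ : ∃ c0 : ℝ, 0 < c0 ∧ c0 ≤ 1 / 4 ∧ c0 ≤ m * ρ0 :=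
    ⟨min (1 / 4) (m * ρ0), by positivity, min_le_left _ _, min_le_right _ _⟩
  obtain ⟨U, w, hUc, hwc, hU0, hw0, hU', hode⟩ :=
    exists_family P Q W0 c0 hQ0 (by linarith) hc0
  obtain ⟨ε, hε, hrot⟩ := rot_local P Q lam hl hQ h2 h5 hm
  -- choice of r0
  obtain ⟨r0, hr0, hr01, hr02, hr03, hr04⟩ : ∃ r0 : ℝ, 0 < r0 ∧ r0 ≤ 1 ∧ r0 ^ 2 ≤ 1 / 2 ∧
      r0 ^ 2 ≤ Q / (lam * φ2) ∧ r0 ^ 2 < ε := by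
    obtain ⟨b, hb⟩ : ∃ b : ℝ, b = min (1 / 2) (min (Q / (lam * φ2)) (ε / 2)) := ⟨_, rfl⟩
    have hQp : 0 < Q := by linarith
    have hb0 : 0 < b := by rw [hb]; positivity
    have hb1 : b ≤ 1 / 2 := by rw [hb]; exact min_le_left _ _
    have hb2 : b ≤ Q / (lam * φ2) := by
      rw [hb]; exact (min_le_right _ _).trans (min_le_left _ _)
    have hb3 : b ≤ ε / 2 := by
      rw [hb]; exact (min_le_right _ _).trans (min_le_right _ _)
    have hbb : b ^ 2 ≤ b := by nlinarith
    exact ⟨b, hb0, by linarith, by linarith, by linarith, by linarith⟩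
  obtain ⟨C, hC⟩ : ∃ C : ℝ, C = R ^ 2 * M := ⟨_, rfl⟩
  have hCp : 0 < C := by rw [hC]; positivity
  obtain ⟨d, hd0, hd1, hd2⟩ : ∃ d : ℝ, 0 < d ∧ d ≤ lam / 4 ∧ d ≤ 1 / (4 * R) :=
    ⟨min (lam / 4) (1 / (4 * R)), by positivity, min_le_left _ _, min_le_right _ _⟩
  obtain ⟨e1, he1, he1a, he1b⟩ : ∃ e1 : ℝ, 0 < e1 ∧ M * e1 ≤ d ^ 2 ∧ e1 ≤ 1 / 2 := by
    refine ⟨min (d ^ 2 / M) (1 / 2), by positivity, ?_, min_le_right _ _⟩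
    calc M * min (d ^ 2 / M) (1 / 2) ≤ M * (d ^ 2 / M) := by gcongr; exact min_le_left _ _
      _ = d ^ 2 := by field_simp
  obtain ⟨e2, he2, he2a⟩ : ∃ e2 : ℝ, 0 < e2 ∧ M * e2 = (ε / 2) ^ 2 :=
    ⟨(ε / 2) ^ 2 / M, by positivity, by field_simp⟩
  obtain ⟨x1, hx1, Hx1⟩ := exp_decay E0 e2 hE0p he2
  obtain ⟨x2, hx2, Hx2⟩ := exp_decay (E0 * exp (C * (log R - log r0))) e1 (by positivity) he1
  obtain ⟨δ, hδ, hδ1, hδ2, hδ3⟩ : ∃ δ : ℝ, 0 < δ ∧ δ ≤ 1 ∧ δ * exp (τ0 + x1) ≤ r0 ∧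
      δ * exp (τ0 + x2) ≤ r0 := by
    refine ⟨min 1 (min (r0 / exp (τ0 + x1)) (r0 / exp (τ0 + x2))), by positivity,
      min_le_left _ _, ?_, ?_⟩
    · rw [← le_div_iff₀ (exp_pos _)]
      exact (min_le_right _ _).trans (min_le_left _ _)
    · rw [← le_div_iff₀ (exp_pos _)]
      exact (min_le_right _ _).trans (min_le_right _ _)
  -- logarithmic variables
  obtain ⟨φ, hφ⟩ : ∃ φ : ℝ → ℝ → ℝ, φ = fun a τ => U a (exp τ) * exp (-τ) := ⟨_, rfl⟩
  obtain ⟨v, hv⟩ : ∃ v : ℝ → ℝ → ℝ, v = fun a τ => w a (exp τ) := ⟨_, rfl⟩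
  have hφU : ∀ a τ, U a (exp τ) = φ a τ * exp τ := fun a τ => by
    rw [hφ]; simp only [mul_assoc, ← exp_add, neg_add_cancel, exp_zero, mul_one]
  have hφc : Continuous (Function.uncurry φ) := by
    rw [hφ]
    have : Continuous fun p : ℝ × ℝ => Function.uncurry U (p.1, exp p.2) :=
      hUc.comp (by fun_prop)
    exact this.mul (by fun_prop)
  have hvc : Continuous (Function.uncurry v) := by
    rw [hv]
    exact (hwc.comp (by fun_prop : Continuous fun p : ℝ × ℝ => (p.1, exp p.2)) :)
  have hvw : ∀ a τ, w a (exp τ) = v a τ := fun a τ => by rw [hv]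
  have dφ : ∀ a τ, HasDerivAt (φ a) (v a τ - φ a τ) τ := by
    intro a τ
    have h1 := (hU' a (exp τ)).comp τ (Real.hasDerivAt_exp τ)
    have h2 : HasDerivAt (fun τ : ℝ => exp (-τ)) (exp (-τ) * (-1)) τ :=
      ((hasDerivAt_id τ).neg).exp
    rw [hφ, hv]
    refine HasDerivAt.congr_deriv (f := fun τ => U a (exp τ) * exp (-τ)) (h1.mul h2) ?_
    have : exp τ * exp (-τ) = 1 := by rw [← exp_add]; simp
    simp only [Function.comp]
    linear_combination (w a (exp τ)) * this
  have hcm : ∀ φ τ : ℝ, τ0 ≤ τ → m < φ → c0 < φ * exp τ := by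
    intro φ τ hτ hφ
    have h1 : ρ0 ≤ exp τ := by rw [← hτ0]; gcongr
    calc c0 ≤ m * ρ0 := hc2
      _ < φ * ρ0 := by gcongr
      _ ≤ φ * exp τ := by
        have : 0 < φ := hm0.trans hφ
        gcongr
  have dv : ∀ a τ, 0 < a → a ≤ δ → τ0 ≤ τ → |v a τ| < W0 → m < φ a τ →
      HasDerivAt (v a) ((1 + v a τ ^ 2) *
      (Q / φ a τ - P * v a τ + (a * exp τ) ^ 2 / 2 * (v a τ - φ a τ))) τ := by
    intro a τ ha haδ hτ h1 h2
    have hU := hcm _ _ hτ h2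
    rw [← hφU] at hU
    rw [← hvw] at h1
    have h3 := (hode a (exp τ) (pow_le_one₀ ha.le (haδ.trans hδ1)) (exp_pos τ) h1 hU).comp τ (Real.hasDerivAt_exp τ)
    have h4 : v a = (w a) ∘ exp := by rw [hv]; rfl
    have hφp : 0 < φ a τ := hm0.trans h2
    rw [h4]
    refine h3.congr_deriv ?_
    rw [hφU]
    simp only [Function.comp]
    have := exp_pos τ
    field_simp
    ring
  have hib : ∀ a, 0 < a → a ≤ δ → ∀ ρ ∈ Set.Icc 0 ρ0, |w a ρ| ≤ 1 / 2 ∧ |U a ρ - 1| ≤ 1 / 4 := by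
    intro a ha haδ
    have ha2 : a ^ 2 ≤ 1 := pow_le_one₀ ha.le (haδ.trans hδ1)
    exact init_bound P Q W0 c0 a hQ0 hW0 hc1 ha2 (U a) (w a)
      (hwc.comp (by fun_prop : Continuous fun ρ : ℝ => (a, ρ))) (hU0 a) (hw0 a) (hU' a)
      (fun ρ => hode a ρ ha2) ρ0 hρ0
  have hinitφ : ∀ a, 0 < a → a ≤ δ → 1 / (2 * ρ0) ≤ φ a τ0 ∧ Lyap Q lam (φ a τ0) (v a τ0) ≤ E0 := by
    intro a ha haδ
    obtain ⟨b1, b2⟩ := hib a ha haδ ρ0 ⟨hρp.le, le_rfl⟩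
    have e1 := hφU a τ0
    have e2 := hvw a τ0
    rw [hτ0] at e1 e2
    rw [e1] at b2
    rw [e2] at b1
    rw [abs_le] at b2
    have c1 : 1 / (2 * ρ0) ≤ φ a τ0 := by
      rw [div_le_iff₀ (by positivity)]; linarith
    have c2 : φ a τ0 ≤ 2 / ρ0 := by
      rw [le_div_iff₀ (by positivity)]; linarith
    have c0 : 0 < φ a τ0 := lt_of_lt_of_le (by positivity) c1
    refine ⟨c1, ?_⟩
    unfold Lyap
    rw [hE0]
    have d1 := LPhi_upper Q lam (φ a τ0) hQ0 hl c0
    have d2 := LPsi_upper lam (v a τ0)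
    refine add_le_add (d1.trans ?_) (d2.trans ?_)
    · have : (φ a τ0 - lam) ^ 2 ≤ (2 / ρ0 + lam) ^ 2 := by
        apply sq_le_sq'
        · have : 0 < 2 / ρ0 := by positivity
          linarith
        · linarith
      gcongr
    · have : (v a τ0 - lam) ^ 2 ≤ (1 / 2 + lam) ^ 2 := by
        rw [abs_le] at b1
        apply sq_le_sq' <;> linarith
      gcongr
  have hvca : ∀ a, Continuous (v a) := fun a => hvc.comp (by fun_prop : Continuous fun ρ : ℝ => (a, ρ))
  have hφca : ∀ a, Continuous (φ a) := fun a => hφc.comp (by fun_prop : Continuous fun ρ : ℝ => (a, ρ))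
  have hLc : ∀ a x, 0 < φ a x → ContinuousAt (fun x => Lyap Q lam (φ a x) (v a x)) x := by
    intro a x hx
    have h1 : ContinuousAt (fun x => LPhi Q lam (φ a x)) x :=
      ContinuousAt.comp (f := φ a) (LPhi_hasDeriv Q lam (φ a x) hl hx).continuousAt (hφca a).continuousAt
    have h2 : ContinuousAt (fun x => LPsi lam (v a x)) x :=
      ContinuousAt.comp (f := v a) (LPsi_hasDeriv lam (v a x)).continuousAt (hvca a).continuousAt
    exact h1.add h2
  -- main estimate
  have main : ∀ a, 0 < a → a ≤ δ → ∀ τ, τ0 ≤ τ →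
      (a * exp τ ≤ r0 → m < φ a τ ∧ Lyap Q lam (φ a τ) (v a τ) ≤ E0 * exp (-(1/2) * (τ - τ0)) ∧
        Lyap Q lam (φ a τ) (v a τ) < E0 + 1) ∧
      (r0 ≤ a * exp τ → a * exp τ ≤ R → m < φ a τ ∧ Lyap Q lam (φ a τ) (v a τ) ≤ e1) := by
    intro a ha haδ
    obtain ⟨hφ0, hL0⟩ := hinitφ a ha haδ
    obtain ⟨τr, hτr⟩ : ∃ τr : ℝ, a * exp τr = r0 :=
      ⟨log (r0 / a), by rw [exp_log (by positivity)]; field_simp⟩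
    have hlogr : log r0 = log a + τr := by rw [← hτr, log_mul ha.ne' (exp_pos _).ne', log_exp]
    have hτr0 : τ0 + x2 ≤ τr := by
      by_contra hcon
      have : exp τr < exp (τ0 + x2) := exp_lt_exp.2 (not_le.1 hcon)
      have : a * exp τr < δ * exp (τ0 + x2) := by
        calc a * exp τr < a * exp (τ0 + x2) := by gcongr
          _ ≤ _ := by gcongr
      linarith
    have hder : ∀ x, τ0 ≤ x → 0 < φ a x → Lyap Q lam (φ a x) (v a x) ≤ E0 + 1 →
        m < φ a x ∧ HasDerivAt (fun x => Lyap Q lam (φ a x) (v a x))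
        (- (Q * (φ a x - lam) ^ 2 / (lam * φ a x)) - P * (v a x - lam) ^ 2
        + (a * exp x) ^ 2 / 2 * ((v a x - lam) * (v a x - φ a x))) x := by
      intro x hx hφx hLx
      obtain ⟨k1, k2, k3, k4⟩ := hco _ _ hφx hLx
      have hmx : m < φ a x := by linarith
      exact ⟨hmx, Lyap_hasDeriv P Q lam _ hl hQ (φ a) (v a) x hφx (dφ a x)
        (dv a x ha haδ hx (by linarith) hmx)⟩
    have hmono : ∀ x y : ℝ, x ≤ y → a * exp x ≤ a * exp y := fun x y h => by gcongr
    have ph1 := trap (s := τ0) (t := τr) (c := -(1/2)) (m := m) (Ebar := E0 + 1) (φ := φ a)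
      (E := fun x => Lyap Q lam (φ a x) (v a x)) (E' := fun x =>
        (- (Q * (φ a x - lam) ^ 2 / (lam * φ a x)) - P * (v a x - lam) ^ 2
        + (a * exp x) ^ 2 / 2 * ((v a x - lam) * (v a x - φ a x)))) (by linarith) (hφca a) (hLc a) hm0
      (by linarith) ?_ ?_
    rotate_left
    · intro x hx hφx hLx
      obtain ⟨k1, k2, k3, k4⟩ := hco _ _ hφx hLx
      obtain ⟨g1, g2⟩ := hder x hx.1 hφx hLx
      refine ⟨g1, g2, ?_⟩
      have hr : a * exp x ≤ r0 := by rw [← hτr]; exact hmono _ _ hx.2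
      have hrr : (a * exp x) ^ 2 ≤ r0 ^ 2 := by gcongr
      have u1 := LPhi_upper Q lam (φ a x) hQ0 hl hφx
      have u2 := LPsi_upper lam (v a x)
      have u3 := LPsi_nonneg lam (v a x)
      set ra := (a * exp x) ^ 2 with hra
      have hra0 : 0 ≤ ra := by positivity
      set S := Q * (φ a x - lam) ^ 2 / (lam * φ a x) with hS
      have hS1 : ra * (φ a x - lam) ^ 2 ≤ S := by
        have : ra ≤ Q / (lam * φ a x) := by
          refine (hrr.trans hr03).trans ?_
          gcongr
        calc ra * (φ a x - lam) ^ 2 ≤ Q / (lam * φ a x) * (φ a x - lam) ^ 2 := by gcongr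
          _ = S := by rw [hS]; ring
      have hcr : ra / 2 * ((v a x - lam) * (v a x - φ a x)) ≤
          ra / 2 * (3 / 2 * (v a x - lam) ^ 2 + (φ a x - lam) ^ 2 / 2) := by
        exact mul_le_mul_of_nonneg_left (setup_ineq1 _ _ _) (by positivity)
      have hra2 : ra ≤ 1 / 2 := hrr.trans hr02
      have hY := sq_nonneg (v a x - lam)
      have t1 : ra * (v a x - lam) ^ 2 ≤ 1 / 2 * (v a x - lam) ^ 2 := by gcongr
      have t2 : (v a x - lam) ^ 2 ≤ P * (v a x - lam) ^ 2 := le_mul_of_one_le_left hY hP1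
      simp only [Lyap]
      have hS0 : 0 ≤ S := by positivity
      exact setup_ineq3 _ _ _ _ _ _ _ _ u1 u2 u3 hS0 hS1 hcr t1 t2
    · intro x hx
      have : exp (-(1/2) * (x - τ0)) ≤ 1 := by
        rw [exp_le_one_iff]; have h9 := hx.1; linarith only [h9]
      have h0 : 0 < exp (-(1/2) * (x - τ0)) := exp_pos _
      have : Lyap Q lam (φ a τ0) (v a τ0) * exp (-(1/2) * (x - τ0)) ≤ E0 * 1 := by gcongr
      linarith
    have Hphr : Lyap Q lam (φ a τr) (v a τr) ≤ E0 * exp (-(1/2) * (τr - τ0)) := by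
      have := (ph1 τr ⟨by linarith, le_rfl⟩).2.1
      refine this.trans ?_
      gcongr
    obtain ⟨T, hT⟩ : ∃ T : ℝ, a * exp T = R :=
      ⟨log (R / a), by rw [exp_log (by positivity)]; field_simp⟩
    have hlogR : log R = log a + T := by rw [← hT, log_mul ha.ne' (exp_pos _).ne', log_exp]
    have hle : ∀ x y : ℝ, a * exp x ≤ a * exp y → x ≤ y := fun x y h => by
      have := le_of_mul_le_mul_left h ha
      exact exp_le_exp.1 this
    have hτrT : τr ≤ T := hle _ _ (by rw [hτr, hT]; linarith)
    have hgrow : ∀ x ∈ Set.Icc τr T,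
        Lyap Q lam (φ a τr) (v a τr) * exp (C * (x - τr)) ≤ e1 := by
      intro x hx
      calc Lyap Q lam (φ a τr) (v a τr) * exp (C * (x - τr))
          ≤ (E0 * exp (-(1/2) * (τr - τ0))) * exp (C * (log R - log r0)) := by
            have : x - τr ≤ log R - log r0 := by rw [hlogR, hlogr]; linarith [hx.2]
            gcongr
        _ = (E0 * exp (C * (log R - log r0))) * exp (-(1/2) * (τr - τ0)) := by ring
        _ ≤ e1 := Hx2 _ (by linarith)
    have ph2 := trap (s := τr) (t := T) (c := C) (m := m) (Ebar := E0 + 1) (φ := φ a)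
      (E := fun x => Lyap Q lam (φ a x) (v a x)) (E' := fun x =>
        (- (Q * (φ a x - lam) ^ 2 / (lam * φ a x)) - P * (v a x - lam) ^ 2
        + (a * exp x) ^ 2 / 2 * ((v a x - lam) * (v a x - φ a x)))) hτrT (hφca a) (hLc a) hm0
      ((ph1 τr ⟨by linarith, le_rfl⟩).1) ?_ ?_
    rotate_left
    · intro x hx hφx hLx
      obtain ⟨k1, k2, k3, k4⟩ := hco _ _ hφx hLx
      obtain ⟨g1, g2⟩ := hder x (by linarith [hx.1]) hφx hLx
      refine ⟨g1, g2, ?_⟩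
      have hr : a * exp x ≤ R := by rw [← hT]; exact hmono _ _ hx.2
      have hrr : (a * exp x) ^ 2 ≤ R ^ 2 := by gcongr
      set ra := (a * exp x) ^ 2 with hra
      have hra0 : 0 ≤ ra := by positivity
      have hS0 : 0 ≤ Q * (φ a x - lam) ^ 2 / (lam * φ a x) := by positivity
      have hcr : ra / 2 * ((v a x - lam) * (v a x - φ a x)) ≤
          ra / 2 * (2 * ((φ a x - lam) ^ 2 + (v a x - lam) ^ 2)) := by
        exact mul_le_mul_of_nonneg_left (setup_ineq2 _ _ _) (by positivity)
      have hsum : ra / 2 * (2 * ((φ a x - lam) ^ 2 + (v a x - lam) ^ 2)) ≤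
          C * Lyap Q lam (φ a x) (v a x) := by
        calc ra / 2 * (2 * ((φ a x - lam) ^ 2 + (v a x - lam) ^ 2))
            = ra * ((φ a x - lam) ^ 2 + (v a x - lam) ^ 2) := by ring
          _ ≤ R ^ 2 * (M * Lyap Q lam (φ a x) (v a x)) := by gcongr
          _ = _ := by rw [hC]; ring
      have : 0 ≤ P * (v a x - lam) ^ 2 := by positivity
      linarith
    · intro x hx
      have := hgrow x hx
      linarith
    intro τ hτ
    refine ⟨fun h => ?_, fun h1 h2 => ?_⟩
    · obtain ⟨q1, q2, q3⟩ := ph1 τ ⟨hτ, hle _ _ (by rw [hτr]; exact h)⟩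
      refine ⟨q1, q2.trans ?_, q3⟩
      gcongr
    · have hτ' : τ ∈ Set.Icc τr T := ⟨hle _ _ (by rw [hτr]; exact h1), hle _ _ (by rw [hT]; exact h2)⟩
      obtain ⟨q1, q2, q3⟩ := ph2 τ hτ'
      exact ⟨q1, q2.trans (hgrow τ hτ')⟩
  have near : ∀ φ v d e : ℝ, 0 < d → 0 < φ → Lyap Q lam φ v ≤ e → e ≤ E0 + 1 → M * e ≤ d ^ 2 →
      |φ - lam| ≤ d ∧ |v - lam| ≤ d := by
    intro φ v d e hd hφ hL he hMe
    obtain ⟨k1, k2, k3, k4⟩ := hco _ _ hφ (hL.trans he)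
    have h1 : M * Lyap Q lam φ v ≤ d ^ 2 := le_trans (by gcongr) hMe
    exact ⟨abs_le_of_sq_le_sq (by nlinarith [sq_nonneg (v - lam)]) hd.le,
      abs_le_of_sq_le_sq (by nlinarith [sq_nonneg (φ - lam)]) hd.le⟩
  refine ⟨⟨U, w, φ, v, τ0, τ0 + x1, r0, δ, m, W0, c0, hUc, hwc, hφc, hvc, hU0, hw0, hU', ?_, hφU, hvw,
    hδ, hr0, by linarith, hm0, hm2, hW2, hc0, hcm, by linarith, hδ2, dφ, dv, ?_, ?_, ?_, ?_⟩⟩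
  · intro a ρ ha haδ
    exact hode a ρ (pow_le_one₀ ha.le (haδ.trans hδ1))
  · intro a ρ ha haδ h0 h1
    rw [hτ0] at h1
    obtain ⟨b1, b2⟩ := hib a ha haδ ρ ⟨h0, h1⟩
    rw [abs_le] at b2
    have : lam * ρ ≤ 2 * (1 / 10) := by gcongr; linarith
    exact ⟨by linarith, by linarith, by linarith⟩
  · intro a τ ha haδ hτ hr
    obtain ⟨M1, M2⟩ := main a ha haδ τ hτ
    rcases le_total (a * exp τ) r0 with h | h
    · obtain ⟨q1, q2, q3⟩ := M1 h
      obtain ⟨k1, k2, k3, k4⟩ := hco _ _ (hm0.trans q1) q3.le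
      exact ⟨by linarith, q1⟩
    · obtain ⟨q1, q2⟩ := M2 h hr
      obtain ⟨k1, k2, k3, k4⟩ := hco _ (v a τ) (hm0.trans q1) (by linarith)
      exact ⟨by linarith, q1⟩
  · intro a τ ha haδ hr
    have hτ : τ0 ≤ τ := by
      by_contra hcon
      have : exp τ < exp τ0 := exp_lt_exp.2 (not_le.1 hcon)
      rw [hτ0] at this
      have h1 : a * exp τ ≤ 1 * exp τ := by
        have : a ≤ 1 := haδ.trans hδ1
        gcongr
      linarith
    obtain ⟨q1, q2⟩ := (main a ha haδ τ hτ).2 (by linarith) hr.le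
    obtain ⟨n1, n2⟩ := near _ _ d e1 hd0 (hm0.trans q1) q2 (by linarith) he1a
    refine ⟨n1.trans hd1, ?_⟩
    have : (1:ℝ) / R = 4 * (1 / (4 * R)) := by field_simp
    rw [this]
    rw [abs_le] at n1 n2
    rw [abs_lt]
    constructor <;> linarith
  · intro a τ ha haδ hτ hr
    obtain ⟨q1, q2, q3⟩ := (main a ha haδ τ (by linarith)).1 hr
    have q4 : Lyap Q lam (φ a τ) (v a τ) ≤ e2 := q2.trans (Hx1 _ (by linarith))
    have hmin : Lyap Q lam (φ a τ) (v a τ) ≤ min e2 (E0 + 1) := le_min q4 q3.le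
    obtain ⟨n1, n2⟩ := near _ _ (ε / 2) _ (by positivity) (hm0.trans q1) hmin (min_le_right _ _)
      (le_trans (by gcongr; exact min_le_left _ _) he2a.le)
    refine hrot (φ a τ) (v a τ) ((a * exp τ) ^ 2) (by linarith) (by linarith) (by positivity) ?_
    have : (a * exp τ) ^ 2 ≤ r0 ^ 2 := by
      have := exp_pos τ
      gcongr
    linarith

end SetupSec


section Abs

/-- growth lemma for the linear system -/
theorem lin_grow {z y A B : ℝ → ℝ} {s t : ℝ} (hst : s ≤ t)
    (hz : ∀ x ∈ Set.Icc s t, HasDerivAt z (y x) x)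
    (hy : ∀ x ∈ Set.Icc s t, HasDerivAt y (-A x * z x + B x * y x) x)
    (hA : ∀ x ∈ Set.Icc s t, 0 ≤ A x) (hB : ∀ x ∈ Set.Icc s t, 1 + A x ≤ B x)
    (hz0 : z s = 0) (hy0 : 0 < y s) : y s ≤ y t := by
  have hzc : ContinuousOn z (Set.Icc s t) := fun x hx => (hz x hx).continuousAt.continuousWithinAt
  have hyc : ContinuousOn y (Set.Icc s t) := fun x hx => (hy x hx).continuousAt.continuousWithinAt
  -- on an interval where D ≥ 0 we have z ≥ 0 and D increases
  have key : ∀ x ∈ Set.Icc s t, (∀ u ∈ Set.Ico s x, z u < y u) → 0 ≤ z x ∧ y s ≤ y x - z x := by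
    intro x hx hD
    have hsub : Set.Icc s x ⊆ Set.Icc s t := Set.Icc_subset_Icc_right hx.2
    have hzn : ∀ u ∈ Set.Icc s x, 0 ≤ z u := by
      intro u hu
      have := gronwall_ge (f := z) (f' := y) (c := 1) hu.1
        (hzc.mono ((Set.Icc_subset_Icc_right hu.2).trans hsub))
        (fun p hp => hz p ⟨hp.1.le, hp.2.le.trans (hu.2.trans hx.2)⟩)
        (fun p hp => by
          have := hD p ⟨hp.1.le, hp.2.trans_le hu.2⟩
          linarith)
      rw [hz0, zero_mul] at this
      exact this
    refine ⟨hzn x ⟨hx.1, le_rfl⟩, ?_⟩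
    have := mono_of_hasDeriv (f := fun u => y u - z u)
      (f' := fun u => (-A u * z u + B u * y u) - y u) hx.1
      ((hyc.mono hsub).sub (hzc.mono hsub))
      (fun p hp => (hy p ⟨hp.1.le, hp.2.le.trans hx.2⟩).sub (hz p ⟨hp.1.le, hp.2.le.trans hx.2⟩))
      (fun p hp => by
        have hp' : p ∈ Set.Icc s t := ⟨hp.1.le, hp.2.le.trans hx.2⟩
        have h1 := hD p ⟨hp.1.le, hp.2⟩
        have h2 := hzn p ⟨hp.1.le, hp.2.le⟩
        have h3 := hA p hp'
        have h4 := hB p hp'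
        have : (-A p * z p + B p * y p) - y p =
          (B p - 1) * (y p - z p) + (B p - 1 - A p) * z p := by ring
        rw [this]
        have h5 : 0 ≤ B p - 1 := by linarith
        have h6 : 0 ≤ B p - 1 - A p := by linarith
        have h7 : 0 ≤ y p - z p := by linarith
        positivity)
    simp only [hz0, sub_zero] at this
    exact this
  have hDpos : ∀ x ∈ Set.Icc s t, z x < y x := by
    intro x hx
    by_contra hcon
    obtain ⟨u, hu, hu1, hu2⟩ := first_hit (f := fun x => z x - y x) (c := 0) hx.1
      ((hzc.sub hyc).mono (Set.Icc_subset_Icc_right hx.2)) (by simp [hz0, hy0])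
      (by simpa using hcon)
    have := key u ⟨hu.1.le, hu.2.trans hx.2⟩ (fun p hp => by have := hu2 p hp; linarith)
    linarith [this.2]
  obtain ⟨k1, k2⟩ := key t ⟨hst, le_rfl⟩ (fun u hu => hDpos u ⟨hu.1, hu.2.le⟩)
  linarith

theorem lin_nonvan {z y A B : ℝ → ℝ} {s t : ℝ} (hst : s ≤ t)
    (hz : ∀ x ∈ Set.Icc s t, HasDerivAt z (y x) x)
    (hy : ∀ x ∈ Set.Icc s t, HasDerivAt y (-A x * z x + B x * y x) x)
    (hA : ContinuousOn A (Set.Icc s t)) (hB : ContinuousOn B (Set.Icc s t))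
    (h0 : 0 < z s) : 0 < z t ^ 2 + y t ^ 2 := by
  obtain ⟨KA, hKA⟩ := isCompact_Icc.exists_bound_of_continuousOn hA
  obtain ⟨KB, hKB⟩ := isCompact_Icc.exists_bound_of_continuousOn hB
  have hzc : ContinuousOn z (Set.Icc s t) := fun x hx => (hz x hx).continuousAt.continuousWithinAt
  have hyc : ContinuousOn y (Set.Icc s t) := fun x hx => (hy x hx).continuousAt.continuousWithinAt
  have := gronwall_ge (f := fun x => z x ^ 2 + y x ^ 2)
    (f' := fun x => 2 * z x * y x + 2 * y x * (-A x * z x + B x * y x))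
    (c := -(1 + KA + 2 * KB)) hst ((hzc.pow 2).add (hyc.pow 2))
    (fun x hx => by
      have hx' : x ∈ Set.Icc s t := ⟨hx.1.le, hx.2.le⟩
      refine (((hz x hx').pow 2).add ((hy x hx').pow 2)).congr_deriv ?_
      simp)
    (fun x hx => by
      have hx' : x ∈ Set.Icc s t := ⟨hx.1.le, hx.2.le⟩
      have a1 := hKA x hx'
      have a2 := hKB x hx'
      rw [Real.norm_eq_abs] at a1 a2
      have a3 := abs_nonneg (A x)
      have a4 := abs_nonneg (B x)
      have b1 : |2 * (z x * y x)| ≤ z x ^ 2 + y x ^ 2 := by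
        rw [abs_le]; constructor <;> nlinarith [sq_nonneg (z x - y x), sq_nonneg (z x + y x)]
      have b2 : |1 - A x| ≤ 1 + KA := by
        rw [abs_le] at a1 ⊢; constructor <;> linarith
      have b3 : |(1 - A x) * (2 * (z x * y x))| ≤ (1 + KA) * (z x ^ 2 + y x ^ 2) := by
        have : 0 ≤ 1 + KA := by linarith [a3.trans a1]
        rw [abs_mul]; gcongr
      have b4 : |2 * B x * y x ^ 2| ≤ 2 * KB * (z x ^ 2 + y x ^ 2) := by
        rw [abs_mul, abs_mul, abs_of_nonneg (sq_nonneg (y x)), abs_of_pos (show (0:ℝ) < 2 by norm_num)]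
        have : y x ^ 2 ≤ z x ^ 2 + y x ^ 2 := by nlinarith [sq_nonneg (z x)]
        have : 0 ≤ KB := a4.trans a2
        gcongr
      have b5 := (abs_le.1 b3).1
      have b6 := (abs_le.1 b4).1
      nlinarith)
  refine lt_of_lt_of_le ?_ this
  have : 0 < z s ^ 2 + y s ^ 2 := by positivity
  positivity

theorem angle_rep {z y z' y' ω : ℝ → ℝ} {s t : ℝ}
    (hz : ∀ x ∈ Set.Icc s t, HasDerivAt z (z' x) x)
    (hy : ∀ x ∈ Set.Icc s t, HasDerivAt y (y' x) x)
    (hω : ∀ x ∈ Set.Icc s t,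
      HasDerivAt ω ((z x * y' x - y x * z' x) / (z x ^ 2 + y x ^ 2)) x)
    (hn : ∀ x ∈ Set.Icc s t, 0 < z x ^ 2 + y x ^ 2) (h0 : 0 < z s)
    (hω0 : ω s = arctan (y s / z s)) :
    ∀ x ∈ Set.Icc s t, ∃ c > 0, z x = c * cos (ω x) ∧ y x = c * sin (ω x) := by
  have hzc : ContinuousOn z (Set.Icc s t) := fun x hx => (hz x hx).continuousAt.continuousWithinAt
  have hyc : ContinuousOn y (Set.Icc s t) := fun x hx => (hy x hx).continuousAt.continuousWithinAt
  have hωc : ContinuousOn ω (Set.Icc s t) := fun x hx => (hω x hx).continuousAt.continuousWithinAt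
  obtain ⟨d, hd⟩ : ∃ d : ℝ → ℝ, d = fun x => y x * cos (ω x) - z x * sin (ω x) := ⟨_, rfl⟩
  obtain ⟨c, hc⟩ : ∃ c : ℝ → ℝ, c = fun x => z x * cos (ω x) + y x * sin (ω x) := ⟨_, rfl⟩
  have hdc : ContinuousOn d (Set.Icc s t) := by
    rw [hd]
    exact (hyc.mul (continuous_cos.comp_continuousOn hωc)).sub
      (hzc.mul (continuous_sin.comp_continuousOn hωc))
  have hcc : ContinuousOn c (Set.Icc s t) := by
    rw [hc]
    exact (hzc.mul (continuous_cos.comp_continuousOn hωc)).add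
      (hyc.mul (continuous_sin.comp_continuousOn hωc))
  have hcos : 0 < cos (ω s) := by rw [hω0]; exact Real.cos_arctan_pos _
  have hsin : sin (ω s) = y s / z s * cos (ω s) := by
    rw [← Real.tan_mul_cos hcos.ne', hω0, Real.tan_arctan]
  have hd0 : d s = 0 := by
    rw [hd]; simp only; rw [hsin]; field_simp; ring
  have hc0 : 0 < c s := by
    rw [hc]; simp only; rw [hsin]
    have : 0 ≤ y s * (y s / z s * cos (ω s)) := by
      have : y s * (y s / z s * cos (ω s)) = y s ^ 2 / z s * cos (ω s) := by ring
      rw [this]; positivity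
    have : 0 < z s * cos (ω s) := by positivity
    linarith
  have hdz : ∀ x ∈ Set.Icc s t, d x = 0 := by
    intro x hx
    have := anti_of_hasDeriv (f := fun x => d x ^ 2 / (z x ^ 2 + y x ^ 2)) (f' := fun _ => 0) hx.1
      (ContinuousOn.mono ((hdc.pow 2).div ((hzc.pow 2).add (hyc.pow 2))
        (fun u hu => (hn u hu).ne')) (Set.Icc_subset_Icc_right hx.2))
      (fun u hu => by
        have hu' : u ∈ Set.Icc s t := ⟨hu.1.le, hu.2.le.trans hx.2⟩
        have h1 := hz u hu'
        have h2 := hy u hu'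
        have h3 := hω u hu'
        have hnu := hn u hu'
        have h4 := (h2.mul h3.cos).sub (h1.mul h3.sin)
        have h5 := ((h1.pow 2).add (h2.pow 2))
        have h6 := (h4.pow 2).div h5 hnu.ne'
        rw [hd]
        refine HasDerivAt.congr_deriv (f := fun x => (y x * cos (ω x) - z x * sin (ω x)) ^ 2 /
          (z x ^ 2 + y x ^ 2)) h6 ?_
        simp only [Pi.add_apply, Pi.pow_apply, Pi.sub_apply, Pi.mul_apply]
        field_simp
        simp
        ring)
      (fun _ _ => le_rfl)
    simp only [hd0] at this
    have hnx := hn x hx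
    have h7 : d x ^ 2 ≤ 0 := by
      rw [div_le_iff₀ hnx] at this
      simpa using this
    exact pow_eq_zero_iff (two_ne_zero) |>.1 (le_antisymm h7 (sq_nonneg _))
  have hsum : ∀ x, c x ^ 2 + d x ^ 2 = z x ^ 2 + y x ^ 2 := by
    intro x
    rw [hc, hd]
    have := Real.sin_sq_add_cos_sq (ω x)
    simp only
    linear_combination (z x ^ 2 + y x ^ 2) * this
  have hcpos : ∀ x ∈ Set.Icc s t, 0 < c x := by
    intro x hx
    by_contra hcon
    obtain ⟨u, hu, hu1, -⟩ := first_hit (f := fun x => - c x) (c := 0) hx.1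
      (hcc.neg.mono (Set.Icc_subset_Icc_right hx.2)) (by simpa using hc0) (by simpa using hcon)
    have hu' : u ∈ Set.Icc s t := ⟨hu.1.le, hu.2.trans hx.2⟩
    have h1 := hsum u
    have h2 := hn u hu'
    have h3 : c u = 0 := by linarith
    rw [hdz u hu', h3] at h1
    norm_num at h1
    linarith
  intro x hx
  refine ⟨c x, hcpos x hx, ?_, ?_⟩
  · have h1 := hdz x hx
    rw [hd] at h1
    rw [hc]
    simp only at h1 ⊢
    linear_combination (-z x) * Real.sin_sq_add_cos_sq (ω x) - sin (ω x) * h1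
  · have h1 := hdz x hx
    rw [hd] at h1
    rw [hc]
    simp only at h1 ⊢
    linear_combination (-y x) * Real.sin_sq_add_cos_sq (ω x) + cos (ω x) * h1

theorem right_lt_of_deriv_neg {f : ℝ → ℝ} {f' x : ℝ} (h : HasDerivAt f f' x) (hf : f' < 0) :
    ∀ᶠ u in nhdsWithin x (Set.Ioi x), f u < f x := by
  have h1 := (hasDerivAt_iff_tendsto_slope.1 h).mono_left
    (nhdsWithin_mono x (fun u (hu : u ∈ Set.Ioi x) => (ne_of_gt hu : u ≠ x)))
  filter_upwards [h1.eventually (gt_mem_nhds hf), self_mem_nhdsWithin] with u hu hxu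
  rw [slope_def_field, div_lt_iff₀ (sub_pos.2 hxu)] at hu
  linarith

theorem left_gt_of_deriv_neg {f : ℝ → ℝ} {f' x : ℝ} (h : HasDerivAt f f' x) (hf : f' < 0) :
    ∀ᶠ u in nhdsWithin x (Set.Iio x), f x < f u := by
  have h1 := (hasDerivAt_iff_tendsto_slope.1 h).mono_left
    (nhdsWithin_mono x (fun u (hu : u ∈ Set.Iio x) => (ne_of_lt hu : u ≠ x)))
  filter_upwards [h1.eventually (gt_mem_nhds hf), self_mem_nhdsWithin] with u hu hxu
  rw [slope_def_field, div_lt_iff_of_neg (sub_neg.2 hxu)] at hu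
  linarith

theorem stay_below {ω ω' : ℝ → ℝ} {s t l : ℝ}
    (hω : ∀ x ∈ Set.Icc s t, HasDerivAt ω (ω' x) x)
    (hneg : ∀ x ∈ Set.Icc s t, ω x = l → ω' x < 0) (hs : ω s ≤ l) :
    ∀ x ∈ Set.Ioc s t, ω x < l := by
  intro x hx
  by_contra hcon
  have hωc : ContinuousOn ω (Set.Icc s t) := fun x hx => (hω x hx).continuousAt.continuousWithinAt
  have hst : s ∈ Set.Icc s t := ⟨le_rfl, hx.1.le.trans hx.2⟩
  obtain ⟨u, hu1, hu2⟩ : ∃ u ∈ Set.Ioo s x, ω u < l := by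
    have hmem : Set.Ioo s x ∈ nhdsWithin s (Set.Ioi s) := Ioo_mem_nhdsGT hx.1
    have hev : ∀ᶠ u in nhdsWithin s (Set.Ioi s), ω u < l := by
      rcases hs.lt_or_eq with h | h
      · exact ((hω s hst).continuousAt.eventually (gt_mem_nhds h)).filter_mono nhdsWithin_le_nhds
      · have := right_lt_of_deriv_neg (hω s hst) (hneg s hst h)
        rw [h] at this
        exact this
    obtain ⟨u, hu⟩ := (hev.and hmem).exists
    exact ⟨u, hu.2, hu.1⟩
  obtain ⟨p, hp, hp1, hp2⟩ := first_hit (f := ω) hu1.2.le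
    (hωc.mono (Set.Icc_subset_Icc hu1.1.le hx.2)) hu2 (not_lt.1 hcon)
  have hp' : p ∈ Set.Icc s t := ⟨(hu1.1.trans hp.1).le, hp.2.trans hx.2⟩
  have h1 := left_gt_of_deriv_neg (hω p hp') (hneg p hp' hp1)
  have hmem : Set.Ioo u p ∈ nhdsWithin p (Set.Iio p) := Ioo_mem_nhdsLT hp.1
  obtain ⟨q, hq1, hq2⟩ := (h1.and hmem).exists
  have := hp2 q ⟨hq2.1.le, hq2.2⟩
  linarith

/-- crossing levels -/
noncomputable def lev (k : ℕ) : ℝ := -(π / 2) - k * π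

theorem lev_anti {j k : ℕ} (h : j < k) : lev k < lev j := by
  unfold lev
  have : (j:ℝ) < k := by exact_mod_cast h
  nlinarith [pi_pos]

theorem cos_lev (k : ℕ) : cos (lev k) = 0 := by
  unfold lev
  rw [Real.cos_sub, Real.sin_nat_mul_pi]
  simp

theorem sin_lev (k : ℕ) : sin (lev k) = -(-1) ^ k := by
  unfold lev
  rw [Real.sin_sub, Real.sin_nat_mul_pi, Real.cos_nat_mul_pi]
  simp

theorem count_crossings {ω ω' : ℝ → ℝ} {s t : ℝ} (hst : s ≤ t)
    (hω : ∀ x ∈ Set.Icc s t, HasDerivAt ω (ω' x) x)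
    (hneg : ∀ x ∈ Set.Icc s t, cos (ω x) = 0 → ω' x < 0)
    (h0 : -(π / 2) < ω s) (h1 : ω s < π / 2) (k : ℕ) (hk : 1 ≤ k)
    (ht1 : lev k < ω t) (ht2 : ω t < lev (k - 1)) :
    {x | x ∈ Set.Icc s t ∧ cos (ω x) = 0}.Finite ∧
    {x | x ∈ Set.Icc s t ∧ cos (ω x) = 0}.ncard = k := by
  have hωc : ContinuousOn ω (Set.Icc s t) := fun x hx => (hω x hx).continuousAt.continuousWithinAt
  have hbelow : ∀ l : ℝ, cos l = 0 → ∀ u ∈ Set.Icc s t, ω u ≤ l → ∀ x ∈ Set.Ioc u t, ω x < l := by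
    intro l hl u hu hul
    refine stay_below (ω' := ω') (fun x hx => hω x ⟨hu.1.trans hx.1, hx.2⟩) ?_ hul
    intro x hx hxl
    exact hneg x ⟨hu.1.trans hx.1, hx.2⟩ (by rw [hxl]; exact hl)
  have hex : ∀ j ∈ Finset.range k, ∃ x ∈ Set.Icc s t, ω x = lev j := by
    intro j hj
    have hj' := Finset.mem_range.1 hj
    have hle : lev (k - 1) ≤ lev j := by
      rcases Nat.lt_or_ge j (k - 1) with h | h
      · exact (lev_anti h).le
      · have : j = k - 1 := by omega
        rw [this]
    have h0' : lev j ≤ ω s := by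
      have : lev j ≤ -(π / 2) := by
        unfold lev
        have : 0 ≤ (j:ℝ) * π := by positivity
        linarith
      linarith
    exact intermediate_value_Icc' hst hωc ⟨by linarith, h0'⟩
  choose! f hf1 hf2 using hex
  have hset : {x | x ∈ Set.Icc s t ∧ cos (ω x) = 0} = f '' (Finset.range k : Set ℕ) := by
    ext x
    simp only [Set.mem_setOf_eq, Set.mem_image, Finset.mem_coe]
    constructor
    · rintro ⟨hx, hcx⟩
      obtain ⟨i, hi⟩ := Real.cos_eq_zero_iff.1 hcx
      have hup : ω x < π / 2 := by
        rcases hx.1.lt_or_eq with h | h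
        · exact hbelow (π / 2) Real.cos_pi_div_two s ⟨le_rfl, hst⟩ h1.le x ⟨h, hx.2⟩
        · rw [← h]; exact h1
      have hlo : lev k < ω x := by
        by_contra hcon
        rcases hx.2.lt_or_eq with h | h
        · have := hbelow (lev k) (cos_lev k) x hx (not_lt.1 hcon) t ⟨h, le_rfl⟩
          linarith
        · rw [h] at hcon; exact hcon ht1
      have hi1 : i < 0 := by
        by_contra hc
        have : (0:ℝ) ≤ i := by exact_mod_cast not_lt.1 hc
        rw [hi] at hup
        nlinarith [pi_pos]
      have hi2 : -(k:ℤ) - 1 < i := by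
        by_contra hc
        have : (i:ℝ) ≤ -(k:ℝ) - 1 := by exact_mod_cast not_lt.1 hc
        rw [hi] at hlo
        unfold lev at hlo
        nlinarith [pi_pos]
      obtain ⟨j, hj⟩ : ∃ j : ℕ, i = -(j:ℤ) - 1 := ⟨(-i - 1).toNat, by omega⟩
      have hjk : j ∈ Finset.range k := by rw [Finset.mem_range]; omega
      refine ⟨j, hjk, ?_⟩
      have hωx : ω x = lev j := by
        rw [hi, hj]; unfold lev; push_cast; ring
      rcases lt_trichotomy (f j) x with h | h | h
      · have := hbelow (lev j) (cos_lev j) (f j) (hf1 j hjk) (hf2 j hjk).le x ⟨h, hx.2⟩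
        linarith
      · exact h
      · have := hbelow (lev j) (cos_lev j) x hx hωx.le (f j) ⟨h, (hf1 j hjk).2⟩
        have := hf2 j hjk
        linarith
    · rintro ⟨j, hj, rfl⟩
      exact ⟨hf1 j hj, by rw [hf2 j hj]; exact cos_lev j⟩
  rw [hset]
  refine ⟨(Finset.finite_toSet _).image f, ?_⟩
  rw [Set.ncard_image_of_injOn]
  · rw [Set.ncard_coe_finset, Finset.card_range]
  · intro i hi j hj hij
    have e : lev i = lev j := by rw [← hf2 i hi, ← hf2 j hj, hij]
    by_contra hne
    rcases Nat.lt_or_gt_of_ne hne with h | h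
    · have := lev_anti h; linarith
    · have := lev_anti h; linarith

end Abs


section Exit

/-- linearised exit system in the far region, time shifted so that it starts at `0` -/
structure ExitSys (z y A B : ℝ → ℝ) (R lam : ℝ) : Prop where
  hR : 8 ≤ R
  hl : 1 / 2 ≤ lam
  hz : ∀ x, HasDerivAt z (y x) x
  hy : ∀ x, 0 ≤ x → |z x| ≤ lam / 2 → |y x| ≤ 1 → HasDerivAt y (-A x * z x + B x * y x) x
  hA : ∀ x, 0 ≤ x → |z x| ≤ lam / 2 → |y x| ≤ 1 → 0 ≤ A x
  hB : ∀ x, 0 ≤ x → |z x| ≤ lam / 2 → |y x| ≤ 1 → 1 + A x ≤ B x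
  hT : ∀ x, 0 ≤ x → |z x| ≤ lam / 2 → |y x| ≤ 1 → R * exp x * A x * |z x| < B x + 1
  yc : Continuous y
  h0 : |z 0| ≤ lam / 4
  h1 : |y 0| < 1 / R

theorem ExitSys.neg {z y A B : ℝ → ℝ} {R lam : ℝ} (h : ExitSys z y A B R lam) :
    ExitSys (fun x => - z x) (fun x => - y x) A B R lam where
  hR := h.hR
  hl := h.hl
  hz := fun x => (h.hz x).neg
  hy := by
    intro x hx h1 h2
    rw [abs_neg] at h1 h2
    exact (h.hy x hx h1 h2).neg.congr_deriv (by ring)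
  hA := by
    intro x hx h1 h2
    rw [abs_neg] at h1 h2
    exact h.hA x hx h1 h2
  hB := by
    intro x hx h1 h2
    rw [abs_neg] at h1 h2
    exact h.hB x hx h1 h2
  hT := by
    intro x hx h1 h2
    rw [abs_neg] at h1 h2
    rw [abs_neg]
    exact h.hT x hx h1 h2
  yc := h.yc.neg
  h0 := by rw [abs_neg]; exact h.h0
  h1 := by rw [abs_neg]; exact h.h1

/-- exit through the positive side -/
def OutP (y : ℝ → ℝ) (R : ℝ) : Prop :=
  ∃ x, 0 ≤ x ∧ 1 < R * exp x * y x ∧ ∀ s ∈ Set.Icc 0 x, -1 < R * exp s * y s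

theorem exit_y_small {R x y : ℝ} (hR : 8 ≤ R) (hx : 0 ≤ x) (h : |R * exp x * y| ≤ 1) :
    |y| ≤ 1 := by
  have he : 1 ≤ exp x := Real.one_le_exp hx
  have h1 : 1 ≤ R * exp x := by nlinarith
  rw [abs_mul, abs_of_pos (by linarith : 0 < R * exp x)] at h
  nlinarith [abs_nonneg y]

theorem exit_upper {z y A B : ℝ → ℝ} {R lam : ℝ} (h : ExitSys z y A B R lam) {a b : ℝ}
    (hab : a ≤ b) (hg : ∀ s ∈ Set.Icc a b, |R * exp s * y s| ≤ 1) :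
    z b + exp (-b) / R ≤ z a + exp (-a) / R := by
  have hR := h.hR
  have hzc : Continuous z := continuous_iff_continuousAt.2 fun x => (h.hz x).continuousAt
  refine anti_of_hasDeriv (f := fun x => z x + exp (-x) / R) (f' := fun x => y x - exp (-x) / R)
    hab (by fun_prop) ?_ ?_
  · intro x _
    have h1 : HasDerivAt (fun x => exp (-x) / R) (-(exp (-x) / R)) x := by
      refine HasDerivAt.congr_deriv (f := fun x => exp (-x) / R)
        (((hasDerivAt_id x).neg.exp).div_const R) ?_
      simp [neg_div]
    exact ((h.hz x).add h1).congr_deriv (by ring)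
  · intro x hx
    have h1 := (abs_le.1 (hg x ⟨hx.1.le, hx.2.le⟩)).2
    have hp := exp_pos x
    rw [exp_neg]
    have : y x ≤ 1 / (R * exp x) := by
      rw [le_div_iff₀ (by positivity)]; linarith
    have e : 1 / (R * exp x) = (exp x)⁻¹ / R := by field_simp
    linarith

theorem exit_lower {z y A B : ℝ → ℝ} {R lam : ℝ} (h : ExitSys z y A B R lam) {a b : ℝ}
    (hab : a ≤ b) (hg : ∀ s ∈ Set.Icc a b, |R * exp s * y s| ≤ 1) :
    z a - exp (-a) / R ≤ z b - exp (-b) / R := by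
  have := exit_upper h.neg hab (fun s hs => by
    rw [mul_neg, abs_neg]; exact hg s hs)
  linarith

theorem exit_box {z y A B : ℝ → ℝ} {R lam : ℝ} (h : ExitSys z y A B R lam) {x : ℝ}
    (hx : 0 ≤ x) (hg : ∀ s ∈ Set.Icc 0 x, |R * exp s * y s| ≤ 1) : |z x| ≤ lam / 2 := by
  have h1 := exit_upper h hx hg
  have h2 := exit_lower h hx hg
  have hR := h.hR
  have h3 : exp (-(0:ℝ)) / R ≤ 1 / 8 := by
    rw [neg_zero, exp_zero]
    exact one_div_le_one_div_of_le (by norm_num) hR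
  have h4 : 0 ≤ exp (-x) / R := by positivity
  have h5 := abs_le.1 h.h0
  have := h.hl
  rw [abs_le]
  constructor <;> linarith

theorem exit_box' {z y A B : ℝ → ℝ} {R lam : ℝ} (h : ExitSys z y A B R lam) {x : ℝ}
    (hg : ∀ s ∈ Set.Icc 0 x, |R * exp s * y s| ≤ 1) :
    ∀ s ∈ Set.Icc 0 x, |z s| ≤ lam / 2 ∧ |y s| ≤ 1 := by
  intro s hs
  refine ⟨exit_box h hs.1 (fun u hu => hg u ⟨hu.1, hu.2.trans hs.2⟩), ?_⟩
  exact exit_y_small h.hR hs.1 (hg s hs)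

theorem out_of_hit {z y A B : ℝ → ℝ} {R lam : ℝ} (h : ExitSys z y A B R lam) {s : ℝ}
    (hs : 0 ≤ s) (hg : ∀ u ∈ Set.Icc 0 s, |R * exp u * y u| ≤ 1) (hgs : R * exp s * y s = 1)
    (hg1 : ∀ u ∈ Set.Icc 0 s, -1 < R * exp u * y u) :
    OutP y R := by
  obtain ⟨b1, b2⟩ := exit_box' h hg s ⟨hs, le_rfl⟩
  have hd := h.hy s hs b1 b2
  have hT := h.hT s hs b1 b2
  have hA := h.hA s hs b1 b2
  have hR := h.hR
  have hpos : 0 < R * exp s := by positivity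
  have hgd : HasDerivAt (fun x => -(R * exp x * y x))
      (-(-(R * exp s * A s * z s) + (B s + 1))) s := by
    refine HasDerivAt.congr_deriv (f := fun x => -(R * exp x * y x))
      ((((Real.hasDerivAt_exp s).const_mul R).mul hd).neg) ?_
    linear_combination (-(B s + 1)) * hgs
  have hneg : -(-(R * exp s * A s * z s) + (B s + 1)) < 0 := by
    have : R * exp s * A s * z s ≤ R * exp s * A s * |z s| := by
      gcongr; exact le_abs_self _
    linarith
  have e1 := right_lt_of_deriv_neg hgd hneg
  have yc := h.yc
  have hgc : Continuous (fun x => R * exp x * y x) := by fun_prop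
  have e2 : ∀ᶠ u in nhds s, -1 < R * exp u * y u :=
    hgc.continuousAt.eventually (lt_mem_nhds (by simp only; rw [hgs]; norm_num))
  obtain ⟨ε, hε, hball⟩ := Metric.eventually_nhds_iff.1 e2
  have e3 : Set.Ioo s (s + ε) ∈ nhdsWithin s (Set.Ioi s) := Ioo_mem_nhdsGT (by linarith)
  obtain ⟨u, hu1, hu2⟩ := (e1.and e3).exists
  refine ⟨u, hs.trans hu2.1.le, by linarith, ?_⟩
  intro x hx
  rcases le_or_gt x s with hxs | hxs
  · exact hg1 x ⟨hx.1, hxs⟩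
  · apply hball
    rw [Real.dist_eq, abs_of_pos (by linarith)]
    linarith [hx.2, hu2.2]

theorem exit_good {z y A B : ℝ → ℝ} {R lam : ℝ} (h : ExitSys z y A B R lam)
    (n1 : ¬ OutP y R) (n2 : ¬ OutP (fun x => - y x) R) :
    ∀ x, 0 ≤ x → |R * exp x * y x| ≤ 1 := by
  intro x hx
  by_contra hcon
  have hR := h.hR
  have yc := h.yc
  have hgc : Continuous (fun x => |R * exp x * y x|) := by fun_prop
  obtain ⟨s, hs, hs1, hs2⟩ := first_hit (f := fun x => |R * exp x * y x|) (c := 1) hx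
    hgc.continuousOn (by
      have := h.h1
      simp only [exp_zero, mul_one]
      rw [abs_mul, abs_of_pos (by linarith)]
      rw [lt_div_iff₀ (by linarith)] at this
      linarith) (not_le.1 hcon).le
  have hle : ∀ u ∈ Set.Icc 0 s, |R * exp u * y u| ≤ 1 := by
    intro u hu
    rcases hu.2.lt_or_eq with h' | h'
    · exact (hs2 u ⟨hu.1, h'⟩).le
    · rw [h']; exact hs1.le
  rcases (abs_eq (by norm_num : (0:ℝ) ≤ 1)).1 hs1 with hh | hh
  · refine n1 (out_of_hit h hs.1.le hle hh ?_)
    intro u hu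
    rcases hu.2.lt_or_eq with h' | h'
    · exact (abs_lt.1 (hs2 u ⟨hu.1, h'⟩)).1
    · rw [h', hh]; norm_num
  · refine n2 (out_of_hit h.neg hs.1.le ?_ ?_ ?_)
    · intro u hu; rw [mul_neg, abs_neg]; exact hle u hu
    · linarith
    · intro u hu
      rcases hu.2.lt_or_eq with h' | h'
      · have := (abs_lt.1 (hs2 u ⟨hu.1, h'⟩)).2
        linarith
      · rw [h']; linarith

theorem out_disjoint {y : ℝ → ℝ} {R : ℝ} (h1 : OutP y R) (h2 : OutP (fun x => - y x) R) :
    False := by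
  obtain ⟨x1, a1, b1, c1⟩ := h1
  obtain ⟨x2, a2, b2, c2⟩ := h2
  rcases le_total x1 x2 with h | h
  · have := c2 x1 ⟨a1, h⟩
    linarith
  · have := c1 x2 ⟨a2, h⟩
    linarith

theorem exit_limit {z y A B : ℝ → ℝ} {R lam : ℝ} (h : ExitSys z y A B R lam)
    (hg : ∀ x, 0 ≤ x → |R * exp x * y x| ≤ 1) :
    ∃ L, |L| ≤ lam / 2 ∧ Tendsto z atTop (nhds L) := by
  have hR := h.hR
  have hbox : ∀ x, 0 ≤ x → |z x| ≤ lam / 2 := fun x hx =>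
    exit_box h hx (fun s hs => hg s hs.1)
  have hanti : Antitone (fun x => z (max 0 x) + exp (-(max 0 x)) / R) := by
    intro a b hab
    exact exit_upper h (max_le_max le_rfl hab)
      (fun s hs => hg s ((le_max_left _ _).trans hs.1))
  have hbdd : BddBelow (Set.range (fun x => z (max 0 x) + exp (-(max 0 x)) / R)) := by
    refine ⟨-(lam / 2), ?_⟩
    rintro _ ⟨x, rfl⟩
    have h1 := (abs_le.1 (hbox (max 0 x) (le_max_left _ _))).1
    have h2 : 0 ≤ exp (-(max 0 x)) / R := by positivity
    simp only
    linarith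
  have ht := tendsto_atTop_ciInf hanti hbdd
  have ht0 : Tendsto (fun x : ℝ => exp (-x) / R) atTop (nhds (0 / R)) :=
    (Real.tendsto_exp_neg_atTop_nhds_zero).div_const R
  have hz := (ht.congr' (f₂ := fun x => z x + exp (-x) / R) (by
    filter_upwards [eventually_ge_atTop 0] with x hx
    rw [max_eq_right hx])).sub ht0
  refine ⟨_, ?_, hz.congr (fun x => by ring)⟩
  have hz2 : Tendsto z atTop _ := hz.congr (fun x => by ring)
  exact le_of_tendsto hz2.abs (by
    filter_upwards [eventually_ge_atTop 0] with x hx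
    exact hbox x hx)

theorem exit_nozero_aux {z y A B : ℝ → ℝ} {R lam : ℝ} (h : ExitSys z y A B R lam)
    (hg : ∀ x, 0 ≤ x → |R * exp x * y x| ≤ 1) {x : ℝ} (hx : 0 ≤ x) (hz : z x = 0)
    (hy : 0 < y x) : False := by
  have hR := h.hR
  have hb : ∀ s, 0 ≤ s → |z s| ≤ lam / 2 ∧ |y s| ≤ 1 := fun s hs =>
    exit_box' h (fun u hu => hg u hu.1) s ⟨hs, le_rfl⟩
  have hi : 0 < 1 / y x := by positivity
  have := lin_grow (z := z) (y := y) (A := A) (B := B) (s := x) (t := x + 1 / y x)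
    (by linarith) (fun s _ => h.hz s)
    (fun s hs => h.hy s (hx.trans hs.1) (hb s (hx.trans hs.1)).1 (hb s (hx.trans hs.1)).2)
    (fun s hs => h.hA s (hx.trans hs.1) (hb s (hx.trans hs.1)).1 (hb s (hx.trans hs.1)).2)
    (fun s hs => h.hB s (hx.trans hs.1) (hb s (hx.trans hs.1)).1 (hb s (hx.trans hs.1)).2)
    hz hy
  have h1 := (abs_le.1 (hg (x + 1 / y x) (by linarith))).2
  have h2 := Real.add_one_le_exp (x + 1 / y x)
  have h3 : 1 / y x ≤ exp (x + 1 / y x) := by linarith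
  have h4 : 8 * (1 / y x) * y x ≤ R * exp (x + 1 / y x) * y (x + 1 / y x) := by
    gcongr
  have h5 : 8 * (1 / y x) * y x = 8 := by field_simp
  linarith

theorem exit_nozero {z y A B : ℝ → ℝ} {R lam : ℝ} (h : ExitSys z y A B R lam)
    (hg : ∀ x, 0 ≤ x → |R * exp x * y x| ≤ 1) {x : ℝ} (hx : 0 ≤ x)
    (hn : 0 < z x ^ 2 + y x ^ 2) : z x ≠ 0 := by
  intro hz
  rcases lt_trichotomy (y x) 0 with hy | hy | hy
  · exact exit_nozero_aux h.neg (fun s hs => by rw [mul_neg, abs_neg]; exact hg s hs) hx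
      (by simp [hz]) (by simpa using hy)
  · rw [hz, hy] at hn; norm_num at hn
  · exact exit_nozero_aux h hg hx hz hy

theorem exit_sign {z y A B : ℝ → ℝ} {R lam : ℝ} (h : ExitSys z y A B R lam)
    (hz : z 0 = 0) (hy : 0 < y 0) : OutP y R := by
  by_contra n1
  by_cases n2 : OutP (fun x => - y x) R
  · obtain ⟨x, a1, b1, c1⟩ := n2
    have yc := h.yc
    have hR := h.hR
    have hgc : Continuous (fun x => -(R * exp x * y x)) := by fun_prop
    obtain ⟨s, hs, hs1, hs2⟩ := first_hit (f := fun x => -(R * exp x * y x)) (c := 1) a1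
      hgc.continuousOn (by
        simp only [exp_zero, mul_one]
        have : 0 < R * y 0 := by positivity
        linarith) (by linarith)
    have hle : ∀ u ∈ Set.Icc 0 s, |R * exp u * y u| ≤ 1 := by
      intro u hu
      have h3 := c1 u ⟨hu.1, hu.2.trans hs.2⟩
      rw [abs_le]
      refine ⟨?_, by linarith⟩
      rcases hu.2.lt_or_eq with h' | h'
      · have := hs2 u ⟨hu.1, h'⟩
        linarith
      · rw [h']; linarith
    have hb := exit_box' h hle
    have := lin_grow (z := z) (y := y) (A := A) (B := B) hs.1.le (fun s _ => h.hz s)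
      (fun u hu => h.hy u hu.1 (hb u hu).1 (hb u hu).2)
      (fun u hu => h.hA u hu.1 (hb u hu).1 (hb u hu).2)
      (fun u hu => h.hB u hu.1 (hb u hu).1 (hb u hu).2) hz hy
    have h4 : 0 < R * exp s * y s := by
      have : 0 < y s := by linarith
      positivity
    linarith
  · exact exit_nozero_aux h (exit_good h n1 n2) le_rfl hz hy

/-- openness of the exit condition -/
theorem out_open {G : ℝ → ℝ → ℝ} {R : ℝ}
    (hG : ContinuousOn (Function.uncurry G) (Set.Ioi 0 ×ˢ Set.univ)) {a : ℝ} (ha : 0 < a)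
    (ho : OutP (G a) R) : ∀ᶠ b in nhds a, OutP (G b) R := by
  obtain ⟨x, hx, h1, h2⟩ := ho
  have hca : ∀ s, ContinuousAt (Function.uncurry G) (a, s) := fun s =>
    hG.continuousAt (prod_mem_nhds (Ioi_mem_nhds ha) univ_mem)
  have hcb : ∀ s, ContinuousAt (fun p : ℝ × ℝ => R * exp p.2 * G p.1 p.2) (a, s) := fun s =>
    (by fun_prop : Continuous fun p : ℝ × ℝ => R * exp p.2).continuousAt.mul (hca s)
  have e1 : ∀ᶠ b in nhds a, 1 < R * exp x * G b x := by
    have : ContinuousAt (fun b => R * exp x * G b x) a :=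
      ContinuousAt.comp (g := fun p : ℝ × ℝ => R * exp p.2 * G p.1 p.2) (f := fun b => (b, x))
        (hcb x) (by fun_prop)
    exact this.eventually (lt_mem_nhds h1)
  have e2 : ∀ᶠ b in nhds a, ∀ s ∈ Set.Icc 0 x, -1 < R * exp s * G b s := by
    refine (isCompact_Icc (a := (0:ℝ)) (b := x)).eventually_forall_of_forall_eventually
      (P := fun b s => -1 < R * exp s * G b s) ?_
    intro s hs
    exact (hcb s).eventually (lt_mem_nhds (h2 s hs))
  filter_upwards [e1, e2] with b hb1 hb2
  exact ⟨x, hx, hb1, hb2⟩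

end Exit


section Dyn

variable {P : ℕ} {Q lam R : ℝ}

noncomputable def Setup.z (S : Setup P Q lam R) (a τ : ℝ) : ℝ := S.φ a τ - lam
noncomputable def Setup.y (S : Setup P Q lam R) (a τ : ℝ) : ℝ := S.v a τ - S.φ a τ
noncomputable def Setup.A (S : Setup P Q lam R) (a τ : ℝ) : ℝ :=
  (1 + S.v a τ ^ 2) * P * (1 + lam / S.φ a τ)
noncomputable def Setup.B (S : Setup P Q lam R) (a τ : ℝ) : ℝ :=
  (1 + S.v a τ ^ 2) * ((a * exp τ) ^ 2 / 2 - P) - 1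
noncomputable def Setup.T (_S : Setup P Q lam R) (a : ℝ) : ℝ := log (R / a)

theorem Setup.Rpos (S : Setup P Q lam R) : 0 < R := S.hr0.trans_le S.hr0R

theorem Setup.expT (S : Setup P Q lam R) {a : ℝ} (ha : 0 < a) : a * exp (S.T a) = R := by
  have := S.Rpos
  unfold Setup.T
  rw [Real.exp_log (by positivity)]
  field_simp

theorem Setup.τ1T (S : Setup P Q lam R) {a : ℝ} (ha : 0 < a) (hb : a ≤ S.δ) : S.τ1 ≤ S.T a := by
  have := S.Rpos
  unfold Setup.T
  rw [Real.le_log_iff_exp_le (by positivity), le_div_iff₀ ha]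
  have h1 := S.hδr
  have h2 := S.hr0R
  have h3 := exp_pos S.τ1
  nlinarith

theorem Setup.dz (S : Setup P Q lam R) (a τ : ℝ) : HasDerivAt (S.z a) (S.y a τ) τ :=
  (S.dφ a τ).sub_const lam

theorem Setup.dy (S : Setup P Q lam R) (hQ : Q = P * lam ^ 2) {a τ : ℝ} (ha : 0 < a)
    (hb : a ≤ S.δ) (hτ : S.τ0 ≤ τ) (h1 : |S.v a τ| < S.W) (h2 : S.m < S.φ a τ) :
    HasDerivAt (S.y a) (-S.A a τ * S.z a τ + S.B a τ * S.y a τ) τ := by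
  refine HasDerivAt.congr_deriv (f := S.y a) ((S.dv a τ ha hb hτ h1 h2).sub (S.dφ a τ)) ?_
  have hφ : S.φ a τ ≠ 0 := (S.hm.trans h2).ne'
  unfold Setup.A Setup.B Setup.z Setup.y
  generalize S.v a τ = v' at *
  generalize S.φ a τ = f at *
  rw [hQ]
  field_simp
  ring

theorem Setup.exitSys (S : Setup P Q lam R) (hP : 1 ≤ P) (hl : 1 / 2 ≤ lam)
    (hQ : Q = P * lam ^ 2) (hR : 3 * P * lam + 8 * P + 8 ≤ R)
    {a : ℝ} (ha : 0 < a) (hb : a ≤ S.δ) :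
    ExitSys (fun x => S.z a (S.T a + x)) (fun x => S.y a (S.T a + x))
      (fun x => S.A a (S.T a + x)) (fun x => S.B a (S.T a + x)) R lam := by
  have hP' : (1:ℝ) ≤ P := by exact_mod_cast hP
  have hT := S.expT ha
  have hr : ∀ x, a * exp (S.T a + x) = R * exp x := by
    intro x; rw [exp_add, ← mul_assoc, hT]
  have hT0 : S.τ0 ≤ S.T a := S.hτ01.trans (S.τ1T ha hb)
  have hPl : 0 < (P:ℝ) * lam := by positivity
  have hfac : ∀ x, |S.z a (S.T a + x)| ≤ lam / 2 → |S.y a (S.T a + x)| ≤ 1 →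
      lam / 2 ≤ S.φ a (S.T a + x) ∧ |S.v a (S.T a + x)| < S.W := by
    intro x h1 h2
    unfold Setup.z at h1
    unfold Setup.y at h2
    rw [abs_le] at h1 h2
    have := S.hW
    refine ⟨by linarith, ?_⟩
    rw [abs_lt]
    constructor <;> linarith
  have hA0 : ∀ x, |S.z a (S.T a + x)| ≤ lam / 2 → |S.y a (S.T a + x)| ≤ 1 →
      0 ≤ S.A a (S.T a + x) ∧
      S.A a (S.T a + x) ≤ (1 + S.v a (S.T a + x) ^ 2) * (3 * P) := by
    intro x h1 h2
    obtain ⟨h3, h4⟩ := hfac x h1 h2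
    have h5 : 0 < S.φ a (S.T a + x) := by linarith
    have h6 : lam / S.φ a (S.T a + x) ≤ 2 := by
      rw [div_le_iff₀ h5]; linarith
    have h7 : 0 ≤ lam / S.φ a (S.T a + x) := by positivity
    unfold Setup.A
    refine ⟨by positivity, ?_⟩
    have : (1 + S.v a (S.T a + x) ^ 2) * P * (1 + lam / S.φ a (S.T a + x)) ≤
      (1 + S.v a (S.T a + x) ^ 2) * P * 3 := by gcongr; linarith
    linarith
  have hr2 : ∀ x, 0 ≤ x → R ≤ R * exp x := by
    intro x hx
    have : 1 ≤ exp x := Real.one_le_exp hx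
    have := S.Rpos
    nlinarith
  refine ⟨by linarith, hl, ?_, ?_, ?_, ?_, ?_, ?_, ?_, ?_⟩
  · intro x
    exact (S.dz a (S.T a + x)).comp_const_add (S.T a) x
  · intro x hx h1 h2
    obtain ⟨h3, h4⟩ := hfac x h1 h2
    exact (S.dy hQ ha hb (by linarith) h4 (by linarith [S.hml])).comp_const_add (S.T a) x
  · intro x hx h1 h2
    exact (hA0 x h1 h2).1
  · intro x hx h1 h2
    have h3 := (hA0 x h1 h2).2
    have h4 := hr2 x hx
    simp only [Setup.B, hr]
    have h5 : 4 * P + 2 ≤ (R * exp x) ^ 2 / 2 := by nlinarith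
    have h6 : 0 ≤ S.v a (S.T a + x) ^ 2 := sq_nonneg _
    have h7 : 0 ≤ (1 + S.v a (S.T a + x) ^ 2) * ((R * exp x) ^ 2 / 2 - (4 * P + 2)) := by
      have : 0 ≤ (R * exp x) ^ 2 / 2 - (4 * P + 2) := by linarith
      positivity
    nlinarith
  · intro x hx h1 h2
    obtain ⟨h0, h3⟩ := hA0 x h1 h2
    have h4 := hr2 x hx
    simp only [Setup.B, hr]
    have hRe : 0 < R * exp x := by linarith
    have h5 : R * exp x * S.A a (S.T a + x) * |S.z a (S.T a + x)| ≤
        R * exp x * ((1 + S.v a (S.T a + x) ^ 2) * (3 * P)) * (lam / 2) := by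
      gcongr
    have h6 : 0 ≤ S.v a (S.T a + x) ^ 2 := sq_nonneg _
    have h7 : 0 < (R * exp x) ^ 2 / 2 - P - R * exp x * (3 * P) * (lam / 2) := by
      have : 0 ≤ R * exp x * (R * exp x - (3 * P * lam + 8 * P + 8)) := by
        have : 0 ≤ R * exp x - (3 * P * lam + 8 * P + 8) := by linarith
        positivity
      nlinarith
    have h8 : 0 < (1 + S.v a (S.T a + x) ^ 2) *
      ((R * exp x) ^ 2 / 2 - P - R * exp x * (3 * P) * (lam / 2)) := by positivity
    linarith
  · have h1 := S.hφc
    have h2 := S.hvc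
    have h3 : Continuous (fun x => S.φ a (S.T a + x)) :=
      h1.comp (by fun_prop : Continuous fun x => (a, S.T a + x))
    have h4 : Continuous (fun x => S.v a (S.T a + x)) :=
      h2.comp (by fun_prop : Continuous fun x => (a, S.T a + x))
    exact h4.sub h3
  · simp only [add_zero]
    exact (S.hend a (S.T a) ha hb hT).1
  · simp only [add_zero]
    exact (S.hend a (S.T a) ha hb hT).2

theorem Setup.contA (S : Setup P Q lam R) {a τ : ℝ} (h : S.φ a τ ≠ 0) :
    ContinuousAt (fun p : ℝ × ℝ => S.A p.1 p.2) (a, τ) := by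
  have h1 : ContinuousAt (fun p : ℝ × ℝ => S.φ p.1 p.2) (a, τ) := S.hφc.continuousAt
  have h2 : ContinuousAt (fun p : ℝ × ℝ => S.v p.1 p.2) (a, τ) := S.hvc.continuousAt
  unfold Setup.A
  exact ((continuousAt_const.add (h2.pow 2)).mul continuousAt_const).mul
    (continuousAt_const.add (continuousAt_const.div h1 h))

theorem Setup.contB (S : Setup P Q lam R) :
    Continuous (fun p : ℝ × ℝ => S.B p.1 p.2) := by
  have h2 : Continuous (fun p : ℝ × ℝ => S.v p.1 p.2) := S.hvc
  unfold Setup.B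
  fun_prop

theorem Setup.contz (S : Setup P Q lam R) :
    Continuous (fun p : ℝ × ℝ => S.z p.1 p.2) := by
  have h1 : Continuous (fun p : ℝ × ℝ => S.φ p.1 p.2) := S.hφc
  unfold Setup.z
  fun_prop

theorem Setup.conty (S : Setup P Q lam R) :
    Continuous (fun p : ℝ × ℝ => S.y p.1 p.2) := by
  have h1 : Continuous (fun p : ℝ × ℝ => S.φ p.1 p.2) := S.hφc
  have h2 : Continuous (fun p : ℝ × ℝ => S.v p.1 p.2) := S.hvc
  unfold Setup.y
  fun_prop

theorem Setup.zpos (S : Setup P Q lam R) {a : ℝ} (ha : 0 < a) (hb : a ≤ S.δ) :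
    0 < S.z a S.τ0 := by
  have h := (S.hinit a (exp S.τ0) ha hb (exp_pos _).le le_rfl).2.2
  rw [S.hφ] at h
  have := lt_of_mul_lt_mul_right h (exp_pos _).le
  unfold Setup.z
  linarith

theorem Setup.nonvan (S : Setup P Q lam R) (hQ : Q = P * lam ^ 2) {a τ : ℝ} (ha : 0 < a)
    (hb : a ≤ S.δ) (hτ : S.τ0 ≤ τ)
    (hval : ∀ s ∈ Set.Icc S.τ0 τ, |S.v a s| < S.W ∧ S.m < S.φ a s) :
    0 < S.z a τ ^ 2 + S.y a τ ^ 2 := by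
  refine lin_nonvan (A := S.A a) (B := S.B a) hτ (fun x _ => S.dz a x)
    (fun x hx => S.dy hQ ha hb hx.1 (hval x hx).1 (hval x hx).2) ?_ ?_ (S.zpos ha hb)
  · intro x hx
    have h := S.contA (a := a) (τ := x) (S.hm.trans (hval x hx).2).ne'
    exact (ContinuousAt.comp (g := fun p : ℝ × ℝ => S.A p.1 p.2) (f := fun x => (a, x)) h
      (by fun_prop)).continuousWithinAt
  · exact (S.contB.comp (by fun_prop : Continuous fun x : ℝ => (a, x))).continuousOn

theorem Setup.val (S : Setup P Q lam R) {a : ℝ} (ha : 0 < a)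
    (hb : a ≤ S.δ) : ∀ s ∈ Set.Icc S.τ0 (S.T a), |S.v a s| < S.W ∧ S.m < S.φ a s := by
  intro s hs
  refine S.hvalid a s ha hb hs.1 ?_
  rw [← S.expT ha]
  gcongr
  exact hs.2

end Dyn


section Ang

variable {P : ℕ} {Q lam R : ℝ}

/-- angular speed -/
noncomputable def Setup.Om (S : Setup P Q lam R) (a τ : ℝ) : ℝ :=
  (S.z a τ * (-S.A a τ * S.z a τ + S.B a τ * S.y a τ) - S.y a τ * S.y a τ) /
    (S.z a τ ^ 2 + S.y a τ ^ 2)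

noncomputable def Setup.cl (S : Setup P Q lam R) (a τ : ℝ) : ℝ := max S.τ0 (min τ (S.T a))

/-- the angle -/
noncomputable def Setup.ang (S : Setup P Q lam R) (a τ : ℝ) : ℝ :=
  arctan (S.y a S.τ0 / S.z a S.τ0) + ∫ t in S.τ0..τ, S.Om a (S.cl a t)

theorem Setup.cl_mem (S : Setup P Q lam R) {a : ℝ} (ha : 0 < a) (hb : a ≤ S.δ) (t : ℝ) :
    S.cl a t ∈ Set.Icc S.τ0 (S.T a) := by
  unfold Setup.cl
  exact ⟨le_max_left _ _, max_le (S.hτ01.trans (S.τ1T ha hb)) (min_le_right _ _)⟩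

theorem Setup.cl_eq (S : Setup P Q lam R) {a t : ℝ} (ht : t ∈ Set.Icc S.τ0 (S.T a)) :
    S.cl a t = t := by
  unfold Setup.cl
  rw [min_eq_left ht.2, max_eq_right ht.1]

theorem Setup.contT (S : Setup P Q lam R) :
    Continuous (fun a : Set.Ioc 0 S.δ => S.T a) := by
  unfold Setup.T
  have := S.Rpos
  refine Continuous.log ?_ ?_
  · exact continuous_const.div continuous_subtype_val (fun x => x.2.1.ne')
  · intro x
    have := x.2.1
    positivity

theorem Setup.nonvan' (S : Setup P Q lam R) (hQ : Q = P * lam ^ 2) {a : ℝ} (ha : 0 < a)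
    (hb : a ≤ S.δ) {s : ℝ} (hs : s ∈ Set.Icc S.τ0 (S.T a)) :
    0 < S.z a s ^ 2 + S.y a s ^ 2 :=
  S.nonvan hQ ha hb hs.1 (fun u hu => S.val ha hb u ⟨hu.1, hu.2.trans hs.2⟩)

theorem Setup.contOm (S : Setup P Q lam R) (hQ : Q = P * lam ^ 2) :
    Continuous (Function.uncurry (fun (a : Set.Ioc 0 S.δ) (t : ℝ) => S.Om a (S.cl a t))) := by
  have hcl : Continuous (fun p : Set.Ioc 0 S.δ × ℝ => ((p.1 : ℝ), S.cl p.1 p.2)) := by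
    have h1 : Continuous (fun p : Set.Ioc 0 S.δ × ℝ => S.T p.1) := S.contT.comp continuous_fst
    unfold Setup.cl
    fun_prop
  have hz := S.contz.comp hcl
  have hy := S.conty.comp hcl
  have hB := S.contB.comp hcl
  have hA : Continuous (fun p : Set.Ioc 0 S.δ × ℝ => S.A p.1 (S.cl p.1 p.2)) := by
    rw [continuous_iff_continuousAt]
    rintro ⟨a, t⟩
    have h := S.contA (a := a) (τ := S.cl a t)
      (S.hm.trans (S.val a.2.1 a.2.2 _ (S.cl_mem a.2.1 a.2.2 t)).2).ne'
    exact ContinuousAt.comp (g := fun p : ℝ × ℝ => S.A p.1 p.2)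
      (f := fun p : Set.Ioc 0 S.δ × ℝ => ((p.1 : ℝ), S.cl p.1 p.2)) h hcl.continuousAt
  refine Continuous.div ((hz.mul ((hA.neg.mul hz).add (hB.mul hy))).sub (hy.mul hy))
    ((hz.pow 2).add (hy.pow 2)) ?_
  rintro ⟨a, t⟩
  exact (S.nonvan' hQ a.2.1 a.2.2 (S.cl_mem a.2.1 a.2.2 t)).ne'

theorem Setup.contTheta (S : Setup P Q lam R) (hQ : Q = P * lam ^ 2) :
    ContinuousOn (fun a => S.ang a (S.T a)) (Set.Ioc 0 S.δ) := by
  rw [continuousOn_iff_continuous_restrict]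
  have h1 := intervalIntegral.continuous_parametric_intervalIntegral_of_continuous
    (μ := MeasureTheory.volume) (a₀ := S.τ0) (S.contOm hQ) S.contT
  have h2 : Continuous (fun a : Set.Ioc 0 S.δ => arctan (S.y a S.τ0 / S.z a S.τ0)) := by
    refine continuous_arctan.comp (Continuous.div ?_ ?_ ?_)
    · exact S.conty.comp (by fun_prop : Continuous fun a : Set.Ioc 0 S.δ => ((a : ℝ), S.τ0))
    · exact S.contz.comp (by fun_prop : Continuous fun a : Set.Ioc 0 S.δ => ((a : ℝ), S.τ0))
    · intro a
      exact (S.zpos a.2.1 a.2.2).ne'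
  exact h2.add h1

theorem Setup.dang (S : Setup P Q lam R) (hQ : Q = P * lam ^ 2) {a : ℝ} (ha : 0 < a)
    (hb : a ≤ S.δ) {s : ℝ} (hs : s ∈ Set.Icc S.τ0 (S.T a)) :
    HasDerivAt (S.ang a) (S.Om a s) s := by
  have hc : Continuous (fun t => S.Om a (S.cl a t)) :=
    (S.contOm hQ).comp (by fun_prop :
      Continuous (fun t : ℝ => ((⟨a, ha, hb⟩ : Set.Ioc 0 S.δ), t)))
  have h := (hc.integral_hasStrictDerivAt S.τ0 s).hasDerivAt
  rw [S.cl_eq hs] at h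
  exact h.const_add _

theorem Setup.ang_rep (S : Setup P Q lam R) (hQ : Q = P * lam ^ 2) {a : ℝ} (ha : 0 < a)
    (hb : a ≤ S.δ) : ∀ x ∈ Set.Icc S.τ0 (S.T a),
      ∃ c > 0, S.z a x = c * cos (S.ang a x) ∧ S.y a x = c * sin (S.ang a x) := by
  refine angle_rep (z := S.z a) (y := S.y a) (z' := S.y a)
    (y' := fun x => -S.A a x * S.z a x + S.B a x * S.y a x) (fun x _ => S.dz a x)
    (fun x hx => S.dy hQ ha hb hx.1 (S.val ha hb x hx).1 (S.val ha hb x hx).2)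
    (fun x hx => S.dang hQ ha hb hx) (fun x hx => S.nonvan' hQ ha hb hx) (S.zpos ha hb) ?_
  unfold Setup.ang
  rw [intervalIntegral.integral_same, add_zero]

theorem Setup.Om_neg (S : Setup P Q lam R) (hQ : Q = P * lam ^ 2) {a : ℝ} (ha : 0 < a)
    (hb : a ≤ S.δ) {x : ℝ} (hx : x ∈ Set.Icc S.τ0 (S.T a)) (hc : cos (S.ang a x) = 0) :
    S.Om a x < 0 := by
  obtain ⟨c, -, h1, -⟩ := S.ang_rep hQ ha hb x hx
  have hn := S.nonvan' hQ ha hb hx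
  rw [hc, mul_zero] at h1
  unfold Setup.Om
  rw [h1] at hn ⊢
  apply div_neg_of_neg_of_pos
  · nlinarith
  · exact hn

theorem Setup.ang0 (S : Setup P Q lam R) (a : ℝ) :
    -(π / 2) < S.ang a S.τ0 ∧ S.ang a S.τ0 < π / 2 := by
  unfold Setup.ang
  rw [intervalIntegral.integral_same, add_zero]
  exact ⟨neg_pi_div_two_lt_arctan _, arctan_lt_pi_div_two _⟩

theorem Setup.decay (S : Setup P Q lam R) (hQ : Q = P * lam ^ 2) (j : ℕ) :
    ∃ η > 0, ∀ a, 0 < a → a ≤ S.δ → a ≤ η → S.ang a (S.T a) ≤ lev j := by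
  have hr0 := S.hr0
  obtain ⟨η, hη⟩ : ∃ η, η = S.r0 * exp (-(S.τ1 + 52 * (π / 2 - lev j))) := ⟨_, rfl⟩
  have hηpos : 0 < η := by rw [hη]; positivity
  refine ⟨η, hηpos, ?_⟩
  intro a ha hb haη
  have hR := S.Rpos
  obtain ⟨τr, hτr⟩ : ∃ τr, τr = log (S.r0 / a) := ⟨_, rfl⟩
  have hex : a * exp τr = S.r0 := by
    rw [hτr, Real.exp_log (by positivity)]; field_simp
  have hlj : lev j ≤ 0 := by
    unfold lev
    have := pi_pos
    have : 0 ≤ (j:ℝ) * π := by positivity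
    linarith
  have h1 : S.τ1 + 52 * (π / 2 - lev j) ≤ τr := by
    rw [hτr, Real.le_log_iff_exp_le (by positivity), le_div_iff₀ ha]
    have : exp (S.τ1 + 52 * (π / 2 - lev j)) * a ≤ exp (S.τ1 + 52 * (π / 2 - lev j)) * η := by
      gcongr
    rw [hη, exp_neg] at this
    refine this.trans (le_of_eq ?_)
    have := exp_pos (S.τ1 + 52 * (π / 2 - lev j))
    field_simp
  have hpi := pi_pos
  have h2 : S.τ1 ≤ τr := by linarith
  have h3 : τr ≤ S.T a := by
    rw [hτr]; unfold Setup.T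
    apply Real.log_le_log (by positivity)
    have := S.hr0R
    gcongr
  have h01 := S.hτ01
  have hT1 := S.τ1T ha hb
  have hang : S.ang a S.τ1 ≤ π / 2 := by
    rcases h01.lt_or_eq with h | h
    · exact (stay_below (ω := S.ang a) (ω' := S.Om a) (s := S.τ0) (t := S.T a) (l := π / 2)
        (fun x hx => S.dang hQ ha hb hx)
        (fun x hx hxl => S.Om_neg hQ ha hb hx (by rw [hxl]; exact Real.cos_pi_div_two))
        (S.ang0 a).2.le S.τ1 ⟨h, hT1⟩).le
    · rw [← h]; exact (S.ang0 a).2.le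
  have hm := anti_of_hasDeriv (f := fun x => S.ang a x + 1 / 52 * x)
    (f' := fun x => S.Om a x + 1 / 52) h2
    (fun x hx => ((S.dang hQ ha hb ⟨h01.trans hx.1, hx.2.trans h3⟩).continuousAt.add
      (by fun_prop)).continuousWithinAt)
    (fun x hx => by
      refine HasDerivAt.congr_deriv (f := fun x => S.ang a x + 1 / 52 * x)
        ((S.dang hQ ha hb ⟨h01.trans hx.1.le, hx.2.le.trans h3⟩).add
          ((hasDerivAt_id x).const_mul (1 / 52))) ?_
      simp)
    (fun x hx => by
      have hn := S.nonvan' hQ ha hb (s := x) ⟨h01.trans hx.1.le, hx.2.le.trans h3⟩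
      have hrot := S.hrot a x ha hb hx.1.le (by
        rw [← hex]; gcongr; exact hx.2.le) (S.z a x) (S.y a x)
      have : S.Om a x ≤ -(1 / 52) := by
        unfold Setup.Om
        rw [div_le_iff₀ hn]
        refine le_trans (le_of_eq ?_) hrot
        unfold Setup.A Setup.B
        ring
      linarith)
  have h4 : S.ang a τr ≤ lev j := by
    linarith
  rcases h3.lt_or_eq with h | h
  · exact (stay_below (ω := S.ang a) (ω' := S.Om a) (s := τr) (t := S.T a) (l := lev j)
        (fun x hx => S.dang hQ ha hb ⟨(h01.trans h2).trans hx.1, hx.2⟩)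
        (fun x hx hxl => S.Om_neg hQ ha hb ⟨(h01.trans h2).trans hx.1, hx.2⟩
          (by rw [hxl]; exact cos_lev j))
        h4 (S.T a) ⟨h, le_rfl⟩).le
  · rw [← h]; exact h4

/-- exit sets -/
def Setup.Op (S : Setup P Q lam R) : Set ℝ :=
  {a | 0 < a ∧ OutP (fun x => S.y a (S.T a + x)) R}
def Setup.On (S : Setup P Q lam R) : Set ℝ :=
  {a | 0 < a ∧ OutP (fun x => - S.y a (S.T a + x)) R}

theorem Setup.contG (S : Setup P Q lam R) :
    ContinuousOn (Function.uncurry fun a x => S.y a (S.T a + x)) (Set.Ioi 0 ×ˢ Set.univ) := by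
  have h : ContinuousOn (fun p : ℝ × ℝ => (p.1, S.T p.1 + p.2)) (Set.Ioi 0 ×ˢ Set.univ) := by
    refine continuousOn_fst.prodMk (ContinuousOn.add ?_ continuousOn_snd)
    unfold Setup.T
    have hR := S.Rpos
    refine ContinuousOn.log ?_ ?_
    · exact continuousOn_const.div continuousOn_fst (fun p hp => (ne_of_gt hp.1))
    · intro p hp
      have : 0 < p.1 := hp.1
      positivity
  exact S.conty.comp_continuousOn h

theorem Setup.isOpen_Op (S : Setup P Q lam R) : IsOpen S.Op := by
  rw [isOpen_iff_mem_nhds]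
  rintro a ⟨ha, ho⟩
  filter_upwards [out_open (G := fun a x => S.y a (S.T a + x)) S.contG ha ho, lt_mem_nhds ha]
    with b h1 h2
  exact ⟨h2, h1⟩

theorem Setup.isOpen_On (S : Setup P Q lam R) : IsOpen S.On := by
  rw [isOpen_iff_mem_nhds]
  rintro a ⟨ha, ho⟩
  filter_upwards [out_open (G := fun a x => - S.y a (S.T a + x)) S.contG.neg ha ho, lt_mem_nhds ha]
    with b h1 h2
  exact ⟨h2, h1⟩

theorem Setup.disj (S : Setup P Q lam R) {a : ℝ} (h1 : a ∈ S.Op) (h2 : a ∈ S.On) : False :=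
  out_disjoint h1.2 h2.2

theorem Setup.sign (S : Setup P Q lam R) (hP : 1 ≤ P) (hl : 1 / 2 ≤ lam)
    (hQ : Q = P * lam ^ 2) (hR : 3 * P * lam + 8 * P + 8 ≤ R) {a : ℝ} (ha : 0 < a)
    (hb : a ≤ S.δ) {k : ℕ} (hk : S.ang a (S.T a) = lev k) :
    (Even k → a ∈ S.On) ∧ (Odd k → a ∈ S.Op) := by
  have hE := S.exitSys hP hl hQ hR ha hb
  obtain ⟨c, hc, h1, h2⟩ := S.ang_rep hQ ha hb (S.T a)
    ⟨S.hτ01.trans (S.τ1T ha hb), le_rfl⟩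
  rw [hk, cos_lev, mul_zero] at h1
  rw [hk, sin_lev] at h2
  constructor
  · intro he
    rw [he.neg_one_pow] at h2
    refine ⟨ha, exit_sign hE.neg ?_ ?_⟩
    · simp [h1]
    · simp only [add_zero]; linarith
  · intro he
    rw [he.neg_one_pow] at h2
    refine ⟨ha, exit_sign hE ?_ ?_⟩
    · simp [h1]
    · simp only [add_zero]; linarith

end Ang


theorem lev_anti_le {j k : ℕ} (h : j ≤ k) : lev k ≤ lev j := by
  rcases h.lt_or_eq with h | h
  · exact (lev_anti h).le
  · rw [h]

theorem lev_unbdd (M : ℝ) : ∃ N : ℕ, ∀ k ≥ N, lev k < M := by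
  obtain ⟨N, hN⟩ := exists_nat_gt (-M)
  refine ⟨N, fun k hk => ?_⟩
  have : (N:ℝ) ≤ k := by exact_mod_cast hk
  unfold lev
  have := Real.pi_gt_three
  have h0 : (0:ℝ) ≤ k := by positivity
  nlinarith

theorem shooting {Θ : ℝ → ℝ} {δ : ℝ} (hδ : 0 < δ) (hc : ContinuousOn Θ (Set.Ioc 0 δ))
    (hdec : ∀ j, ∃ η > 0, ∀ a, 0 < a → a ≤ δ → a ≤ η → Θ a ≤ lev j)
    {Op On : Set ℝ} (hOp : IsOpen Op) (hOn : IsOpen On) (hdis : ∀ a, a ∈ Op → a ∈ On → False)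
    (hs : ∀ a, 0 < a → a ≤ δ → ∀ k, Θ a = lev k → (Even k → a ∈ On) ∧ (Odd k → a ∈ Op)) :
    ∃ K : ℕ, 1 ≤ K ∧ ∃ a : ℕ → ℝ, (∀ k ≥ K, 0 < a k ∧ a k ≤ δ ∧ a k ∉ Op ∧ a k ∉ On ∧
      lev k < Θ (a k) ∧ Θ (a k) < lev (k - 1)) ∧ (∀ k ≥ K, ∀ l, k < l → a l < a k) ∧
      Tendsto a atTop (nhds 0) := by
  obtain ⟨K0, hK0⟩ := lev_unbdd (Θ δ)
  have hb : ∀ k ≥ K0, ∃ b, 0 < b ∧ b < δ ∧ Θ b = lev k ∧ ∀ x, b < x → x ≤ δ → lev k < Θ x := by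
    intro k hk
    obtain ⟨η, hη, hd⟩ := hdec k
    have hη' : 0 < min η δ := lt_min hη hδ
    have hηδ : min η δ ≤ δ := min_le_right _ _
    have hcont : ContinuousOn (fun t => -Θ (δ - t)) (Set.Icc 0 (δ - min η δ)) := by
      refine ContinuousOn.neg (hc.comp (by fun_prop) ?_)
      intro t ht
      exact ⟨by linarith [ht.2], by linarith [ht.1]⟩
    obtain ⟨s, hs1, hs2, hs3⟩ := first_hit (f := fun t => -Θ (δ - t)) (c := - lev k)
      (by linarith : (0:ℝ) ≤ δ - min η δ) hcont (by
        simp only [sub_zero]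
        linarith [hK0 k hk]) (by
        simp only [sub_sub_cancel]
        linarith [hd (min η δ) hη' hηδ (min_le_left _ _)])
    refine ⟨δ - s, by linarith [hs1.2], by linarith [hs1.1], by linarith, ?_⟩
    intro x hx1 hx2
    have := hs3 (δ - x) ⟨by linarith, by linarith⟩
    simp only [sub_sub_cancel] at this
    linarith
  choose! b hb0 hbδ hbΘ hbgt using hb
  have hbanti : ∀ k ≥ K0, ∀ l, k < l → b l < b k := by
    intro k hk l hkl
    have hl : l ≥ K0 := hk.trans hkl.le
    have h1 := lev_anti hkl
    rcases lt_trichotomy (b l) (b k) with h | h | h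
    · exact h
    · have e1 := hbΘ k hk
      have e2 := hbΘ l hl
      rw [h] at e2
      linarith
    · have e1 := hbgt k hk (b l) h (hbδ l hl).le
      have e2 := hbΘ l hl
      linarith
  have hblim : ∀ ε > 0, ∃ N, ∀ k ≥ N, K0 ≤ k → b k < ε := by
    intro ε hε
    rcases le_or_gt δ ε with h | h
    · exact ⟨0, fun k _ hk => (hbδ k hk).trans_le h⟩
    · have hcomp : ContinuousOn Θ (Set.Icc ε δ) := hc.mono fun x hx => ⟨hε.trans_le hx.1, hx.2⟩
      obtain ⟨M, hM⟩ := isCompact_Icc.exists_bound_of_continuousOn hcomp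
      obtain ⟨N, hN⟩ := lev_unbdd (-M)
      refine ⟨N, fun k hk hk0 => ?_⟩
      by_contra hcon
      have h1 := hM (b k) ⟨not_lt.1 hcon, (hbδ k hk0).le⟩
      rw [Real.norm_eq_abs, abs_le, hbΘ k hk0] at h1
      linarith [hN k hk, h1.1]
  have ha : ∀ k ≥ K0 + 1, ∃ a, b k < a ∧ a < b (k - 1) ∧ a ∉ Op ∧ a ∉ On ∧
      lev k < Θ a ∧ Θ a < lev (k - 1) := by
    intro k hk
    have hk1 : k - 1 ≥ K0 := by omega
    have hk0 : k ≥ K0 := by omega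
    have hlt := hbanti (k - 1) hk1 k (by omega)
    have hlev := lev_anti (show k - 1 < k by omega)
    obtain ⟨c, hc1, hc2, hc3⟩ := first_hit (f := Θ) (c := lev (k - 1)) hlt.le
      (hc.mono fun x hx => ⟨(hb0 k hk0).trans_le hx.1, hx.2.trans (hbδ _ hk1).le⟩)
      (by rw [hbΘ k hk0]; exact hlev) (hbΘ _ hk1).ge
    have hcδ : c ≤ δ := hc1.2.trans (hbδ _ hk1).le
    have hc0 : 0 < c := (hb0 k hk0).trans hc1.1
    have s1 := hs (b k) (hb0 k hk0) (hbδ k hk0).le k (hbΘ k hk0)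
    have s2 := hs c hc0 hcδ (k - 1) hc2
    have hmb : b k ∈ Set.Icc (b k) c := ⟨le_rfl, hc1.1.le⟩
    have hmc : c ∈ Set.Icc (b k) c := ⟨hc1.1.le, le_rfl⟩
    have hpar : (b k ∈ On ∧ c ∈ Op) ∨ (b k ∈ Op ∧ c ∈ On) := by
      rcases Nat.even_or_odd k with he | he
      · left
        refine ⟨s1.1 he, s2.2 ?_⟩
        rw [Nat.odd_iff]; rw [Nat.even_iff] at he; omega
      · right
        refine ⟨s1.2 he, s2.1 ?_⟩
        rw [Nat.even_iff]; rw [Nat.odd_iff] at he; omega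
    have hnot : ¬ Set.Icc (b k) c ⊆ Op ∪ On := by
      intro hsub
      have hpre := isPreconnected_Icc (a := b k) (b := c) Op On hOp hOn hsub
      have : (Set.Icc (b k) c ∩ (Op ∩ On)).Nonempty := by
        rcases hpar with ⟨q1, q2⟩ | ⟨q1, q2⟩
        · exact hpre ⟨c, hmc, q2⟩ ⟨b k, hmb, q1⟩
        · exact hpre ⟨b k, hmb, q1⟩ ⟨c, hmc, q2⟩
      obtain ⟨x, -, hx1, hx2⟩ := this
      exact hdis x hx1 hx2
    obtain ⟨x, hx, hxn⟩ := Set.not_subset.1 hnot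
    rw [Set.mem_union, not_or] at hxn
    have hxb : b k < x := by
      refine lt_of_le_of_ne hx.1 ?_
      rintro rfl
      rcases hpar with q | q
      · exact hxn.2 q.1
      · exact hxn.1 q.1
    have hxc : x < c := by
      refine lt_of_le_of_ne hx.2 ?_
      rintro rfl
      rcases hpar with q | q
      · exact hxn.1 q.2
      · exact hxn.2 q.2
    exact ⟨x, hxb, hxc.trans_le hc1.2, hxn.1, hxn.2, hbgt k hk0 x hxb (hxc.le.trans hcδ),
      hc3 x ⟨hx.1, hxc⟩⟩
  choose! a ha1 ha2 ha3 ha4 ha5 ha6 using ha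
  refine ⟨K0 + 1, by omega, a, ?_, ?_, ?_⟩
  · intro k hk
    exact ⟨(hb0 k (by omega)).trans (ha1 k hk), ((ha2 k hk).trans (hbδ (k - 1) (by omega))).le,
      ha3 k hk, ha4 k hk, ha5 k hk, ha6 k hk⟩
  · intro k hk l hkl
    have h1 := ha2 l (by omega)
    have h2 := ha1 k hk
    have h3 : b (l - 1) ≤ b k := by
      rcases Nat.lt_or_ge k (l - 1) with h | h
      · exact (hbanti k (by omega) (l - 1) h).le
      · have : l - 1 = k := by omega
        rw [this]
    linarith
  · rw [Metric.tendsto_atTop]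
    intro ε hε
    obtain ⟨N, hN⟩ := hblim ε hε
    refine ⟨max (N + 1) (K0 + 1), fun k hk => ?_⟩
    have hk1 : N + 1 ≤ k := (le_max_left _ _).trans hk
    have hk2 : K0 + 1 ≤ k := (le_max_right _ _).trans hk
    have h1 := hN (k - 1) (by omega) (by omega)
    have h2 := ha2 k hk2
    have h3 := ha1 k hk2
    have h4 := hb0 k (by omega)
    rw [Real.dist_eq, sub_zero, abs_of_pos (by linarith)]
    linarith


section Fin

variable {P : ℕ} {Q lam R : ℝ}

theorem Setup.valid_all (S : Setup P Q lam R) (hP : 1 ≤ P) (hl : 1 / 2 ≤ lam)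
    (hQ : Q = P * lam ^ 2) (hR : 3 * P * lam + 8 * P + 8 ≤ R) {a : ℝ} (ha : 0 < a)
    (hb : a ≤ S.δ) (hg : ∀ x, 0 ≤ x → |R * exp x * S.y a (S.T a + x)| ≤ 1) :
    ∀ τ, S.τ0 ≤ τ → |S.v a τ| < S.W ∧ S.m < S.φ a τ := by
  intro τ hτ
  rcases le_or_gt τ (S.T a) with h | h
  · exact S.val ha hb τ ⟨hτ, h⟩
  · have hE := S.exitSys hP hl hQ hR ha hb
    obtain ⟨h1, h2⟩ := exit_box' hE (x := τ - S.T a) (fun s hs => hg s hs.1) (τ - S.T a)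
      ⟨by linarith, le_rfl⟩
    simp only [add_sub_cancel] at h1 h2
    unfold Setup.z at h1
    unfold Setup.y at h2
    rw [abs_le] at h1 h2
    have := S.hW
    have := S.hml
    refine ⟨?_, by linarith⟩
    rw [abs_lt]
    constructor <;> linarith

theorem Setup.solution (S : Setup P Q lam R) (hP : 1 ≤ P) (hl : 1 / 2 ≤ lam)
    (hQ : Q = P * lam ^ 2) (hR : 3 * P * lam + 8 * P + 8 ≤ R) {a : ℝ} (ha : 0 < a)
    (hb : a ≤ S.δ) (n1 : a ∉ S.Op) (n2 : a ∉ S.On) {k : ℕ} (hk : 1 ≤ k)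
    (hk1 : lev k < S.ang a (S.T a)) (hk2 : S.ang a (S.T a) < lev (k - 1)) :
    ∃ (u u' : ℝ → ℝ) (α : ℝ),
        α ∈ Set.Ioo 0 (π / 2) ∧
        (∀ r ≥ (0 : ℝ), 0 < u r) ∧
        ContinuousOn u (Set.Ici 0) ∧
        ContDiffOn ℝ 2 u (Set.Ioi 0) ∧
        u 0 = a ∧
        ContinuousOn u' (Set.Ici 0) ∧
        u' 0 = 0 ∧
        (∀ r > (0 : ℝ), HasDerivAt u (u' r) r) ∧
        (∀ r > (0 : ℝ),
            deriv u' r / (1 + (u' r) ^ 2)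
              + ((P : ℝ) / r - r / 2) * u' r + u r / 2 - Q / u r = 0) ∧
        Tendsto (fun r => u r / r) atTop (nhds (Real.tan α)) ∧
        {r : ℝ | 0 < r ∧ u r = lam * r}.Finite ∧
        {r : ℝ | 0 < r ∧ u r = lam * r}.ncard = k := by
  have hE := S.exitSys hP hl hQ hR ha hb
  have hg := exit_good hE (fun h => n1 ⟨ha, h⟩) (fun h => n2 ⟨ha, h⟩)
  have hval := S.valid_all hP hl hQ hR ha hb hg
  have hT0 : S.τ0 ≤ S.T a := S.hτ01.trans (S.τ1T ha hb)
  have hglob : ∀ ρ, 0 ≤ ρ → |S.w a ρ| < S.W ∧ S.c0 < S.U a ρ := by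
    intro ρ hρ
    rcases le_or_gt ρ (exp S.τ0) with h | h
    · have := S.hinit a ρ ha hb hρ h
      exact ⟨this.1, this.2.1⟩
    · have hρ' : 0 < ρ := (exp_pos _).trans h
      have hlog : S.τ0 ≤ log ρ := (Real.le_log_iff_exp_le hρ').2 h.le
      obtain ⟨h1, h2⟩ := hval (log ρ) hlog
      have e1 := S.hφ a (log ρ)
      have e2 := S.hv a (log ρ)
      rw [Real.exp_log hρ'] at e1 e2
      have h3 := S.hc0m (S.φ a (log ρ)) (log ρ) hlog h2
      rw [Real.exp_log hρ'] at h3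
      rw [e2, e1]
      exact ⟨h1, h3⟩
  have hUc : Continuous (S.U a) := S.hUc.comp (by fun_prop : Continuous fun x : ℝ => (a, x))
  have hwc : Continuous (S.w a) := S.hwc.comp (by fun_prop : Continuous fun x : ℝ => (a, x))
  have hUpos : ∀ ρ, 0 ≤ ρ → 0 < S.U a ρ := fun ρ hρ => S.hc0.trans (hglob ρ hρ).2
  obtain ⟨L, hL, hLt⟩ := exit_limit hE hg
  have hφt : Tendsto (fun τ => S.φ a τ) atTop (nhds (L + lam)) := by
    have h1 : Tendsto (fun τ : ℝ => τ - S.T a) atTop atTop :=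
      tendsto_atTop_add_const_right _ _ tendsto_id
    have h2 := (hLt.comp h1).add_const lam
    refine h2.congr (fun τ => ?_)
    simp [Setup.z]
  have hLpos : 0 < L + lam := by
    have := (abs_le.1 hL).1
    linarith
  have hdu : ∀ r, HasDerivAt (fun r => a * S.U a (r / a)) (S.w a (r / a)) r := by
    intro r
    have h1 : HasDerivAt (fun r : ℝ => r / a) (1 / a) r := (hasDerivAt_id r).div_const a
    have h2 := ((S.hU' a (r / a)).comp r h1).const_mul a
    exact HasDerivAt.congr_deriv (f := fun r => a * S.U a (r / a)) h2 (by field_simp)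
  have hdw : ∀ r, 0 < r → HasDerivAt (fun r => S.w a (r / a))
      ((1 + S.w a (r / a) ^ 2) *
        ((a^2*(r / a)/2 - P/(r / a)) * S.w a (r / a) - a^2 * S.U a (r / a) / 2
          + Q / S.U a (r / a)) * (1 / a)) r := by
    intro r hr
    have h1 : HasDerivAt (fun r : ℝ => r / a) (1 / a) r := (hasDerivAt_id r).div_const a
    have hρ : 0 < r / a := by positivity
    obtain ⟨h3, h4⟩ := hglob (r / a) hρ.le
    exact (S.hode a (r / a) ha hb hρ h3 h4).comp r h1
  refine ⟨fun r => a * S.U a (r / a), fun r => S.w a (r / a), arctan (L + lam), ?_, ?_, ?_, ?_,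
    ?_, ?_, ?_, ?_, ?_, ?_, ?_⟩
  · exact ⟨Real.arctan_pos.2 hLpos, Real.arctan_lt_pi_div_two _⟩
  · intro r hr
    have := hUpos (r / a) (by positivity)
    positivity
  · exact (by fun_prop : Continuous fun r => a * S.U a (r / a)).continuousOn
  · have h2 : (2 : WithTop ℕ∞) = 1 + 1 := by norm_num
    rw [h2, contDiffOn_succ_iff_deriv_of_isOpen isOpen_Ioi]
    refine ⟨fun r _ => (hdu r).differentiableAt.differentiableWithinAt, by simp, ?_⟩
    have e1 : Set.EqOn (deriv fun r => a * S.U a (r / a)) (fun r => S.w a (r / a)) (Set.Ioi 0) :=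
      fun r _ => (hdu r).deriv
    refine ContDiffOn.congr ?_ e1
    have h1 : (1 : WithTop ℕ∞) = 0 + 1 := by norm_num
    rw [h1, contDiffOn_succ_iff_deriv_of_isOpen isOpen_Ioi]
    refine ⟨fun r hr => (hdw r hr).differentiableAt.differentiableWithinAt, by simp, ?_⟩
    rw [contDiffOn_zero]
    refine ContinuousOn.congr ?_ (fun r hr => (hdw r hr).deriv)
    have c1 : ContinuousOn (fun r : ℝ => (P:ℝ) / (r / a)) (Set.Ioi 0) := by
      refine continuousOn_const.div (by fun_prop) ?_
      intro r hr
      have : 0 < r := hr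
      positivity
    have c2 : ContinuousOn (fun r : ℝ => Q / S.U a (r / a)) (Set.Ioi 0) := by
      refine continuousOn_const.div (by fun_prop) ?_
      intro r hr
      have : 0 < r := hr
      exact (hUpos (r / a) (by positivity)).ne'
    fun_prop
  · simp [S.hU0]
  · exact (by fun_prop : Continuous fun r => S.w a (r / a)).continuousOn
  · simp [S.hw0]
  · intro r _
    exact hdu r
  · intro r hr
    rw [(hdw r hr).deriv]
    have h1 := hUpos (r / a) (by positivity)
    simp only
    generalize S.U a (r / a) = u at *
    generalize S.w a (r / a) = w at *
    have h2 : 1 + w ^ 2 ≠ 0 := by positivity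
    field_simp
    ring
  · rw [Real.tan_arctan]
    have h1 : Tendsto (fun r : ℝ => log (r / a)) atTop atTop :=
      Real.tendsto_log_atTop.comp (tendsto_id.atTop_div_const ha)
    refine (hφt.comp h1).congr' ?_
    filter_upwards [eventually_gt_atTop 0] with r hr
    have hρ : 0 < r / a := by positivity
    have e1 := S.hφ a (log (r / a))
    rw [Real.exp_log hρ] at e1
    simp only [Function.comp]
    rw [e1]
    field_simp
  · have hcnt := count_crossings (ω := S.ang a) (ω' := S.Om a) hT0
      (fun x hx => S.dang hQ ha hb hx) (fun x hx hc => S.Om_neg hQ ha hb hx hc)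
      (S.ang0 a).1 (S.ang0 a).2 k hk hk1 hk2
    have hinj : Function.Injective (fun τ : ℝ => a * exp τ) := by
      intro x1 x2 hx
      exact Real.exp_injective (mul_left_cancel₀ ha.ne' hx)
    have hset : {r : ℝ | 0 < r ∧ a * S.U a (r / a) = lam * r} = (fun τ : ℝ => a * exp τ) ''
        {x | x ∈ Set.Icc S.τ0 (S.T a) ∧ cos (S.ang a x) = 0} := by
      ext r
      constructor
      · rintro ⟨hr, hu⟩
        have hρ : 0 < r / a := by positivity
        have hr' : a * (r / a) = r := by field_simp
        have hu2 : S.U a (r / a) = lam * (r / a) := by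
          field_simp
          linarith
        have hlog0 : S.τ0 < log (r / a) := by
          rw [Real.lt_log_iff_exp_lt hρ]
          by_contra hcon
          have := (S.hinit a (r / a) ha hb hρ.le (not_lt.1 hcon)).2.2
          linarith
        have hz : S.z a (log (r / a)) = 0 := by
          have e1 := S.hφ a (log (r / a))
          rw [Real.exp_log hρ, hu2] at e1
          have := mul_right_cancel₀ hρ.ne' e1
          unfold Setup.z
          linarith
        have hlogT : log (r / a) ≤ S.T a := by
          by_contra hcon
          have hcon := not_le.1 hcon
          have hn := S.nonvan hQ ha hb hlog0.le (fun s hs => hval s hs.1)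
          have := exit_nozero hE hg (x := log (r / a) - S.T a) (by linarith)
            (by simpa using hn)
          simp only [add_sub_cancel] at this
          exact this hz
        refine ⟨log (r / a), ⟨⟨hlog0.le, hlogT⟩, ?_⟩, ?_⟩
        · obtain ⟨c, hc, h1, -⟩ := S.ang_rep hQ ha hb (log (r / a)) ⟨hlog0.le, hlogT⟩
          rw [hz] at h1
          rcases mul_eq_zero.1 h1.symm with h | h
          · exact absurd h hc.ne'
          · exact h
        · simp only
          rw [Real.exp_log hρ, hr']
      · rintro ⟨τ, ⟨hτ, hcos⟩, rfl⟩
        obtain ⟨c, hc, h1, -⟩ := S.ang_rep hQ ha hb τ hτ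
        rw [hcos, mul_zero] at h1
        have e1 := S.hφ a τ
        have e2 : S.φ a τ = lam := by
          unfold Setup.z at h1
          linarith
        refine ⟨by positivity, ?_⟩
        simp only
        rw [mul_div_cancel_left₀ _ ha.ne', e1, e2]
        ring
    rw [hset]
    exact ⟨hcnt.1.image _, by rw [Set.ncard_image_of_injective _ hinj]; exact hcnt.2⟩

end Fin

theorem shrinkers_main (P : ℕ) (hP : 1 ≤ P) (Q lam : ℝ) (hQ1 : 1 ≤ Q) (hl : 1 / 2 ≤ lam)
    (hl2 : lam ≤ 2) (hQ : Q = P * lam ^ 2) (h2 : 2 ≤ P + Q) (h5 : P + Q ≤ 5)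
    (hm : ((P:ℝ) + Q + 1) ^ 2 - 8 * (P + Q) ≤ -4) :
    ∃ (K : ℕ) (a : ℕ → ℝ),
      (∀ k ≥ K, 0 < a k) ∧
      (∀ k ≥ K, ∀ l, k < l → a l < a k) ∧
      Tendsto a atTop (nhds 0) ∧
      ∀ k ≥ K, ∃ (u u' : ℝ → ℝ) (α : ℝ),
        α ∈ Set.Ioo 0 (π / 2) ∧
        (∀ r ≥ (0 : ℝ), 0 < u r) ∧
        ContinuousOn u (Set.Ici 0) ∧
        ContDiffOn ℝ 2 u (Set.Ioi 0) ∧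
        u 0 = a k ∧
        ContinuousOn u' (Set.Ici 0) ∧
        u' 0 = 0 ∧
        (∀ r > (0 : ℝ), HasDerivAt u (u' r) r) ∧
        (∀ r > (0 : ℝ),
            deriv u' r / (1 + (u' r) ^ 2)
              + ((P : ℝ) / r - r / 2) * u' r + u r / 2 - Q / u r = 0) ∧
        Tendsto (fun r => u r / r) atTop (nhds (Real.tan α)) ∧
        {r : ℝ | 0 < r ∧ u r = lam * r}.Finite ∧
        {r : ℝ | 0 < r ∧ u r = lam * r}.ncard = k := by
  have hP' : (1:ℝ) ≤ P := by exact_mod_cast hP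
  have hPl : 0 ≤ 3 * (P:ℝ) * lam := by positivity
  obtain ⟨S⟩ := setup_exists P hP Q lam (3 * P * lam + 8 * P + 8) hQ1 (by linarith) hl2 hQ
    (by linarith) h2 h5 hm
  obtain ⟨K, hK, a, ha, hanti, hlim⟩ := shooting (Θ := fun a => S.ang a (S.T a)) S.hδ
    (S.contTheta hQ) (S.decay hQ) S.isOpen_Op S.isOpen_On (fun a h1 h2 => S.disj h1 h2)
    (fun a h0 h1 k h2 => S.sign hP hl hQ le_rfl h0 h1 h2)
  refine ⟨K, a, fun k hk => (ha k hk).1, hanti, hlim, ?_⟩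
  intro k hk
  obtain ⟨h0, h1, h2, h3, h4, h5⟩ := ha k hk
  exact S.solution hP hl hQ le_rfl h0 h1 h2 h3 (hK.trans hk) h4 h5

theorem self_shrinkers_with_k_crossings (p q : ℕ) (hp : 2 ≤ p) (hq : 2 ≤ q)
    (hn4 : 4 ≤ p + q) (hn7 : p + q ≤ 7)
    (lam : ℝ) (hlam : lam = Real.sqrt (((q : ℝ) - 1) / ((p : ℝ) - 1))) :
    ∃ (K : ℕ) (a : ℕ → ℝ),
      (∀ k ≥ K, 0 < a k) ∧
      (∀ k ≥ K, ∀ l, k < l → a l < a k) ∧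
      Tendsto a atTop (nhds 0) ∧
      ∀ k ≥ K, ∃ (u u' : ℝ → ℝ) (α : ℝ),
        α ∈ Set.Ioo 0 (π / 2) ∧
        (∀ r ≥ (0 : ℝ), 0 < u r) ∧
        ContinuousOn u (Set.Ici 0) ∧
        ContDiffOn ℝ 2 u (Set.Ioi 0) ∧
        u 0 = a k ∧
        ContinuousOn u' (Set.Ici 0) ∧
        u' 0 = 0 ∧
        (∀ r > (0 : ℝ), HasDerivAt u (u' r) r) ∧
        (∀ r > (0 : ℝ),
            deriv u' r / (1 + (u' r) ^ 2)
              + (((p : ℝ) - 1) / r - r / 2) * u' r + u r / 2 - ((q : ℝ) - 1) / u r = 0) ∧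
        Tendsto (fun r => u r / r) atTop (nhds (Real.tan α)) ∧
        {r : ℝ | 0 < r ∧ u r = lam * r}.Finite ∧
        {r : ℝ | 0 < r ∧ u r = lam * r}.ncard = k := by
  obtain ⟨P, rfl⟩ : ∃ P : ℕ, p = P + 1 := ⟨p - 1, by omega⟩
  obtain ⟨N, rfl⟩ : ∃ N : ℕ, q = N + 1 := ⟨q - 1, by omega⟩
  have hP1 : 1 ≤ P := by omega
  have hN1 : 1 ≤ N := by omega
  have hPr : (1:ℝ) ≤ P := by exact_mod_cast hP1
  have hNr : (1:ℝ) ≤ N := by exact_mod_cast hN1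
  have hs2 : (2:ℝ) ≤ (P:ℝ) + N := by linarith
  have hs5 : (P:ℝ) + N ≤ 5 := by
    have : P + N ≤ 5 := by omega
    exact_mod_cast this
  have e1 : ((P + 1 : ℕ) : ℝ) - 1 = P := by push_cast; ring
  have e2 : ((N + 1 : ℕ) : ℝ) - 1 = N := by push_cast; ring
  rw [e1, e2] at hlam
  rw [e1, e2]
  have hlo : (1 / 2 : ℝ) ≤ lam := by
    rw [hlam]
    apply Real.le_sqrt_of_sq_le
    rw [le_div_iff₀ (by linarith)]
    linarith
  have hhi : lam ≤ 2 := by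
    rw [hlam, Real.sqrt_le_left (by norm_num), div_le_iff₀ (by linarith)]
    linarith
  have hQ : (N:ℝ) = P * lam ^ 2 := by
    rw [hlam, Real.sq_sqrt (by positivity)]
    field_simp
  exact shrinkers_main P hP1 N lam hNr hlo hhi hQ hs2 hs5 (by nlinarith)
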